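/- For the six-vertex model with weights a = b = c = 1, the free energy exists and equals f(1,1,1) = (3/2)·log(4/3). -/

import Mathlib

open MeasureTheory Filter
open scoped Real BigOperators

noncomputable section

namespace SixVertexFE

/-- Configurations on the `N × M` torus: each vertex `v` carries a horizontal edge
(from `v` to `v+(1,0)`) and a vertical edge (from `v` to `v+(0,1)`).
First component: `true` = the horizontal edge points East.
Second component: `true` = the vertical edge points North. -/
abbrev Cfg (N M : ℕ) := ((Fin N × Fin M) → Bool) × ((Fin N × Fin M) → Bool)

/-- the predecessor (`i - 1`) on the discrete circle `Fin N`. -/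
def predF {N : ℕ} (i : Fin N) : Fin N := ⟨(i.1 + (N - 1)) % N, Nat.mod_lt _ i.pos⟩

/-- number of edges incident to `v` that point towards `v`. -/
abbrev inArrows {N M : ℕ} (ω : Cfg N M) (v : Fin N × Fin M) : ℕ :=
  (if ω.1 (predF v.1, v.2) = true then 1 else 0) +
  (if ω.1 v = false then 1 else 0) +
  (if ω.2 (v.1, predF v.2) = true then 1 else 0) +
  (if ω.2 v = false then 1 else 0)

/-- the ice rule: exactly two incoming arrows at every vertex. -/
abbrev IsSixVertex {N M : ℕ} (ω : Cfg N M) : Prop := ∀ v, inArrows ω v = 2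

/-- weight of a vertex: `c` if the two horizontal edges at `v` point in opposite
directions, `a` for all-East-all-North or all-West-all-South, `b` for
all-East-all-South or all-West-all-North. -/
def vWeight (a b c : ℝ) {N M : ℕ} (ω : Cfg N M) (v : Fin N × Fin M) : ℝ :=
  if ω.1 (predF v.1, v.2) ≠ ω.1 v then c
  else if (ω.1 (predF v.1, v.2) = true ∧ ω.1 v = true ∧
            ω.2 (v.1, predF v.2) = true ∧ ω.2 v = true) ∨
          (ω.1 (predF v.1, v.2) = false ∧ ω.1 v = false ∧
            ω.2 (v.1, predF v.2) = false ∧ ω.2 v = false) then a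
  else if (ω.1 (predF v.1, v.2) = true ∧ ω.1 v = true ∧
            ω.2 (v.1, predF v.2) = false ∧ ω.2 v = false) ∨
          (ω.1 (predF v.1, v.2) = false ∧ ω.1 v = false ∧
            ω.2 (v.1, predF v.2) = true ∧ ω.2 v = true) then b
  else 0

/-- weight of a configuration. -/
def W (a b c : ℝ) {N M : ℕ} (ω : Cfg N M) : ℝ := ∏ v, vWeight a b c ω v

/-- partition function of the six-vertex model on the `N × M` torus. -/
def Z (N M : ℕ) (a b c : ℝ) : ℝ :=
  ∑ ω : Cfg N M, if IsSixVertex ω then W a b c ω else 0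

/-- number of North-pointing vertical edges in row `j`. -/
abbrev RowCount {N M : ℕ} (ω : Cfg N M) (j : Fin M) : ℕ :=
  (Finset.univ.filter fun i : Fin N => ω.2 (i, j) = true).card

/-- partition function restricted to configurations with exactly `n` up arrows per row. -/
def Zn (N M n : ℕ) (a b c : ℝ) : ℝ :=
  ∑ ω : Cfg N M, if IsSixVertex ω ∧ (∀ j, RowCount ω j = n) then W a b c ω else 0

/-- `F` is the per-site free energy of the six-vertex model with weights `a, b, c`:
the inner limit in `M` exists for every even `N ≥ 2`, and the resulting quantities
converge to `F` as `N → ∞` along even `N`. -/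
def FreeEnergyIs (a b c F : ℝ) : Prop :=
  ∃ g : ℕ → ℝ,
    (∀ N : ℕ, Even N → 2 ≤ N →
      Tendsto (fun M : ℕ => Real.log (Z N M a b c) / (M * N)) atTop (nhds (g N))) ∧
    Tendsto g (atTop ⊓ Filter.principal {N | Even N}) (nhds F)

/-- `L = f_N^{(n)}(a,b,c)`, the free energy of the six-vertex model in the sector
with `n` up arrows per row. -/
def SectorFE (N n : ℕ) (a b c L : ℝ) : Prop :=
  Tendsto (fun M : ℕ => Real.log (Zn N M n a b c) / (N * M)) atTop (nhds L)

end SixVertexFE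

namespace SixVertexFE

section
/-- hypotheses for Perron-Frobenius relative to a set of indices -/
structure PFH {ι : Type} [Fintype ι] [DecidableEq ι] (A : Matrix ι ι ℝ) (p : ι → Prop) : Prop where
  nonneg : ∀ i j, 0 ≤ A i j
  block : ∀ i j, A i j ≠ 0 → (p i ↔ p j)
  prim : ∃ n : ℕ, ∀ i j, p i → p j → 0 < (A ^ n) i j
  ne : ∃ i, p i

section PF
variable {ι : Type} [Fintype ι] [DecidableEq ι] {A : Matrix ι ι ℝ} {p : ι → Prop}

lemma PFH.pow_nonneg (h : PFH A p) (n : ℕ) (i j : ι) : 0 ≤ (A ^ n) i j := by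
  induction n generalizing i j with
  | zero =>
    rw [pow_zero, Matrix.one_apply]; split_ifs <;> norm_num
  | succ n ih =>
    rw [pow_succ, Matrix.mul_apply]
    exact Finset.sum_nonneg fun k _ => mul_nonneg (ih _ _) (h.nonneg _ _)

lemma PFH.pow_block (h : PFH A p) (n : ℕ) (i j : ι) (hij : (A ^ n) i j ≠ 0) : p i ↔ p j := by
  induction n generalizing i j with
  | zero =>
    rw [pow_zero, Matrix.one_apply] at hij
    split_ifs at hij with e
    · rw [e]
    · exact absurd rfl hij
  | succ n ih =>
    rw [pow_succ, Matrix.mul_apply] at hij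
    obtain ⟨k, _, hk⟩ := Finset.exists_ne_zero_of_sum_ne_zero hij
    exact (ih _ _ (left_ne_zero_of_mul hk)).trans (h.block _ _ (right_ne_zero_of_mul hk))

lemma PFH.pos_app (h : PFH A p) {n : ℕ} (hn : ∀ i j, p i → p j → 0 < (A ^ n) i j)
    {x : ι → ℝ} (hx : ∀ i, 0 ≤ x i) (hs : ∀ i, ¬ p i → x i = 0) (hx0 : x ≠ 0) (i : ι) (hi : p i) :
    0 < (A ^ n).mulVec x i := by
  obtain ⟨k, hk⟩ := Function.ne_iff.1 hx0
  have hk' : 0 < x k := lt_of_le_of_ne (hx k) (Ne.symm hk)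
  have hpk : p k := by by_contra hc; exact hk (hs k hc)
  exact Finset.sum_pos' (fun j _ => mul_nonneg (h.pow_nonneg n i j) (hx j))
    ⟨k, Finset.mem_univ _, mul_pos (hn i k hi hpk) hk'⟩

lemma PFH.supp_app (h : PFH A p) (n : ℕ)
    {x : ι → ℝ} (hs : ∀ i, ¬ p i → x i = 0) (i : ι) (hi : ¬ p i) :
    (A ^ n).mulVec x i = 0 := by
  refine Finset.sum_eq_zero fun j _ => ?_
  by_cases hj : p j
  · have : (A ^ n) i j = 0 := by
      by_contra hc; exact hi ((h.pow_block n i j hc).2 hj)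
    simp [this]
  · simp [hs j hj]

lemma pow_eig {x : ι → ℝ} {μ : ℝ} (hx : A.mulVec x = μ • x) (n : ℕ) :
    (A ^ n).mulVec x = μ ^ n • x := by
  induction n with
  | zero => simp
  | succ n ih =>
    rw [pow_succ, ← Matrix.mulVec_mulVec, hx, Matrix.mulVec_smul, ih, smul_smul, pow_succ, mul_comm]

/-- nonnegative eigenvectors are positive -/
lemma PFH.pos_of_nonneg (h : PFH A p) {x : ι → ℝ} {μ : ℝ} (hx : ∀ i, 0 ≤ x i)
    (hs : ∀ i, ¬ p i → x i = 0) (hx0 : x ≠ 0) (he : A.mulVec x = μ • x) (i : ι) (hi : p i) :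
    0 < x i := by
  obtain ⟨n, hn⟩ := h.prim
  have := h.pos_app hn hx hs hx0 i hi
  rw [pow_eig he] at this
  rcases (hx i).lt_or_eq with h1 | h1
  · exact h1
  · simp [← h1] at this

/-- real eigenvectors are proportional to the positive one -/
lemma PFH.prop (h : PFH A p) {ψ x : ι → ℝ} {μ : ℝ} (hψ : ∀ i, p i → 0 < ψ i)
    (hψs : ∀ i, ¬ p i → ψ i = 0) (hψe : A.mulVec ψ = μ • ψ)
    (hs : ∀ i, ¬ p i → x i = 0) (he : A.mulVec x = μ • x) : ∃ t : ℝ, x = t • ψ := by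
  classical
  obtain ⟨n, hn⟩ := h.prim
  obtain ⟨i0, hi0⟩ := h.ne
  obtain ⟨i, hi, hmin⟩ := (Finset.univ.filter p).exists_min_image (fun i => x i / ψ i)
    ⟨i0, by simpa using hi0⟩
  simp only [Finset.mem_filter, Finset.mem_univ, true_and] at hi hmin
  refine ⟨x i / ψ i, ?_⟩
  by_contra hne
  set y : ι → ℝ := x - (x i / ψ i) • ψ with hy
  have hy0 : y ≠ 0 := fun hc => hne (sub_eq_zero.1 hc)
  have hyn : ∀ j, 0 ≤ y j := by
    intro j
    by_cases hj : p j
    · have := hmin j hj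
      rw [le_div_iff₀ (hψ j hj)] at this
      simp [hy]; linarith
    · simp [hy, hs j hj, hψs j hj]
  have hys : ∀ j, ¬ p j → y j = 0 := fun j hj => by simp [hy, hs j hj, hψs j hj]
  have hye : A.mulVec y = μ • y := by
    rw [hy, Matrix.mulVec_sub, Matrix.mulVec_smul, he, hψe, smul_sub, smul_comm]
  have := h.pos_of_nonneg hyn hys hy0 hye i hi
  have h0 : y i = 0 := by simp [hy, (hψ i hi).ne']
  linarith

lemma PFH.le_eig (h : PFH A p) {ψ x : ι → ℝ} {μ ν : ℝ} (hψ : ∀ i, p i → 0 < ψ i)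
    (hψs : ∀ i, ¬ p i → ψ i = 0) (hψe : A.mulVec ψ = μ • ψ)
    (hx : ∀ i, p i → 0 < x i)
    (hs : ∀ i, ¬ p i → x i = 0) (he : A.mulVec x = ν • x) : μ ≤ ν := by
  classical
  obtain ⟨i0, hi0⟩ := h.ne
  obtain ⟨i, hi, hmin⟩ := (Finset.univ.filter p).exists_min_image (fun i => x i / ψ i)
    ⟨i0, by simpa using hi0⟩
  simp only [Finset.mem_filter, Finset.mem_univ, true_and] at hi hmin
  have h1 : ∀ j, (x i / ψ i) * ψ j ≤ x j := by
    intro j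
    by_cases hj : p j
    · have := hmin j hj
      rwa [le_div_iff₀ (hψ j hj)] at this
    · simp [hs j hj, hψs j hj]
  have h2 : A.mulVec ((x i / ψ i) • ψ) i ≤ A.mulVec x i :=
    Finset.sum_le_sum fun j _ => mul_le_mul_of_nonneg_left (by simpa using h1 j) (h.nonneg i j)
  rw [Matrix.mulVec_smul, hψe, he] at h2
  have h3 := hψ i hi
  have h4 := hx i hi
  simp only [Pi.smul_apply, smul_eq_mul] at h2
  have h5 : x i / ψ i * (μ * ψ i) = μ * x i := by field_simp
  rw [h5] at h2
  exact le_of_mul_le_mul_right h2 h4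

/-- Perron-Frobenius: existence -/
lemma PFH.exists (h : PFH A p) : ∃ (ψ : ι → ℝ) (μ : ℝ), (∀ i, p i → 0 < ψ i) ∧
    (∀ i, ¬ p i → ψ i = 0) ∧ ∑ i, ψ i = 1 ∧ A.mulVec ψ = μ • ψ := by
  classical
  obtain ⟨n, hn⟩ := h.prim
  obtain ⟨i0, hi0⟩ := h.ne
  set R : ℝ := ∑ i, ∑ j, A i j with hR
  have hA1 : Continuous fun q : ℝ × (ι → ℝ) => A.mulVec q.2 := by fun_prop
  let K : Set (ℝ × (ι → ℝ)) := (Set.Icc 0 R ×ˢ stdSimplex ℝ ι) ∩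
    ({q | ∀ i, q.1 * q.2 i ≤ A.mulVec q.2 i} ∩ {q | ∀ i, ¬ p i → q.2 i = 0})
  have hKc : IsCompact K := by
    refine (isCompact_Icc.prod (isCompact_stdSimplex ℝ ι)).inter_right (IsClosed.inter ?_ ?_)
    · simp only [Set.ofPred_forall]
      refine isClosed_iInter fun i => isClosed_le ?_ ?_
      · fun_prop
      · exact (continuous_apply i).comp hA1
    · simp only [Set.ofPred_forall]
      refine isClosed_iInter fun i => isClosed_iInter fun _ => isClosed_eq ?_ ?_ <;> fun_prop
  have hKne : K.Nonempty := by
    refine ⟨(0, Pi.single i0 1), ⟨⟨⟨le_refl _, ?_⟩, ?_⟩, ?_, ?_⟩⟩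
    · exact Finset.sum_nonneg fun i _ => Finset.sum_nonneg fun j _ => h.nonneg i j
    · exact single_mem_stdSimplex ℝ i0
    · intro i
      simp [h.nonneg]
    · intro i hi
      have : i ≠ i0 := fun hc => hi (hc ▸ hi0)
      simp [this]
  obtain ⟨⟨ρ, x⟩, hq, hmax⟩ := hKc.exists_isMaxOn hKne continuous_fst.continuousOn
  obtain ⟨⟨hρ, hx⟩, hle, hs⟩ := hq
  simp only [Set.mem_ofPred_eq] at hle hs
  have hx0 : x ≠ 0 := by
    intro hc
    have := hx.2
    simp [hc] at this
  have he : A.mulVec x = ρ • x := by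
    by_contra hne
    set z : ι → ℝ := A.mulVec x - ρ • x with hz
    have hz0 : z ≠ 0 := fun hc => hne (sub_eq_zero.1 hc)
    have hzn : ∀ i, 0 ≤ z i := fun i => by simpa [hz] using hle i
    have hzs : ∀ i, ¬ p i → z i = 0 := by
      intro i hi
      have := h.supp_app 1 hs i hi
      rw [pow_one] at this
      simp [hz, this, hs i hi]
    set y := (A ^ n).mulVec x with hy
    have hyp : ∀ i, p i → 0 < y i := h.pos_app hn hx.1 hs hx0
    have hzp := h.pos_app hn hzn hzs hz0
    have hys : ∀ i, ¬ p i → y i = 0 := h.supp_app n hs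
    have hAy : A.mulVec y = ρ • y + (A ^ n).mulVec z := by
      rw [hz, Matrix.mulVec_sub, Matrix.mulVec_smul, hy, Matrix.mulVec_mulVec, Matrix.mulVec_mulVec,
        ← pow_succ, ← pow_succ']
      abel
    obtain ⟨i1, hi1, hmin⟩ := (Finset.univ.filter p).exists_min_image
      (fun i => (A ^ n).mulVec z i / y i) ⟨i0, by simpa using hi0⟩
    simp only [Finset.mem_filter, Finset.mem_univ, true_and] at hi1 hmin
    set ε := (A ^ n).mulVec z i1 / y i1 with hε
    have hεp : 0 < ε := div_pos (hzp i1 hi1) (hyp i1 hi1)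
    have hyn : ∀ i, 0 ≤ y i := fun i => by
      by_cases hi : p i
      · exact (hyp i hi).le
      · exact (hys i hi).ge
    set S := ∑ i, y i with hS
    have hSp : 0 < S := Finset.sum_pos' (fun i _ => hyn i) ⟨i1, Finset.mem_univ _, hyp i1 hi1⟩
    have hx1 : S⁻¹ • y ∈ stdSimplex ℝ ι := by
      refine ⟨fun i => ?_, ?_⟩
      · simp only [Pi.smul_apply, smul_eq_mul]; exact mul_nonneg (inv_nonneg.2 hSp.le) (hyn i)
      · simp only [Pi.smul_apply, smul_eq_mul, ← Finset.mul_sum, ← hS]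
        exact inv_mul_cancel₀ hSp.ne'
    have hle' : ∀ i, (ρ + ε) * (S⁻¹ • y) i ≤ A.mulVec (S⁻¹ • y) i := by
      intro i
      rw [Matrix.mulVec_smul, hAy]
      simp only [Pi.smul_apply, smul_eq_mul, Pi.add_apply]
      have : ε * y i ≤ (A ^ n).mulVec z i := by
        by_cases hi : p i
        · have := hmin i hi
          rwa [le_div_iff₀ (hyp i hi)] at this
        · rw [hys i hi, h.supp_app n hzs i hi]; simp
      have h2 : 0 ≤ S⁻¹ := inv_nonneg.2 hSp.le
      nlinarith [mul_le_mul_of_nonneg_left this h2]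
    have hR' : ρ + ε ≤ R := by
      have h1 : ∑ i, (ρ + ε) * (S⁻¹ • y) i ≤ ∑ i, A.mulVec (S⁻¹ • y) i :=
        Finset.sum_le_sum fun i _ => hle' i
      rw [← Finset.mul_sum, hx1.2, mul_one] at h1
      refine h1.trans (Finset.sum_le_sum fun i _ => Finset.sum_le_sum fun j _ => ?_)
      have : (S⁻¹ • y) j ≤ 1 := by
        rw [← hx1.2]
        exact Finset.single_le_sum (fun k _ => hx1.1 k) (Finset.mem_univ j)
      exact mul_le_of_le_one_right (h.nonneg i j) this
    have hmem : (ρ + ε, S⁻¹ • y) ∈ K := by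
      refine ⟨⟨⟨?_, hR'⟩, hx1⟩, hle', ?_⟩
      · have := hρ.1
        simp only at this
        linarith
      · intro i hi
        simp [hys i hi]
    have := hmax hmem
    simp only [Set.mem_ofPred_eq] at this
    linarith
  exact ⟨x, ρ, fun i hi => h.pos_of_nonneg hx.1 hs hx0 he i hi, hs, hx.2, he⟩

end PF

end

section
open scoped Kronecker

/-- ordered product of matrices -/
def P {ι R : Type} [Fintype ι] [DecidableEq ι] [CommRing R] :
    (n : ℕ) → (Fin n → Matrix ι ι R) → Matrix ι ι R
  | 0, _ => 1
  | n + 1, A => A 0 * P n (fun i => A i.succ)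

section MPO
variable {ι κ R : Type} [Fintype ι] [DecidableEq ι] [Fintype κ] [DecidableEq κ] [CommRing R]

lemma P_succ (n : ℕ) (A : Fin (n+1) → Matrix ι ι R) : P (n+1) A = A 0 * P n (fun i => A i.succ) := rfl

/-- transfer matrix -/
def TT {n : ℕ} (A : Fin n → Bool → Bool → Matrix ι ι R) : Matrix (Fin n → Bool) (Fin n → Bool) R :=
  Matrix.of fun σ τ => (P n (fun j => A j (σ j) (τ j))).trace

/-- product of local operators -/
def bx (A : Bool → Bool → Matrix ι ι R) (B : Bool → Bool → Matrix κ κ R) (s t : Bool) :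
    Matrix (ι × κ) (ι × κ) R := ∑ p, A s p ⊗ₖ B p t

lemma sum_fin_succ {M : Type} [AddCommMonoid M] {n : ℕ} (f : (Fin (n+1) → Bool) → M) :
    ∑ ρ, f ρ = ∑ b : Bool, ∑ ρ : Fin n → Bool, f (Fin.cons b ρ) := by
  rw [← (Fin.consEquiv (fun _ : Fin (n+1) => Bool)).sum_comp, Fintype.sum_prod_type]
  rfl

lemma P_sum (n : ℕ) (A : Fin n → Bool → Matrix ι ι R) (B : Fin n → Bool → Matrix κ κ R) :
    ∑ ρ : Fin n → Bool, P n (fun j => A j (ρ j)) ⊗ₖ P n (fun j => B j (ρ j)) =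
      P n (fun j => ∑ p, A j p ⊗ₖ B j p) := by
  induction n with
  | zero => simp [P]
  | succ n ih =>
    rw [sum_fin_succ]
    simp only [P_succ, Fin.cons_zero, Fin.cons_succ, Matrix.mul_kronecker_mul, ← Finset.mul_sum]
    rw [ih (fun j => A j.succ) (fun j => B j.succ), Finset.sum_mul]

lemma TT_mul {n : ℕ} (A : Fin n → Bool → Bool → Matrix ι ι R) (B : Fin n → Bool → Bool → Matrix κ κ R) :
    TT A * TT B = TT (fun j => bx (A j) (B j)) := by
  ext σ τ
  simp only [TT, Matrix.mul_apply, Matrix.of_apply, bx]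
  rw [← P_sum n (fun j p => A j (σ j) p) (fun j p => B j p (τ j)), Matrix.trace_sum]
  simp only [Matrix.trace_kronecker]

lemma P_inter {n : ℕ} {A : Fin n → Matrix ι ι R} {B : Fin n → Matrix κ κ R} {G : Matrix κ ι R}
    (h : ∀ j, G * A j = B j * G) : G * P n A = P n B * G := by
  induction n with
  | zero => simp [P]
  | succ n ih =>
    rw [P_succ, P_succ, ← Matrix.mul_assoc, h, Matrix.mul_assoc, ih (fun j => h j.succ), Matrix.mul_assoc]

lemma TT_sim {n : ℕ} {A : Fin n → Bool → Bool → Matrix ι ι R} {B : Fin n → Bool → Bool → Matrix ι ι R}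
    {G H : Matrix ι ι R} (hGH : G * H = 1) (h : ∀ j s t, G * A j s t = B j s t * G) : TT A = TT B := by
  ext σ τ
  simp only [TT, Matrix.of_apply]
  have h1 := P_inter (G := G) (A := fun j => A j (σ j) (τ j)) (B := fun j => B j (σ j) (τ j))
    (fun j => h j _ _)
  have h2 : H * G = 1 := mul_eq_one_comm.1 hGH
  calc _ = ((H * G) * P n (fun j => A j (σ j) (τ j))).trace := by rw [h2, one_mul]
    _ = _ := by rw [mul_assoc, h1, ← mul_assoc, Matrix.trace_mul_comm, ← mul_assoc, hGH, one_mul]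

lemma P_smul {n : ℕ} (c : Fin n → R) (A : Fin n → Matrix ι ι R) :
    P n (fun j => c j • A j) = (∏ j, c j) • P n A := by
  induction n with
  | zero => simp [P]
  | succ n ih =>
    rw [P_succ, P_succ, ih (fun j => c j.succ), Fin.prod_univ_succ, smul_mul_smul_comm]

lemma TT_smul {n : ℕ} (c : Fin n → R) (A : Fin n → Bool → Bool → Matrix ι ι R) :
    TT (fun j s t => c j • A j s t) = (∏ j, c j) • TT A := by
  ext σ τ
  simp only [TT, Matrix.of_apply, P_smul, Matrix.trace_smul, Matrix.smul_apply]

lemma P_transpose {n : ℕ} (A : Fin n → Matrix ι ι R) :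
    (P n A).transpose = P n (fun j => (A j.rev).transpose) := by
  have snoc : ∀ (n : ℕ) (A : Fin (n+1) → Matrix ι ι R),
      P (n+1) A = P n (fun i => A i.castSucc) * A (Fin.last n) := by
    intro n
    induction n with
    | zero => intro A; simp [P]
    | succ n ih =>
      intro A
      rw [P_succ, ih, P_succ n, mul_assoc]
      rfl
  induction n with
  | zero => simp [P]
  | succ n ih =>
    rw [P_succ, Matrix.transpose_mul, ih, snoc]
    simp [Fin.rev_castSucc]

lemma sum_fin_succ' {M : Type} [AddCommMonoid M] {n : ℕ} (f : (Fin (n+1) → ι) → M) :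
    ∑ ρ, f ρ = ∑ b : ι, ∑ ρ : Fin n → ι, f (Fin.cons b ρ) := by
  rw [← (Fin.consEquiv (fun _ : Fin (n+1) => ι)).sum_comp, Fintype.sum_prod_type]
  rfl

lemma P_path (n : ℕ) (B : Fin n → Matrix ι ι R) (α β : ι) :
    P n B α β = ∑ h : Fin n → ι, (∏ i, B i ((Fin.cons α h : Fin (n+1) → ι) i.castSucc) (h i)) *
      (if (Fin.cons α h : Fin (n+1) → ι) (Fin.last n) = β then 1 else 0) := by
  induction n generalizing α with
  | zero => simp [P, Matrix.one_apply]
  | succ n ih =>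
    rw [P_succ, Matrix.mul_apply, sum_fin_succ']
    refine Finset.sum_congr rfl fun γ _ => ?_
    rw [ih, Finset.mul_sum]
    refine Finset.sum_congr rfl fun h _ => ?_
    rw [Fin.prod_univ_succ, ← mul_assoc]
    simp only [Fin.castSucc_zero, Fin.cons_zero, Fin.cons_succ, ← Fin.succ_castSucc, ← Fin.succ_last]

/-- closed path expansion -/
lemma trace_P (n : ℕ) (hn : 0 < n) (B : Fin n → Matrix ι ι R) :
    (P n B).trace = ∑ h : Fin n → ι, ∏ i, B i (h (predF i)) (h i) := by
  obtain ⟨m, rfl⟩ : ∃ m, n = m + 1 := ⟨n - 1, by omega⟩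
  simp only [Matrix.trace, Matrix.diag_apply, P_path]
  rw [Finset.sum_comm]
  refine Finset.sum_congr rfl fun h _ => ?_
  rw [← Fin.succ_last]
  simp only [Fin.cons_succ, mul_ite, mul_one, mul_zero]
  rw [Finset.sum_ite_eq, if_pos (Finset.mem_univ _)]
  refine Finset.prod_congr rfl fun i _ => ?_
  congr 1
  refine Fin.cases ?_ (fun j => ?_) i
  · simp only [Fin.castSucc_zero, Fin.cons_zero]
    congr 1
    ext; simp [predF]
  · rw [← Fin.succ_castSucc, Fin.cons_succ]
    congr 1
    ext
    simp only [predF, Fin.val_castSucc, Fin.val_succ]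
    rw [show (j:ℕ) + 1 + (m + 1 - 1) = j + (m+1) by omega, Nat.add_mod_right,
      Nat.mod_eq_of_lt (by omega)]

end MPO

/-- the local operator -/
def ell {R : Type} [CommRing R] (a b c : R) (s t : Bool) : Matrix Bool Bool R :=
  Matrix.of fun α β => if α = β then (if s = t then (if α = s then a else b) else 0)
    else (if s = β ∧ t = α then c else 0)

end

section
open scoped Kronecker

/-- crossing parameter -/
def lam : ℂ := 2 * π / 3

lemma sin_lam_r : Real.sin (2 * π / 3) = √3 / 2 := by
  rw [show 2 * π / 3 = π - π / 3 by ring, Real.sin_pi_sub, Real.sin_pi_div_three]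

lemma cos_lam_r : Real.cos (2 * π / 3) = -1 / 2 := by
  rw [show 2 * π / 3 = π - π / 3 by ring, Real.cos_pi_sub, Real.cos_pi_div_three]; ring

lemma lam_eq : lam = ((2 * π / 3 : ℝ) : ℂ) := by simp [lam]

lemma sin_lam : Complex.sin lam = ((√3 / 2 : ℝ) : ℂ) := by
  rw [lam_eq, ← Complex.ofReal_sin, sin_lam_r]

lemma cos_lam : Complex.cos lam = -1 / 2 := by
  rw [lam_eq, ← Complex.ofReal_cos, cos_lam_r]; push_cast; ring

lemma sin_lam_sq : Complex.sin lam ^ 2 = 3 / 4 := by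
  rw [Complex.sin_sq, cos_lam]; norm_num

/-- trigonometric local operator -/
def LL (v : ℂ) : Bool → Bool → Matrix Bool Bool ℂ :=
  ell (Complex.sin (lam - v)) (Complex.sin v) (Complex.sin lam)

/-- inhomogeneous transfer matrix -/
def T {n : ℕ} (w : Fin n → ℂ) (u : ℂ) : Matrix (Fin n → Bool) (Fin n → Bool) ℂ :=
  TT fun j => LL (u - w j)

/-- the intertwiner -/
def RR (A B C : ℂ) : Matrix (Bool × Bool) (Bool × Bool) ℂ :=
  Matrix.of fun x y => if x.1 = x.2 then (if x = y then A else 0)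
    else if x = y then B else if x = y.swap then C else 0

lemma RR_mul (A B C A' B' C' : ℂ) : RR A B C * RR A' B' C' = RR (A * A') (B * B' + C * C') (B * C' + C * B') := by
  ext ⟨a, b⟩ ⟨c, d⟩
  simp only [Matrix.mul_apply, Fintype.sum_prod_type, Fintype.sum_bool, RR, Matrix.of_apply]
  cases a <;> cases b <;> cases c <;> cases d <;> simp <;> ring

lemma RR_one : RR 1 1 0 = 1 := by
  ext ⟨a, b⟩ ⟨c, d⟩
  simp only [RR, Matrix.of_apply, Matrix.one_apply]
  cases a <;> cases b <;> cases c <;> cases d <;> simp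

set_option maxHeartbeats 4000000 in
lemma ybe (v v' : ℂ) (s t : Bool) :
    RR (Complex.sin (lam - (v - v'))) (Complex.sin lam) (Complex.sin (v - v')) * bx (LL v) (LL v') s t =
    bx (LL v') (LL v) s t * RR (Complex.sin (lam - (v - v'))) (Complex.sin lam) (Complex.sin (v - v')) := by
  have e1 : Complex.sin (lam - (v - v')) = Complex.sin lam * (Complex.cos v * Complex.cos v' + Complex.sin v * Complex.sin v') + 1/2 * (Complex.sin v * Complex.cos v' - Complex.cos v * Complex.sin v') := by
    rw [Complex.sin_sub, Complex.cos_sub, Complex.sin_sub, cos_lam]; ring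
  have e2 : ∀ v, Complex.sin (lam - v) = Complex.sin lam * Complex.cos v + 1/2 * Complex.sin v := by
    intro v
    rw [Complex.sin_sub, cos_lam]; ring
  have e3 := sin_lam_sq
  have e4 := Complex.sin_sq_add_cos_sq v
  have e5 := Complex.sin_sq_add_cos_sq v'
  simp only [LL]
  rw [e1, e2 v, e2 v', Complex.sin_sub v v']
  generalize Complex.sin lam = r at *
  generalize Complex.sin v = S at *
  generalize Complex.cos v = K at *
  generalize Complex.sin v' = S' at *
  generalize Complex.cos v' = K' at *
  clear e1 e2
  ext ⟨a, b⟩ ⟨c, d⟩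
  simp only [Matrix.mul_apply, Fintype.sum_prod_type, Fintype.sum_bool, bx, Matrix.add_apply, Matrix.kroneckerMap_apply, RR, ell, Matrix.of_apply]
  cases s <;> cases t <;> cases a <;> cases b <;> cases c <;> cases d <;> simp <;> try grind


lemma T_comm_gen {n : ℕ} (w : Fin n → ℂ) (u u' : ℂ) (h1 : Complex.sin (lam - (u - u')) ≠ 0)
    (h2 : Complex.sin (lam + (u - u')) ≠ 0) : T w u * T w u' = T w u' * T w u := by
  rw [T, T, TT_mul, TT_mul]
  set A := Complex.sin (lam - (u - u'))
  set B := Complex.sin lam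
  set C := Complex.sin (u - u')
  have hD : B ^ 2 - C ^ 2 = A * Complex.sin (lam + (u - u')) := by
    simp only [A, B, C, Complex.sin_sub lam, Complex.sin_add lam]
    have := Complex.sin_sq_add_cos_sq lam
    have := Complex.sin_sq_add_cos_sq (u - u')
    grind
  have hD0 : B ^ 2 - C ^ 2 ≠ 0 := by rw [hD]; exact mul_ne_zero h1 h2
  have hG : RR A B C * RR A⁻¹ (B / (B ^ 2 - C ^ 2)) (-C / (B ^ 2 - C ^ 2)) = 1 := by
    rw [RR_mul, ← RR_one]
    congr 1
    · exact mul_inv_cancel₀ h1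
    · field_simp; ring
    · field_simp; ring
  refine TT_sim hG fun j s t => ?_
  have := ybe (u - w j) (u' - w j) s t
  rwa [show u - w j - (u' - w j) = u - u' by ring] at this

lemma P_continuous {X ι : Type} [TopologicalSpace X] [Fintype ι] [DecidableEq ι] {n : ℕ}
    (A : X → Fin n → Matrix ι ι ℂ) (h : ∀ j, Continuous fun x => A x j) :
    Continuous fun x => P n (A x) := by
  induction n with
  | zero => simp only [P]; fun_prop
  | succ n ih =>
    simp only [P_succ]
    exact (h 0).matrix_mul (ih (fun x i => A x i.succ) (fun j => h j.succ))

lemma ell_continuous {X : Type} [TopologicalSpace X] {a b c : X → ℂ} (ha : Continuous a)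
    (hb : Continuous b) (hc : Continuous c) (s t : Bool) :
    Continuous fun x => ell (a x) (b x) (c x) s t := by
  refine continuous_matrix fun i j => ?_
  simp only [ell, Matrix.of_apply]
  split_ifs <;> fun_prop

lemma T_continuous {X : Type} [TopologicalSpace X] {n : ℕ} {w : X → Fin n → ℂ} {u : X → ℂ}
    (hw : Continuous w) (hu : Continuous u) : Continuous fun x => T (w x) (u x) := by
  refine continuous_matrix fun σ τ => ?_
  simp only [T, TT, Matrix.of_apply]
  refine Continuous.matrix_trace (P_continuous _ fun j => ?_)
  have h1 : Continuous fun x => w x j := (continuous_apply j).comp hw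
  exact ell_continuous (by fun_prop) (by fun_prop) (by fun_prop) _ _

lemma sin_zero_countable (f : ℂ → ℂ) (hf : Function.Injective f) : {u : ℂ | Complex.sin (f u) = 0}.Countable := by
  have : {u : ℂ | Complex.sin (f u) = 0} = f ⁻¹' (Set.range fun k : ℤ => (k : ℂ) * π) := by
    ext u
    simp only [Set.mem_preimage, Set.mem_range, Set.mem_ofPred_eq, Complex.sin_eq_zero_iff]
    constructor
    · rintro ⟨k, hk⟩; exact ⟨k, hk.symm⟩
    · rintro ⟨k, hk⟩; exact ⟨k, hk.symm⟩
  rw [this]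
  exact (Set.countable_range _).preimage_of_injOn hf.injOn

lemma T_comm {n : ℕ} (w : Fin n → ℂ) (u u' : ℂ) : T w u * T w u' = T w u' * T w u := by
  have hd : Dense ({u : ℂ | Complex.sin (lam - (u - u')) = 0} ∪ {u : ℂ | Complex.sin (lam + (u - u')) = 0})ᶜ := by
    refine Set.Countable.dense_compl ℝ (Set.Countable.union ?_ ?_)
    · exact sin_zero_countable (fun u => lam - (u - u')) (fun a b h => by simpa using h)
    · exact sin_zero_countable (fun u => lam + (u - u')) (fun a b h => by simpa using h)
  have h1 : Continuous fun u => T w u := T_continuous continuous_const continuous_id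
  have := Continuous.ext_on hd (f := fun u => T w u * T w u') (g := fun u => T w u' * T w u)
    (h1.matrix_mul continuous_const) (continuous_const.matrix_mul h1) (fun u hu => by
      simp only [Set.mem_compl_iff, Set.mem_union, Set.mem_ofPred_eq, not_or] at hu
      exact T_comm_gen w u u' hu.1 hu.2)
  exact congrFun this u

end

section
open scoped Kronecker

/-- triple product -/
def A3x (x y z c : ℂ) : Bool → Bool → Matrix (Bool × Bool × Bool) (Bool × Bool × Bool) ℂ :=
  bx (ell (-z) x c) (bx (ell (-x) y c) (ell (-y) z c))

def Jm0 : Matrix (Bool × Bool × Bool) Bool ℂ :=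
  Matrix.of fun p e => if p.1 = p.2.1 then 0 else if p.2.2 = e then 1 else 0
def Jm1 : Matrix (Bool × Bool × Bool) Bool ℂ :=
  Matrix.of fun p e => if p.2.1 = p.2.2 then 0 else if p.1 = e then 1 else 0
def Jm2 : Matrix (Bool × Bool × Bool) Bool ℂ :=
  Matrix.of fun p e => if p = (e, e, e) then 1 else 0
def Jm3 : Matrix (Bool × Bool × Bool) Bool ℂ :=
  Matrix.of fun p e => if p = (true, e, false) then 1 else 0
def Qm0 : Matrix Bool (Bool × Bool × Bool) ℂ :=
  Matrix.of fun e p => match e, p with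
    | false, (false, true, false) => 1
    | false, (false, false, true) => -1
    | true, (false, true, true) => 1
    | _, _ => 0
def Qm1 : Matrix Bool (Bool × Bool × Bool) ℂ :=
  Matrix.of fun e p => match e, p with
    | false, (false, false, true) => 1
    | true, (true, false, true) => 1
    | true, (false, true, true) => -1
    | _, _ => 0
def Qm2 : Matrix Bool (Bool × Bool × Bool) ℂ :=
  Matrix.of fun e p => if p = (e, e, e) then 1 else 0
def Qm3 : Matrix Bool (Bool × Bool × Bool) ℂ :=
  Matrix.of fun e p => match e, p with
    | false, (false, false, true) => 1
    | false, (false, true, false) => -1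
    | false, (true, false, false) => 1
    | true, (false, true, true) => 1
    | true, (true, false, true) => -1
    | true, (true, true, false) => 1
    | _, _ => 0

def Bm2 (q : ℂ) (s t : Bool) : Matrix Bool Bool ℂ :=
  Matrix.of fun a b => if a = b ∧ s = t then (if a = s then -q else q) else 0
def Em (q : ℂ) (s t : Bool) : Matrix Bool Bool ℂ :=
  Matrix.of fun a b => if a = b ∧ s ≠ t ∧ a = t then q else 0

lemma JQ_sum : Jm0 * Qm0 + Jm1 * Qm1 + Jm2 * Qm2 + Jm3 * Qm3 = 1 := by
  ext ⟨a, b, c⟩ ⟨a', b', c'⟩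
  cases a <;> cases b <;> cases c <;> cases a' <;> cases b' <;> cases c' <;>
  simp [Matrix.mul_apply, Jm0, Jm1, Jm2, Jm3, Qm0, Qm1, Qm2, Qm3]

lemma Q0J0 : Qm0 * Jm0 = 1 := by
  ext a b
  cases a <;> cases b <;> simp [Matrix.mul_apply, Fintype.sum_prod_type, Qm0, Jm0]
lemma Q1J1 : Qm1 * Jm1 = 1 := by
  ext a b
  cases a <;> cases b <;> simp [Matrix.mul_apply, Fintype.sum_prod_type, Qm1, Jm1]
lemma Q2J2 : Qm2 * Jm2 = 1 := by
  ext a b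
  cases a <;> cases b <;> simp [Matrix.mul_apply, Fintype.sum_prod_type, Qm2, Jm2]
lemma Q3J3 : Qm3 * Jm3 = 1 := by
  ext a b
  cases a <;> cases b <;> simp [Matrix.mul_apply, Fintype.sum_prod_type, Qm3, Jm3]
lemma Q3J2 : Qm3 * Jm2 = 0 := by
  ext a b
  cases a <;> cases b <;> simp [Matrix.mul_apply, Fintype.sum_prod_type, Qm3, Jm2]


set_option maxHeartbeats 4000000 in
lemma AJ0 {x y z c : ℂ} (hy : y = -x - z) (hc : c ^ 2 = x ^ 2 + x * z + z ^ 2) (s t : Bool) : A3x x y z c s t * Jm0 = Jm0 * ((-(y*z)) • ell (-y) z c s t) := by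
  subst hy
  ext ⟨a, b, d⟩ e
  simp only [Matrix.mul_apply, Fintype.sum_prod_type, Fintype.sum_bool, A3x, bx, Matrix.add_apply, Matrix.kroneckerMap_apply, Jm0, ell, Matrix.of_apply, Matrix.smul_apply]
  cases s <;> cases t <;> cases a <;> cases b <;> cases d <;> cases e <;> simp <;> try grind

set_option maxHeartbeats 4000000 in
lemma AJ1 {x y z c : ℂ} (hy : y = -x - z) (hc : c ^ 2 = x ^ 2 + x * z + z ^ 2) (s t : Bool) : A3x x y z c s t * Jm1 = Jm1 * ((-(z*x)) • ell (-z) x c s t) := by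
  subst hy
  ext ⟨a, b, d⟩ e
  simp only [Matrix.mul_apply, Fintype.sum_prod_type, Fintype.sum_bool, A3x, bx, Matrix.add_apply, Matrix.kroneckerMap_apply, Jm1, ell, Matrix.of_apply, Matrix.smul_apply]
  cases s <;> cases t <;> cases a <;> cases b <;> cases d <;> cases e <;> simp <;> try grind

set_option maxHeartbeats 4000000 in
lemma QA3 {x y z c : ℂ} (hy : y = -x - z) (hc : c ^ 2 = x ^ 2 + x * z + z ^ 2) (s t : Bool) : Qm3 * A3x x y z c s t = ((-(x*y)) • ell (-x) y c s t) * Qm3 := by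
  subst hy
  ext e ⟨a, b, d⟩
  simp only [Matrix.mul_apply, Fintype.sum_prod_type, Fintype.sum_bool, A3x, bx, Matrix.add_apply, Matrix.kroneckerMap_apply, Qm3, ell, Matrix.of_apply, Matrix.smul_apply]
  cases s <;> cases t <;> cases a <;> cases b <;> cases d <;> cases e <;> simp <;> try grind

set_option maxHeartbeats 4000000 in
lemma QA2 {x y z c : ℂ} (hy : y = -x - z) (s t : Bool) : Qm2 * A3x x y z c s t = Bm2 (x*y*z) s t * Qm2 + Em (c*x*y) s t * Qm3 := by
  subst hy
  ext e ⟨a, b, d⟩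
  simp only [Matrix.mul_apply, Fintype.sum_prod_type, Fintype.sum_bool, A3x, bx, Matrix.add_apply, Matrix.kroneckerMap_apply, Qm3, Qm2, Bm2, Em, ell, Matrix.of_apply, Matrix.smul_apply]
  cases s <;> cases t <;> cases a <;> cases b <;> cases d <;> cases e <;> simp <;> try grind

end

section
lemma P_mid {n : ℕ} {ι : Type} [Fintype ι] [DecidableEq ι] {A : Fin n → Matrix ι ι ℂ}
    {B C E : Fin n → Matrix Bool Bool ℂ} {Q Q' : Matrix Bool ι ℂ} {J : Matrix ι Bool ℂ}
    (h1 : ∀ j, Q * A j = B j * Q + E j * Q') (h2 : ∀ j, Q' * A j = C j * Q')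
    (hQ : Q * J = 1) (hQ' : Q' * J = 0) : Q * P n A * J = P n B := by
  induction n with
  | zero => simp [P, hQ]
  | succ n ih =>
    have h3 := P_inter (G := Q') (A := fun j => A (Fin.succ j)) (B := fun j => C j.succ) (fun j => h2 j.succ)
    have h4 := ih (fun j => h1 j.succ) (fun j => h2 j.succ)
    rw [P_succ, P_succ, ← Matrix.mul_assoc, h1, Matrix.add_mul, Matrix.add_mul, Matrix.mul_assoc (B 0),
      Matrix.mul_assoc (B 0), h4, Matrix.mul_assoc (E 0), Matrix.mul_assoc (E 0), h3, Matrix.mul_assoc _ Q',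
      hQ']
    simp

lemma cubic_TT {n : ℕ} {x y z : Fin n → ℂ} {c : ℂ} (hy : ∀ j, y j = -x j - z j)
    (hc : ∀ j, c ^ 2 = x j ^ 2 + x j * z j + z j ^ 2) :
    TT (fun j => ell (-z j) (x j) c) * (TT (fun j => ell (-x j) (y j) c) * TT (fun j => ell (-y j) (z j) c))
    = (∏ j, (-(y j * z j))) • TT (fun j => ell (-y j) (z j) c)
      + (∏ j, (-(z j * x j))) • TT (fun j => ell (-z j) (x j) c)
      + (∏ j, (-(x j * y j))) • TT (fun j => ell (-x j) (y j) c)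
      + TT (fun j => Bm2 (x j * y j * z j)) := by
  rw [TT_mul, TT_mul, ← TT_smul, ← TT_smul, ← TT_smul]
  ext σ τ
  simp only [TT, Matrix.add_apply, Matrix.of_apply]
  change (P n fun j => A3x (x j) (y j) (z j) c (σ j) (τ j)).trace = _
  set X := P n fun j => A3x (x j) (y j) (z j) c (σ j) (τ j) with hX
  have t0 : X * Jm0 = Jm0 * P n fun j => (-(y j * z j)) • ell (-y j) (z j) c (σ j) (τ j) :=
    (P_inter (fun j => (AJ0 (hy j) (hc j) _ _).symm)).symm
  have t1 : X * Jm1 = Jm1 * P n fun j => (-(z j * x j)) • ell (-z j) (x j) c (σ j) (τ j) :=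
    (P_inter (fun j => (AJ1 (hy j) (hc j) _ _).symm)).symm
  have t3 : Qm3 * X = (P n fun j => (-(x j * y j)) • ell (-x j) (y j) c (σ j) (τ j)) * Qm3 :=
    P_inter (fun j => QA3 (hy j) (hc j) _ _)
  have t2 : Qm2 * X * Jm2 = P n fun j => Bm2 (x j * y j * z j) (σ j) (τ j) :=
    P_mid (fun j => QA2 (hy j) _ _) (fun j => QA3 (hy j) (hc j) _ _) Q2J2 Q3J2
  calc X.trace = (X * (Jm0 * Qm0 + Jm1 * Qm1 + Jm2 * Qm2 + Jm3 * Qm3)).trace := by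
        rw [JQ_sum, mul_one]
    _ = (Qm0 * (X * Jm0)).trace + (Qm1 * (X * Jm1)).trace + (Jm3 * (Qm3 * X)).trace
        + (Qm2 * X * Jm2).trace := by
        simp only [Matrix.mul_add, Matrix.trace_add, ← Matrix.mul_assoc]
        rw [Matrix.trace_mul_comm _ Qm0, Matrix.trace_mul_comm _ Qm1, Matrix.trace_mul_comm _ Qm2,
          Matrix.trace_mul_comm _ Qm3]
        rw [show (Qm3 * (X * Jm3)).trace = (Jm3 * Qm3 * X).trace by
          rw [← Matrix.mul_assoc, Matrix.trace_mul_comm, Matrix.mul_assoc]]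
        simp only [← Matrix.mul_assoc]
        ring
    _ = _ := by
        rw [t0, t1, t2, t3, ← Matrix.mul_assoc, Q0J0, Matrix.one_mul, ← Matrix.mul_assoc, Q1J1, Matrix.one_mul,
          Matrix.trace_mul_comm Jm3, Matrix.mul_assoc, Q3J3, Matrix.mul_one]

/-- number of up spins -/
def cnt {n : ℕ} (σ : Fin n → Bool) : ℕ := (Finset.univ.filter fun j => σ j = true).card

lemma P_diag {n : ℕ} (f : Fin n → Bool → ℂ) :
    P n (fun j => Matrix.diagonal (f j)) = Matrix.diagonal fun a => ∏ j, f j a := by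
  induction n with
  | zero => simp [P]
  | succ n ih => rw [P_succ, ih (fun j => f j.succ), Matrix.diagonal_mul_diagonal]; simp [Fin.prod_univ_succ]

lemma cnt_not {n : ℕ} (σ : Fin n → Bool) : cnt (fun j => !σ j) + cnt σ = n := by
  have := Finset.card_filter_add_card_filter_not (s := (Finset.univ : Finset (Fin n))) (fun j => σ j = true)
  simp [cnt] at *
  omega

lemma prod_neg_cnt {n : ℕ} (σ : Fin n → Bool) (q : Fin n → ℂ) :
    ∏ j, (if σ j = true then - q j else q j) = (-1) ^ cnt σ * ∏ j, q j := by
  have : ∀ j, (if σ j = true then - q j else q j) = (if σ j = true then (-1) else 1) * q j := by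
    intro j; split_ifs <;> ring
  simp only [this, Finset.prod_mul_distrib]
  congr 1
  rw [Finset.prod_ite]
  simp [cnt]

lemma TT_Bm2 {n m : ℕ} (hn : n = 2 * m) (q : Fin n → ℂ) (σ τ : Fin n → Bool) (hσ : cnt τ = m) :
    TT (fun j => Bm2 (q j)) σ τ = if σ = τ then 2 * (-1) ^ m * ∏ j, q j else 0 := by
  have h1 : ∀ j, Bm2 (q j) (σ j) (τ j) = Matrix.diagonal
      (fun a => if σ j = τ j then (if a = σ j then - q j else q j) else 0) := by
    intro j
    ext a b
    simp only [Bm2, Matrix.of_apply, Matrix.diagonal_apply]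
    by_cases h : a = b <;> by_cases h' : σ j = τ j <;> simp [h, h']
  simp only [TT, Matrix.of_apply, h1, P_diag, Matrix.trace_diagonal, Fintype.sum_bool]
  split_ifs with h
  · subst h
    simp only [if_true]
    have e1 := prod_neg_cnt σ q
    have e2 := prod_neg_cnt (fun j => !σ j) q
    have e3 : cnt (fun j => !σ j) = m := by have := cnt_not σ; omega
    rw [e3] at e2
    rw [hσ] at e1
    have f1 : ∀ j, (if true = σ j then - q j else q j) = (if σ j = true then - q j else q j) := by
      intro j; simp only [eq_comm]
    have f2 : ∀ j, (if false = σ j then - q j else q j) = (if (!σ j) = true then - q j else q j) := by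
      intro j; cases σ j <;> simp
    simp only [f1, f2, e1, e2]; ring
  · obtain ⟨j, hj⟩ := Function.ne_iff.1 h
    have z : ∀ a, (∏ j, if σ j = τ j then (if a = σ j then - q j else q j) else 0) = 0 := fun a =>
      Finset.prod_eq_zero (Finset.mem_univ j) (by simp [hj])
    rw [z, z, add_zero]

/-- the product of sines -/
def sp {n : ℕ} (w : Fin n → ℂ) (u : ℂ) : ℂ := ∏ j, Complex.sin (u - w j)

lemma cubic {n m : ℕ} (hn : n = 2 * m) (w : Fin n → ℂ) (ψ : (Fin n → Bool) → ℂ) (Λ : ℂ → ℂ)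
    (hs : ∀ σ, cnt σ ≠ m → ψ σ = 0) (h0 : ψ ≠ 0) (he : ∀ u, (T w u).mulVec ψ = Λ u • ψ) (u : ℂ) :
    Λ u * Λ (u + lam) * Λ (u - lam) = sp w (u + lam) * sp w (u - lam) * Λ (u - lam)
      + sp w u * sp w (u - lam) * Λ u + sp w u * sp w (u + lam) * Λ (u + lam)
      + 2 * (-1) ^ m * (sp w u * sp w (u + lam) * sp w (u - lam)) := by
  have hyy : ∀ v : ℂ, Complex.sin (v + lam) = -Complex.sin v - Complex.sin (v - lam) := by
    intro v; rw [Complex.sin_add, Complex.sin_sub, cos_lam]; ring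
  have hcc : ∀ v : ℂ, Complex.sin lam ^ 2 = Complex.sin v ^ 2 + Complex.sin v * Complex.sin (v - lam)
      + Complex.sin (v - lam) ^ 2 := by
    intro v
    rw [Complex.sin_sub, cos_lam]
    have := sin_lam_sq
    have := Complex.sin_sq_add_cos_sq v
    grind
  have e0 : ∀ v : ℂ, LL v = ell (-Complex.sin (v - lam)) (Complex.sin v) (Complex.sin lam) := by
    intro v; rw [LL, ← Complex.sin_neg, neg_sub]
  have e1 : ∀ v : ℂ, LL (v + lam) = ell (-Complex.sin v) (Complex.sin (v + lam)) (Complex.sin lam) := by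
    intro v; rw [e0, add_sub_cancel_right]
  have e2 : ∀ v : ℂ, LL (v - lam) = ell (-Complex.sin (v + lam)) (Complex.sin (v - lam)) (Complex.sin lam) := by
    intro v; rw [e0, hyy, ← Complex.sin_neg, neg_sub]
    congr 1
    rw [show lam - (v - lam) = -(v - lam - lam) by ring, Complex.sin_neg, Complex.sin_sub (v - lam), Complex.sin_sub v, Complex.cos_sub v, cos_lam]
    have := sin_lam_sq
    grind
  have key := cubic_TT (n := n) (x := fun j => Complex.sin (u - w j))
    (y := fun j => Complex.sin (u - w j + lam)) (z := fun j => Complex.sin (u - w j - lam))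
    (c := Complex.sin lam) (fun j => hyy _) (fun j => hcc _)
  have n1 : ∀ f : Fin n → ℂ, ∏ j, (-(f j)) = ∏ j, f j := by
    intro f
    rw [Finset.prod_neg]
    simp [hn]
  simp only [n1, ← e0, ← e1, ← e2, Finset.prod_mul_distrib] at key
  have r1 : ∀ j, u - w j + lam = u + lam - w j := fun j => by ring
  have r2 : ∀ j, u - w j - lam = u - lam - w j := fun j => by ring
  simp only [r1, r2] at key
  change T w u * (T w (u + lam) * T w (u - lam)) = (sp w (u + lam) * sp w (u - lam)) • T w (u - lam) +
    (sp w (u - lam) * sp w u) • T w u + (sp w u * sp w (u + lam)) • T w (u + lam) + _ at key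
  have k2 := congrArg (fun M => Matrix.mulVec M ψ) key
  simp only [Matrix.add_mulVec, ← Matrix.mulVec_mulVec, he, Matrix.mulVec_smul, Matrix.smul_mulVec] at k2
  have k3 : (TT (fun j => Bm2 (Complex.sin (u - w j) * Complex.sin (u + lam - w j) * Complex.sin (u - lam - w j)))).mulVec ψ
     = (2 * (-1) ^ m * (sp w u * sp w (u + lam) * sp w (u - lam))) • ψ := by
    ext σ
    rw [Matrix.mulVec, dotProduct]
    have : ∀ τ, TT (fun j => Bm2 (Complex.sin (u - w j) * Complex.sin (u + lam - w j) * Complex.sin (u - lam - w j))) σ τ * ψ τ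
      = if σ = τ then 2 * (-1) ^ m * (sp w u * sp w (u + lam) * sp w (u - lam)) * ψ σ else 0 := by
      intro τ
      by_cases hτ : cnt τ = m
      · rw [TT_Bm2 hn _ _ _ hτ]
        simp only [Finset.prod_mul_distrib]
        split_ifs with h
        · rw [h]; rfl
        · simp
      · rw [hs τ hτ]
        split_ifs with h
        · rw [h, hs τ hτ]; simp
        · simp
    simp only [this, Finset.sum_ite_eq, Finset.mem_univ, if_true]
    rfl
  rw [k3] at k2
  obtain ⟨σ, hσ⟩ := Function.ne_iff.1 h0
  have k4 := congrFun k2 σ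
  simp only [Pi.add_apply, Pi.smul_apply, smul_eq_mul] at k4
  apply mul_right_cancel₀ hσ
  linear_combination k4

end

section
lemma cnt_succ {n : ℕ} (σ : Fin (n+1) → Bool) : cnt σ = (σ 0).toNat + cnt (fun j => σ j.succ) := by
  simp only [cnt, Fin.card_filter_univ_succ]
  cases σ 0 <;> simp [add_comm]

lemma P_cons {R : Type} [CommRing R] {n : ℕ} (a b : Fin n → R) (c : R) (σ τ : Fin n → Bool) (α β : Bool)
    (h : P n (fun j => ell (a j) (b j) c (σ j) (τ j)) α β ≠ 0) :
    α.toNat + cnt σ = β.toNat + cnt τ := by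
  induction n generalizing α with
  | zero =>
    simp only [P, Matrix.one_apply] at h
    have : α = β := by by_contra hc; simp [hc] at h
    simp [this, cnt]
  | succ n ih =>
    rw [P_succ, Matrix.mul_apply] at h
    obtain ⟨γ, _, hγ⟩ := Finset.exists_ne_zero_of_sum_ne_zero h
    have h1 := ih (fun j => a j.succ) (fun j => b j.succ) (fun j => σ j.succ) (fun j => τ j.succ) γ
      (right_ne_zero_of_mul hγ)
    have h2 := left_ne_zero_of_mul hγ
    rw [cnt_succ, cnt_succ]
    simp only [ell, Matrix.of_apply] at h2
    revert h1 h2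
    cases α <;> cases γ <;> cases σ 0 <;> cases τ 0 <;> simp <;> omega

lemma TT_cons {R : Type} [CommRing R] {n : ℕ} (a b : Fin n → R) (c : R) (σ τ : Fin n → Bool)
    (h : TT (fun j => ell (a j) (b j) c) σ τ ≠ 0) : cnt σ = cnt τ := by
  simp only [TT, Matrix.of_apply, Matrix.trace, Matrix.diag_apply] at h
  obtain ⟨γ, _, hγ⟩ := Finset.exists_ne_zero_of_sum_ne_zero h
  have := P_cons a b c σ τ γ γ hγ
  omega

section
variable {n : ℕ} {a b : Fin n → ℝ} {c : ℝ}

lemma ell_nonneg {a b c : ℝ} (ha : 0 ≤ a) (hb : 0 ≤ b) (hc : 0 ≤ c) (s t α β : Bool) :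
    0 ≤ ell a b c s t α β := by
  simp only [ell, Matrix.of_apply]
  split_ifs <;> first | assumption | exact le_refl _

lemma P_nonneg (A : Fin n → Matrix Bool Bool ℝ) (h : ∀ j α β, 0 ≤ A j α β) (α β : Bool) :
    0 ≤ P n A α β := by
  induction n generalizing α with
  | zero => simp only [P, Matrix.one_apply]; split_ifs <;> norm_num
  | succ n ih =>
    rw [P_succ, Matrix.mul_apply]
    exact Finset.sum_nonneg fun γ _ => mul_nonneg (h _ _ _) (ih _ (fun j => h j.succ) _)

lemma P_diag_ge (A : Fin n → Matrix Bool Bool ℝ) (h : ∀ j α β, 0 ≤ A j α β) (α : Bool) :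
    ∏ j, A j α α ≤ P n A α α := by
  induction n with
  | zero => simp [P]
  | succ n ih =>
    rw [P_succ, Matrix.mul_apply, Fin.prod_univ_succ]
    refine le_trans ?_ (Finset.single_le_sum (f := fun γ => A 0 α γ * P n (fun i => A i.succ) γ α)
      (fun γ _ => mul_nonneg (h _ _ _) (P_nonneg _ (fun j => h j.succ) _ _)) (Finset.mem_univ α))
    exact mul_le_mul_of_nonneg_left (ih _ (fun j => h j.succ)) (h _ _ _)


lemma TT_nonneg (ha : ∀ j, 0 ≤ a j) (hb : ∀ j, 0 ≤ b j) (hc : 0 ≤ c) (σ τ : Fin n → Bool) : 0 ≤ TT (fun j => ell (a j) (b j) c) σ τ := by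
  simp only [TT, Matrix.of_apply, Matrix.trace, Matrix.diag_apply]
  exact Finset.sum_nonneg fun _ _ => P_nonneg _ (fun j _ _ => ell_nonneg (ha j) (hb j) hc _ _ _ _) _ _

lemma TT_diag_ge (ha : ∀ j, 0 ≤ a j) (hb : ∀ j, 0 ≤ b j) (hc : 0 ≤ c) (σ : Fin n → Bool) (α : Bool) :
    ∏ j, (if α = σ j then a j else b j) ≤ TT (fun j => ell (a j) (b j) c) σ σ := by
  have h1 : ∀ j α β, 0 ≤ ell (a j) (b j) c (σ j) (σ j) α β := fun j α β => ell_nonneg (ha j) (hb j) hc _ _ _ _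
  have := P_diag_ge (fun j => ell (a j) (b j) c (σ j) (σ j)) h1 α
  have e : ∀ j, ell (a j) (b j) c (σ j) (σ j) α α = if α = σ j then a j else b j := by
    intro j; simp [ell]
  simp only [e] at this
  refine this.trans ?_
  simp only [TT, Matrix.of_apply, Matrix.trace, Matrix.diag_apply]
  exact Finset.single_le_sum (f := fun γ => P n (fun j => ell (a j) (b j) c (σ j) (σ j)) γ γ)
    (fun γ _ => P_nonneg _ h1 _ _) (Finset.mem_univ α)

end

lemma predF_val {n : ℕ} (k : Fin n) : (predF k : ℕ) = if (k : ℕ) = 0 then n - 1 else k - 1 := by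
  have := k.2
  simp only [predF]
  split_ifs with h
  · rw [h, zero_add, Nat.mod_eq_of_lt (by omega)]
  · rw [show (k : ℕ) + (n - 1) = (k - 1) + n by omega, Nat.add_mod_right, Nat.mod_eq_of_lt (by omega)]

section
variable {n : ℕ} {a b : Fin n → ℝ} {c : ℝ}

lemma TT_swap_pos (ha : ∀ j, 0 < a j) (hb : ∀ j, 0 < b j) (hc : 0 < c) (σ τ : Fin n → Bool) (i j : Fin n) (h1 : σ i = true) (h2 : τ i = false)
    (h3 : σ j = false) (h4 : τ j = true) (h5 : ∀ k, k ≠ i → k ≠ j → σ k = τ k) :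
    0 < TT (fun j => ell (a j) (b j) c) σ τ := by
  have hn : 0 < n := i.pos
  simp only [TT, Matrix.of_apply]
  rw [trace_P n hn]
  let h : Fin n → Bool := fun k => if i < j then decide (i ≤ k ∧ k < j) else !decide (j ≤ k ∧ k < i)
  have hij : (i : ℕ) ≠ j := by
    intro hc
    have : i = j := Fin.ext hc
    rw [this, h3] at h1; simp at h1
  refine Finset.sum_pos' (fun h _ => Finset.prod_nonneg fun k _ =>
    ell_nonneg (ha k).le (hb k).le hc.le _ _ _ _) ⟨h, Finset.mem_univ _, Finset.prod_pos fun k _ => ?_⟩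
  have hp := predF_val k
  have hik : i = k ↔ (i : ℕ) = k := Fin.ext_iff
  have hki := k.2
  have hii := i.2
  have hji := j.2
  by_cases hk : k = i
  · subst hk
    have e1 : h (predF k) = false := by
      simp only [h, Fin.lt_def, Fin.le_def, hp]
      by_cases hl : (k : ℕ) < j <;> by_cases h0 : (k : ℕ) = 0 <;> simp [hl, h0] <;> omega
    have e2 : h k = true := by
      simp only [h, Fin.lt_def, Fin.le_def]
      by_cases hl : (k : ℕ) < j <;> simp [hl]
    simp [ell, e1, e2, h1, h2, hc]
  · by_cases hk' : k = j
    · subst hk'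
      have e1 : h (predF k) = true := by
        simp only [h, Fin.lt_def, Fin.le_def, hp]
        by_cases hl : (i : ℕ) < k <;> by_cases h0 : (k : ℕ) = 0 <;> simp [hl, h0] <;> omega
      have e2 : h k = false := by
        simp only [h, Fin.lt_def, Fin.le_def]
        by_cases hl : (i : ℕ) < k <;> simp [hl]
        omega
      simp [ell, e1, e2, h3, h4, hc]
    · have n1 : (k : ℕ) ≠ i := fun hh => hk (Fin.ext hh)
      have n2 : (k : ℕ) ≠ j := fun hh => hk' (Fin.ext hh)
      have e1 : h (predF k) = h k := by
        simp only [h, Fin.lt_def, Fin.le_def, hp]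
        split_ifs <;> rw [Bool.eq_iff_iff] <;> simp <;> omega
      simp only [ell, e1, h5 k hk hk', Matrix.of_apply, if_true]
      split_ifs
      · exact ha k
      · exact hb k

lemma TT_PFH (ha : ∀ j, 0 < a j) (hb : ∀ j, 0 < b j) (hc : 0 < c) (k : ℕ) (hk : k ≤ n) : PFH (TT (fun j => ell (a j) (b j) c)) (fun σ => cnt σ = k) := by
  set A := TT (fun j => ell (a j) (b j) c) with hA
  have hnn : ∀ σ τ, 0 ≤ A σ τ := TT_nonneg (fun j => (ha j).le) (fun j => (hb j).le) hc.le
  have hd : ∀ σ, 0 < A σ σ := fun σ => lt_of_lt_of_le (Finset.prod_pos fun j _ => by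
    split_ifs
    · exact ha j
    · exact hb j) (TT_diag_ge (fun j => (ha j).le) (fun j => (hb j).le) hc.le σ true)
  have hcons : ∀ σ τ, A σ τ ≠ 0 → cnt σ = cnt τ := fun σ τ => TT_cons a b c σ τ
  have hpn : ∀ d σ τ, 0 ≤ (A ^ d) σ τ := by
    intro d
    induction d with
    | zero => intro σ τ; rw [pow_zero, Matrix.one_apply]; split_ifs <;> norm_num
    | succ d ih =>
      intro σ τ
      rw [pow_succ, Matrix.mul_apply]
      exact Finset.sum_nonneg fun k _ => mul_nonneg (ih _ _) (hnn _ _)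
  have key : ∀ d σ τ, cnt σ = cnt τ → (Finset.univ.filter fun k => σ k ≠ τ k).card ≤ d → 0 < (A ^ d) σ τ := by
    intro d
    induction d with
    | zero =>
      intro σ τ _ h
      have : σ = τ := by
        funext k
        have h1 := Finset.card_eq_zero.1 (Nat.le_zero.1 h)
        by_contra hc
        have : k ∈ (Finset.univ.filter fun k => σ k ≠ τ k) := by simp [hc]
        rw [h1] at this; simp at this
      simp [this]
    | succ d ih =>
      intro σ τ hc' h
      have step : ∀ ρ, 0 < A σ ρ → 0 < (A ^ d) ρ τ → 0 < (A ^ (d+1)) σ τ := by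
        intro ρ h1 h2
        rw [pow_succ', Matrix.mul_apply]
        exact Finset.sum_pos' (fun k _ => mul_nonneg (hnn _ _) (hpn _ _ _)) ⟨ρ, Finset.mem_univ _, mul_pos h1 h2⟩
      by_cases he : σ = τ
      · subst he
        exact step σ (hd σ) (ih σ σ rfl (by simp))
      · have h1 : ∃ i, σ i = true ∧ τ i = false := by
          by_contra hcon
          push Not at hcon
          apply he
          have hsub : (Finset.univ.filter fun k => σ k = true) ⊆ (Finset.univ.filter fun k => τ k = true) := by
            intro k hk
            simp only [Finset.mem_filter, Finset.mem_univ, true_and] at hk ⊢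
            have := hcon k hk
            simpa using this
          have heq := Finset.eq_of_subset_of_card_le hsub hc'.ge
          funext k
          have := congrArg (fun s => k ∈ s) heq
          simp only [Finset.mem_filter, Finset.mem_univ, true_and, eq_iff_iff] at this
          exact Bool.eq_iff_iff.2 this
        have h2 : ∃ i, σ i = false ∧ τ i = true := by
          by_contra hcon
          push Not at hcon
          apply he
          have hsub : (Finset.univ.filter fun k => τ k = true) ⊆ (Finset.univ.filter fun k => σ k = true) := by
            intro k hk
            simp only [Finset.mem_filter, Finset.mem_univ, true_and] at hk ⊢
            by_contra hc
            exact hcon k (by simpa using hc) hk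
          have heq := Finset.eq_of_subset_of_card_le hsub hc'.le
          funext k
          have := congrArg (fun s => k ∈ s) heq
          simp only [Finset.mem_filter, Finset.mem_univ, true_and, eq_iff_iff] at this
          exact (Bool.eq_iff_iff.2 this).symm
        obtain ⟨i, hi1, hi2⟩ := h1
        obtain ⟨j, hj1, hj2⟩ := h2
        have hij : i ≠ j := by rintro rfl; rw [hi1] at hj1; simp at hj1
        let ρ := Function.update (Function.update σ i false) j true
        have hρi : ρ i = false := by simp [ρ, hij]
        have hρj : ρ j = true := by simp [ρ]
        have hρk : ∀ k, k ≠ i → k ≠ j → σ k = ρ k := by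
          intro k h1 h2; simp [ρ, h1, h2]
        have hp : 0 < A σ ρ := TT_swap_pos ha hb hc σ ρ i j hi1 hρi hj1 hρj hρk
        refine step ρ hp (ih ρ τ ((hcons _ _ hp.ne').symm.trans hc') ?_)
        have : (Finset.univ.filter fun k => ρ k ≠ τ k) ⊂ (Finset.univ.filter fun k => σ k ≠ τ k) := by
          rw [Finset.ssubset_iff_of_subset]
          · refine ⟨i, by simp [hi1, hi2], by simp [hρi, hi2]⟩
          · intro k hk
            simp only [Finset.mem_filter, Finset.mem_univ, true_and] at hk ⊢
            by_cases k1 : k = i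
            · subst k1; simp [hρi, hi2] at hk
            · by_cases k2 : k = j
              · subst k2; simp [hρj, hj2] at hk
              · rw [hρk k k1 k2]; exact hk
        have := Finset.card_lt_card this
        omega
  refine ⟨hnn, fun σ τ h => by rw [hcons σ τ h], ⟨n, fun σ τ h1 h2 => key n σ τ (h1.trans h2.symm) ?_⟩, ?_⟩
  · exact (Finset.card_le_univ _).trans (by simp)
  · refine ⟨fun j => decide ((j : ℕ) < k), ?_⟩
    simp only [cnt, decide_eq_true_eq]
    rw [Fin.card_filter_val_lt]
    omega

end

end

section
lemma PFH.unique {ι : Type} [Fintype ι] [DecidableEq ι] {A : Matrix ι ι ℝ} {p : ι → Prop} (h : PFH A p)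
    {x y : ι → ℝ} {μ ν : ℝ} (hx : ∀ i, 0 ≤ x i) (hxs : ∀ i, ¬ p i → x i = 0) (hx1 : ∑ i, x i = 1)
    (hxe : A.mulVec x = μ • x) (hy : ∀ i, 0 ≤ y i) (hys : ∀ i, ¬ p i → y i = 0) (hy1 : ∑ i, y i = 1)
    (hye : A.mulVec y = ν • y) : x = y := by
  have hx0 : x ≠ 0 := by rintro rfl; simp at hx1
  have hy0 : y ≠ 0 := by rintro rfl; simp at hy1
  have hxp := h.pos_of_nonneg hx hxs hx0 hxe
  have hyp := h.pos_of_nonneg hy hys hy0 hye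
  have e : μ = ν := le_antisymm (h.le_eig hxp hxs hxe hyp hys hye) (h.le_eig hyp hys hye hxp hxs hxe)
  subst e
  obtain ⟨t, ht⟩ := h.prop hyp hys hye hxs hxe
  have : t = 1 := by
    rw [ht] at hx1
    simp only [Pi.smul_apply, smul_eq_mul, ← Finset.mul_sum, hy1, mul_one] at hx1
    exact hx1
  rw [ht, this, one_smul]

/-- complexified vector -/
def cv {ι : Type} (x : ι → ℝ) : ι → ℂ := fun i => (x i : ℂ)

/-- eigenvalue function -/
def Lam {n : ℕ} (w : Fin n → ℝ) (ψ : (Fin n → Bool) → ℝ) (u : ℂ) : ℂ :=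
  ∑ σ, (T (cv w) u).mulVec (cv ψ) σ

/-- real transfer matrix at the symmetric point -/
def Ar {n : ℕ} (w : Fin n → ℝ) : Matrix (Fin n → Bool) (Fin n → Bool) ℝ :=
  TT fun j => ell (Real.sin (π / 3 + w j)) (Real.sin (π / 3 - w j)) (√3 / 2)

structure Eig {n : ℕ} (w : Fin n → ℝ) (k : ℕ) (ψ : (Fin n → Bool) → ℝ) : Prop where
  nonneg : ∀ σ, 0 ≤ ψ σ
  supp : ∀ σ, cnt σ ≠ k → ψ σ = 0
  sum : ∑ σ, ψ σ = 1
  eig : ∀ u, (T (cv w) u).mulVec (cv ψ) = Lam w ψ u • cv ψ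

lemma P_map {R S ι : Type} [Fintype ι] [DecidableEq ι] [CommRing R] [CommRing S] (f : R →+* S) {n : ℕ}
    (A : Fin n → Matrix ι ι R) : (P n A).map f = P n (fun j => (A j).map f) := by
  induction n with
  | zero => simp [P, Matrix.map_one]
  | succ n ih => rw [P_succ, P_succ, Matrix.map_mul, ih]

lemma ell_map {R S : Type} [CommRing R] [CommRing S] (f : R →+* S) (a b c : R) (s t : Bool) :
    (ell a b c s t).map f = ell (f a) (f b) (f c) s t := by
  ext α β
  simp only [ell, Matrix.map_apply, Matrix.of_apply]
  split_ifs <;> simp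

lemma TT_map {R S : Type} [CommRing R] [CommRing S] (f : R →+* S) {n : ℕ} (a b : Fin n → R) (c : R) :
    TT (fun j => ell (f (a j)) (f (b j)) (f c)) = (TT (fun j => ell (a j) (b j) c)).map f := by
  ext σ τ
  simp only [TT, Matrix.of_apply, Matrix.map_apply, ← ell_map, ← P_map]
  simp [Matrix.trace]

lemma T_real {n : ℕ} (w : Fin n → ℝ) : T (cv w) (π / 3) = (Ar w).map (Complex.ofRealHom) := by
  rw [Ar, ← TT_map, T]
  congr 1
  funext j
  rw [LL]
  congr 1
  · simp only [cv, lam, Complex.ofRealHom_eq_coe, Complex.ofReal_sin]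
    congr 1; push_cast; ring
  · simp [cv]
  · rw [sin_lam]; rfl

lemma mulVec_cv {ι : Type} [Fintype ι] (A : Matrix ι ι ℝ) (x : ι → ℝ) :
    (A.map Complex.ofRealHom).mulVec (cv x) = cv (A.mulVec x) := by
  ext i
  simp [Matrix.mulVec, dotProduct, cv]

lemma sin_pos_aux {w : ℝ} (h : |w| < π / 3) : 0 < Real.sin (π / 3 + w) ∧ 0 < Real.sin (π / 3 - w) := by
  rw [abs_lt] at h
  have := Real.pi_pos
  constructor <;> apply Real.sin_pos_of_pos_of_lt_pi <;> linarith

lemma Ar_PFH {n : ℕ} {w : Fin n → ℝ} (hw : ∀ j, |w j| < π / 3) {k : ℕ} (hk : k ≤ n) :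
    PFH (Ar w) (fun σ => cnt σ = k) :=
  TT_PFH (fun j => (sin_pos_aux (hw j)).1) (fun j => (sin_pos_aux (hw j)).2) (by positivity) k hk

lemma T_cons {n : ℕ} (w : Fin n → ℂ) (u : ℂ) (σ τ : Fin n → Bool) (h : T w u σ τ ≠ 0) : cnt σ = cnt τ :=
  TT_cons _ _ _ σ τ h

lemma Lam_of_eig {n : ℕ} {w : Fin n → ℝ} {ψ : (Fin n → Bool) → ℝ} (hs : ∑ σ, ψ σ = 1) {u μ : ℂ}
    (h : (T (cv w) u).mulVec (cv ψ) = μ • cv ψ) : Lam w ψ u = μ := by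
  rw [Lam, h]
  simp only [Pi.smul_apply, smul_eq_mul, ← Finset.mul_sum, cv, ← Complex.ofReal_sum, hs]
  simp

lemma exists_Eig {n : ℕ} {w : Fin n → ℝ} (hw : ∀ j, |w j| < π / 3) {k : ℕ} (hk : k ≤ n) :
    ∃ ψ, Eig w k ψ := by
  have hP := Ar_PFH hw hk
  obtain ⟨ψ, μ, hpos, hs, h1, he⟩ := hP.exists
  refine ⟨ψ, fun σ => ?_, hs, h1, fun u => ?_⟩
  · by_cases h : cnt σ = k
    · exact (hpos σ h).le
    · exact (hs σ h).ge
  · set y := (T (cv w) u).mulVec (cv ψ) with hy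
    have hys : ∀ σ, cnt σ ≠ k → y σ = 0 := by
      intro σ hσ
      refine Finset.sum_eq_zero fun τ _ => ?_
      by_cases h : cnt τ = k
      · have : T (cv w) u σ τ = 0 := by
          by_contra hc; exact hσ ((T_cons _ _ _ _ hc).trans h)
        simp [this]
      · simp [cv, hs τ h]
    have e0 : (T (cv w) (π / 3)).mulVec (cv ψ) = (μ : ℂ) • cv ψ := by
      rw [T_real, mulVec_cv, he]; ext; simp [cv]
    have e1 : (T (cv w) (π / 3)).mulVec y = (μ : ℂ) • y := by
      rw [hy, Matrix.mulVec_mulVec, T_comm, ← Matrix.mulVec_mulVec, e0, Matrix.mulVec_smul]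
    rw [T_real] at e1
    have e2 : ∀ σ, ∑ τ, (Ar w σ τ : ℂ) * y τ = μ * y σ := fun σ => congrFun e1 σ
    have er : (Ar w).mulVec (fun σ => (y σ).re) = μ • (fun σ => (y σ).re) := by
      ext σ
      have := congrArg Complex.re (e2 σ)
      simpa [Matrix.mulVec, dotProduct] using this
    have ei : (Ar w).mulVec (fun σ => (y σ).im) = μ • (fun σ => (y σ).im) := by
      ext σ
      have := congrArg Complex.im (e2 σ)
      simpa [Matrix.mulVec, dotProduct] using this
    obtain ⟨t, ht⟩ := hP.prop hpos hs he (fun σ h => by simp [hys σ h]) er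
    obtain ⟨t', ht'⟩ := hP.prop hpos hs he (fun σ h => by simp [hys σ h]) ei
    have hyy : y = ((t : ℂ) + t' * Complex.I) • cv ψ := by
      ext σ
      have a1 := congrFun ht σ
      have a2 := congrFun ht' σ
      simp only [Pi.smul_apply, smul_eq_mul] at a1 a2
      apply Complex.ext <;> simp [cv, a1, a2]
    rw [Lam_of_eig h1 hyy, hyy]

namespace Eig
variable {n k : ℕ} {w : Fin n → ℝ} {ψ : (Fin n → Bool) → ℝ}

lemma ne_zero (h : Eig w k ψ) : ψ ≠ 0 := by
  rintro rfl
  have := h.sum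
  simp at this

lemma cv_ne_zero (h : Eig w k ψ) : cv ψ ≠ 0 := by
  obtain ⟨σ, hσ⟩ := Function.ne_iff.1 h.ne_zero
  intro hc
  apply hσ
  have := congrFun hc σ
  simpa [cv] using this

lemma real_eig (h : Eig w k ψ) : (Ar w).mulVec ψ = (∑ σ, (Ar w).mulVec ψ σ) • ψ ∧
    Lam w ψ (π / 3) = ((∑ σ, (Ar w).mulVec ψ σ : ℝ) : ℂ) := by
  have e : Lam w ψ (π / 3) = ((∑ σ, (Ar w).mulVec ψ σ : ℝ) : ℂ) := by
    rw [Lam, T_real, mulVec_cv]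
    simp [cv]
  refine ⟨?_, e⟩
  have := h.eig (π / 3)
  rw [e, T_real, mulVec_cv] at this
  ext σ
  have := congrFun this σ
  simp only [cv, Pi.smul_apply, smul_eq_mul] at this
  exact_mod_cast this

lemma cubic {m : ℕ} (h : Eig w m ψ) (hn : n = 2 * m) (u : ℂ) :
    Lam w ψ u * Lam w ψ (u + lam) * Lam w ψ (u - lam) =
      sp (cv w) (u + lam) * sp (cv w) (u - lam) * Lam w ψ (u - lam)
      + sp (cv w) u * sp (cv w) (u - lam) * Lam w ψ u + sp (cv w) u * sp (cv w) (u + lam) * Lam w ψ (u + lam)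
      + 2 * (-1) ^ m * (sp (cv w) u * sp (cv w) (u + lam) * sp (cv w) (u - lam)) :=
  SixVertexFE.cubic hn (cv w) (cv ψ) (Lam w ψ) (fun σ hσ => by simp [cv, h.supp σ hσ]) h.cv_ne_zero h.eig u

end Eig

lemma Lam_conj {n : ℕ} (w : Fin n → ℝ) (ψ : (Fin n → Bool) → ℝ) (u : ℂ) :
    Lam w ψ (starRingEnd ℂ u) = starRingEnd ℂ (Lam w ψ u) := by
  have h : T (cv w) (starRingEnd ℂ u) = (T (cv w) u).map (starRingEnd ℂ) := by
    have := TT_map (starRingEnd ℂ) (fun j => Complex.sin (lam - (u - cv w j)))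
      (fun j => Complex.sin (u - cv w j)) (Complex.sin lam)
    rw [T, T]
    refine Eq.trans ?_ this
    congr 1
    funext j
    rw [LL]
    simp only [← Complex.sin_conj, map_sub]
    have hl : starRingEnd ℂ lam = lam := by rw [lam_eq, Complex.conj_ofReal]
    simp [cv, hl]
  simp only [Lam, h, map_sum, Matrix.mulVec, dotProduct, map_mul, Matrix.map_apply]
  simp [cv]

lemma Lam_period {n : ℕ} (hn : Even n) (w : Fin n → ℝ) (ψ : (Fin n → Bool) → ℝ) (u : ℂ) :
    Lam w ψ (u + π) = Lam w ψ u := by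
  have h : T (cv w) (u + π) = T (cv w) u := by
    have e : T (cv w) (u + π) = TT (fun j s t => (-1 : ℂ) • ell (Complex.sin (lam - (u - cv w j)))
      (Complex.sin (u - cv w j)) (-Complex.sin lam) s t) := by
      rw [T]
      congr 1
      funext j s t
      ext α β
      simp only [LL, ell, Matrix.of_apply, Matrix.smul_apply]
      rw [show u + π - cv w j = u - cv w j + π by ring, Complex.sin_add_pi,
        show lam - (u - cv w j + π) = lam - (u - cv w j) - π by ring, Complex.sin_sub_pi]
      split_ifs <;> simp
    rw [e, TT_smul (fun _ => (-1:ℂ))]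
    simp only [Finset.prod_const, Finset.card_univ, Fintype.card_fin, hn.neg_one_pow, one_smul]
    let G : Matrix Bool Bool ℂ := Matrix.of fun a b => if a = b then (if a then 1 else -1) else 0
    have hG : G * G = 1 := by
      ext a b; cases a <;> cases b <;> simp [G, Matrix.mul_apply]
    refine TT_sim hG fun j s t => ?_
    ext a b
    cases a <;> cases b <;> cases s <;> cases t <;> simp [G, Matrix.mul_apply, ell, LL]
  rw [Lam, Lam, h]

end

section
/-- two-site deformed inhomogeneities -/
def wd (n : ℕ) (d : ℝ) : Fin (n + 2) → ℝ := Fin.cons d (Fin.cons (-d) 0)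

/-- mirror permutation -/
def mir (n : ℕ) : Fin (n + 2) → Fin (n + 2) :=
  Fin.cons 1 (Fin.cons 0 (fun j => j.rev.succ.succ))

lemma mir_invol (n : ℕ) : Function.Involutive (mir n) := by
  intro i
  refine Fin.cases ?_ (fun i => ?_) i
  · simp [mir]
  · refine Fin.cases ?_ (fun i => ?_) i
    · simp [mir]
    · simp [mir]

lemma wd_mir (n : ℕ) (d : ℝ) (j : Fin (n + 2)) : wd n d (mir n j) = - wd n d j := by
  refine Fin.cases ?_ (fun i => ?_) j
  · simp [mir, wd]
  · refine Fin.cases ?_ (fun i => ?_) i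
    · simp [mir, wd]
    · simp [mir, wd]

lemma abs_wd {n : ℕ} {d : ℝ} (h0 : 0 ≤ d) (h1 : d < π / 3) (j : Fin (n + 2)) : |wd n d j| < π / 3 := by
  have := Real.pi_pos
  refine Fin.cases ?_ (fun i => ?_) j
  · simp [wd, abs_of_nonneg h0, h1]
  · refine Fin.cases ?_ (fun i => ?_) i
    · simp [wd, abs_of_nonneg h0, h1]
    · simp [wd]; positivity

/-- flip matrix on the auxiliary space -/
def Xf : Matrix Bool Bool ℂ := Matrix.of fun a b => if a = b then 0 else 1

lemma Xf_sq : Xf * Xf = 1 := by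
  ext a b; cases a <;> cases b <;> simp [Xf, Matrix.mul_apply]

lemma LL_cross (v : ℂ) (s t : Bool) : Xf * LL (lam - v) s t = (LL v s t).transpose * Xf := by
  ext a b
  cases a <;> cases b <;> cases s <;> cases t <;> simp [Xf, Matrix.mul_apply, ell, LL]

lemma T_mirror {n : ℕ} (d : ℝ) (u : ℂ) (σ τ : Fin (n + 2) → Bool) :
    T (cv (wd n d)) (lam - u) (σ ∘ mir n) (τ ∘ mir n) = T (cv (wd n d)) u σ τ := by
  have h1 : T (cv (wd n d)) (lam - u) = TT (fun j s t => (LL (u - cv (wd n d) (mir n j)) s t).transpose) := by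
    rw [T]
    refine TT_sim Xf_sq fun j s t => ?_
    rw [← LL_cross]
    rw [show lam - u - cv (wd n d) j = lam - (u - cv (wd n d) (mir n j)) by
      simp only [cv, wd_mir]; push_cast; ring]
  rw [h1]
  simp only [TT, T, Matrix.of_apply, P_succ, Function.comp]
  have h2 : ∀ X Y Q : Matrix Bool Bool ℂ, (X * (Y * Q)).trace =
      (Y.transpose * (X.transpose * Q.transpose)).trace := by
    intro X Y Q
    rw [← Matrix.trace_transpose, Matrix.transpose_mul, Matrix.transpose_mul,
      Matrix.mul_assoc, Matrix.trace_mul_comm, Matrix.mul_assoc]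
  rw [h2 (LL _ _ _) (LL _ _ _), P_transpose]
  rfl

lemma cnt_comp {n : ℕ} (e : Equiv.Perm (Fin n)) (σ : Fin n → Bool) : cnt (σ ∘ e) = cnt σ := by
  simp only [cnt, Function.comp]
  exact Finset.card_equiv e (by simp)

lemma Lam_mirror {n k : ℕ} {d : ℝ} (h0 : 0 ≤ d) (h1 : d < π / 3) {ψ} (h : Eig (wd n d) k ψ) (u : ℂ) :
    Lam (wd n d) ψ (lam - u) = Lam (wd n d) ψ u := by
  let e : Equiv.Perm (Fin (n + 2)) := (mir_invol n).toPerm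
  let E : Equiv.Perm (Fin (n + 2) → Bool) := e.arrowCongr (Equiv.refl _)
  have hE : ∀ σ, E σ = σ ∘ mir n := fun σ => rfl
  have hk : k ≤ n + 2 := by
    by_contra hc
    apply h.ne_zero
    funext σ
    apply h.supp
    have := cnt_not σ
    omega
  have hA : ∀ σ τ, Ar (wd n d) (E σ) (E τ) = Ar (wd n d) σ τ := by
    intro σ τ
    have := T_mirror (n := n) d (π / 3) σ τ
    rw [show lam - π / 3 = π / 3 by rw [lam]; ring, T_real] at this
    rw [hE, hE]
    simpa using this
  have hψ : ψ ∘ E = ψ := by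
    have hs : ∑ σ, (ψ ∘ E) σ = 1 := by rw [← h.sum]; exact Equiv.sum_comp E ψ
    refine (Ar_PFH (abs_wd h0 h1) hk).unique (fun σ => h.nonneg _) (fun σ hσ => h.supp _ ?_) hs
      ?_ h.nonneg h.supp h.sum h.real_eig.1 (μ := ∑ σ, (Ar (wd n d)).mulVec ψ σ)
    · rw [hE, show mir n = e from rfl, cnt_comp]; exact hσ
    · ext σ
      have := congrFun h.real_eig.1 (E σ)
      simp only [Pi.smul_apply, Function.comp] at this ⊢
      rw [← this]
      simp only [Matrix.mulVec, dotProduct]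
      rw [← Equiv.sum_comp E (fun x => Ar (wd n d) (E σ) x * ψ x)]
      simp only [hA]
      rfl
  simp only [Lam, Matrix.mulVec, dotProduct]
  rw [← Equiv.sum_comp E]
  refine Finset.sum_congr rfl fun σ _ => ?_
  rw [← Equiv.sum_comp E]
  refine Finset.sum_congr rfl fun τ _ => ?_
  rw [hE, hE, T_mirror, ← hE]
  simp only [cv]
  rw [show ψ (E τ) = ψ τ from congrFun hψ τ]

end

section
lemma sin_ge_aux {d : ℝ} (h0 : 0 ≤ d) (h1 : d ≤ π / 3) : √3 / 2 ≤ Real.sin (π / 3 + d) := by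
  have hp := Real.pi_pos
  rcases le_or_gt d (π / 6) with h | h
  · rw [← Real.sin_pi_div_three]
    exact Real.sin_le_sin_of_le_of_le_pi_div_two (by linarith) (by linarith) (by linarith)
  · rw [← Real.sin_pi_div_three, ← Real.sin_pi_sub (π / 3 + d)]
    exact Real.sin_le_sin_of_le_of_le_pi_div_two (by linarith) (by linarith) (by linarith)

lemma Lam_center_ge {m : ℕ} {d : ℝ} (h0 : 0 ≤ d) (h1 : d < π / 3) {ψ}
    (h : Eig (wd (2 * m) d) (m + 1) ψ) :
    (√3 / 2) ^ (2 * m + 2) ≤ ∑ σ, (Ar (wd (2 * m) d)).mulVec ψ σ := by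
  have hw := abs_wd (n := 2 * m) h0 h1
  have hP := Ar_PFH hw (k := m + 1) (by omega)
  obtain ⟨ρ, hρ⟩ := (Ar_PFH (n := 2 * m) (w := 0) (k := m) (fun j => by simp [Real.pi_pos]) (by omega)).ne
  set σ : Fin (2 * m + 2) → Bool := Fin.cons true (Fin.cons false ρ) with hσ
  have hc : cnt σ = m + 1 := by
    rw [cnt_succ, cnt_succ]
    simp [hσ, hρ]
    omega
  have hpos := hP.pos_of_nonneg h.nonneg h.supp h.ne_zero h.real_eig.1 σ hc
  have e := congrFun h.real_eig.1 σ
  set μ := ∑ σ, (Ar (wd (2 * m) d)).mulVec ψ σ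
  have hA : Ar (wd (2 * m) d) σ σ * ψ σ ≤ (Ar (wd (2 * m) d)).mulVec ψ σ := by
    rw [Matrix.mulVec, dotProduct]
    exact Finset.single_le_sum (f := fun τ => Ar (wd (2 * m) d) σ τ * ψ τ)
      (fun τ _ => mul_nonneg (hP.nonneg _ _) (h.nonneg _)) (Finset.mem_univ σ)
  rw [e, Pi.smul_apply, smul_eq_mul] at hA
  have hA' := le_of_mul_le_mul_right hA hpos
  refine le_trans ?_ hA'
  refine le_trans ?_ (TT_diag_ge (fun j => (sin_pos_aux (hw j)).1.le) (fun j => (sin_pos_aux (hw j)).2.le)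
    (by positivity) σ true)
  rw [Fin.prod_univ_succ, Fin.prod_univ_succ]
  have h3 := sin_ge_aux h0 h1.le
  have h4 : ∀ i : Fin (2 * m), (if true = σ i.succ.succ then Real.sin (π / 3 + wd (2 * m) d i.succ.succ)
    else Real.sin (π / 3 - wd (2 * m) d i.succ.succ)) = √3 / 2 := by
    intro i; simp [wd]
  simp only [h4]
  simp only [hσ, wd, Fin.cons_zero, Fin.cons_succ, Finset.prod_const, Finset.card_univ, Fintype.card_fin]
  rw [if_pos trivial, if_neg (by simp), sub_neg_eq_add, pow_add, ← mul_assoc, mul_comm]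
  gcongr
  rw [pow_two]
  gcongr
  exact le_trans (by positivity) h3

/-- spin-one-half pair tensor -/
def tens {n : ℕ} {R : Type} [Zero R] (φ : (Fin n → Bool) → R) : (Fin (n + 2) → Bool) → R :=
  fun τ => if τ 0 ≠ τ 1 then φ (fun j => τ j.succ.succ) else 0

lemma fuse_local (u : ℂ) (s₀ s₁ : Bool) : LL (u - π / 3) s₀ true * LL (u + π / 3) s₁ false
    + LL (u - π / 3) s₀ false * LL (u + π / 3) s₁ true =
    (if s₀ ≠ s₁ then Complex.sin u * Complex.sin (u + π / 3) else 0) • (1 : Matrix Bool Bool ℂ) := by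
  have h1 : Complex.sin (π / 3) = ((√3 / 2 : ℝ) : ℂ) := by
    rw [← Real.sin_pi_div_three]; push_cast; rfl
  have h2 : Complex.cos (π / 3) = 1 / 2 := by
    have := congrArg Complex.ofReal Real.cos_pi_div_three
    push_cast at this
    exact this
  have h3 := sin_lam
  have h4 := cos_lam
  have h5 : ((√3 / 2 : ℝ) : ℂ) ^ 2 = 3 / 4 := by
    rw [← sin_lam]; exact sin_lam_sq
  have h6 := Complex.sin_sq_add_cos_sq u
  ext a b
  cases a <;> cases b <;> cases s₀ <;> cases s₁ <;>
    simp [ell, LL, Matrix.mul_apply, Complex.sin_sub, Complex.sin_add, Complex.cos_sub, Complex.cos_add] <;> grind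

lemma T_fuse {n : ℕ} (u : ℂ) (φ : (Fin n → Bool) → ℂ) :
    (T (cv (wd n (π / 3))) u).mulVec (tens φ) =
      (Complex.sin u * Complex.sin (u + π / 3)) • tens ((T (cv (0 : Fin n → ℝ)) u).mulVec φ) := by
  ext σ
  simp only [Matrix.mulVec, dotProduct]
  rw [sum_fin_succ]
  simp only [sum_fin_succ (n := n)]
  simp only [T, TT, Matrix.of_apply, P_succ, tens, Pi.smul_apply, smul_eq_mul]
  have e : ∀ (Q : Matrix Bool Bool ℂ) (x : ℂ),
      (LL (u - π / 3) (σ 0) true * (LL (u + π / 3) (σ 1) false * Q)).trace * x +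
      (LL (u - π / 3) (σ 0) false * (LL (u + π / 3) (σ 1) true * Q)).trace * x =
      (if σ 0 ≠ σ 1 then Complex.sin u * Complex.sin (u + π / 3) else 0) * (Q.trace * x) := by
    intro Q x
    rw [← Matrix.mul_assoc, ← Matrix.mul_assoc, ← add_mul, ← Matrix.trace_add, ← Matrix.add_mul, fuse_local,
      Matrix.smul_mul, one_mul, Matrix.trace_smul, smul_eq_mul, mul_assoc]
  have h0 : u - cv (wd n (π / 3)) 0 = u - π / 3 := by simp [cv, wd]
  have h1 : u - cv (wd n (π / 3)) 1 = u + π / 3 := by simp [cv, wd]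
  have h2 : ∀ i : Fin n, u - cv (wd n (π / 3)) i.succ.succ = u - cv (0 : Fin n → ℝ) i := by
    intro i; simp [cv, wd]
  simp only [h0, h1, h2, Fintype.sum_bool, Fin.cons_zero, Fin.cons_succ, Fin.cons_one, Fin.succ_zero_eq_one]
  simp only [ne_eq, not_true, not_false_eq_true, if_true, if_false, mul_zero, Finset.sum_const_zero, zero_add, add_zero,
    Bool.true_eq_false, Bool.false_eq_true]
  rw [← Finset.sum_add_distrib]
  simp only [e]
  rw [← Finset.mul_sum]
  by_cases h : σ 0 = σ 1
  · simp [h]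
  · rw [if_pos h]
    simp only [h, not_false_eq_true, if_true]
    rfl

lemma Ar_end {n : ℕ} (σ τ : Fin (n + 2) → Bool) : Ar (wd n (π / 3)) σ τ =
    tens (fun ρ => Ar (wd n (π / 3)) (Fin.cons true (Fin.cons false ρ)) τ) σ := by
  simp only [tens]
  have a0 : Real.sin (π / 3 + wd n (π / 3) 0) = √3 / 2 := by
    simp only [wd, Fin.cons_zero]; rw [← sin_lam_r]; congr 1; ring
  have b0 : Real.sin (π / 3 - wd n (π / 3) 0) = 0 := by
    simp [wd, Fin.cons_zero]
  have a1 : Real.sin (π / 3 + wd n (π / 3) 1) = 0 := by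
    simp [wd, Fin.cons_zero]
  have b1 : Real.sin (π / 3 - wd n (π / 3) 1) = √3 / 2 := by
    simp only [wd, Fin.cons_one, Fin.cons_zero]; rw [← sin_lam_r]; congr 1; ring
  have key : ∀ s₀ s₁ t₀ t₁ : Bool, ell (√3 / 2) 0 (√3 / 2) s₀ t₀ * ell 0 (√3 / 2) (√3 / 2) s₁ t₁ =
      if s₀ ≠ s₁ then ell (√3 / 2) 0 (√3 / 2) true t₀ * ell 0 (√3 / 2) (√3 / 2) false t₁ else 0 := by
    intro s₀ s₁ t₀ t₁
    ext a b
    cases s₀ <;> cases s₁ <;> cases t₀ <;> cases t₁ <;> cases a <;> cases b <;>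
      simp [ell, Matrix.mul_apply]
  simp only [Ar, TT, Matrix.of_apply, P_succ, Fin.cons_zero, Fin.cons_succ, Fin.succ_zero_eq_one, a0, b0, a1, b1,
    ← Matrix.mul_assoc, Fin.cons_one]
  rw [key (σ 0)]
  split_ifs <;> simp

lemma tens_sum {n : ℕ} (φ : (Fin n → Bool) → ℝ) : ∑ τ, tens φ τ = 2 * ∑ ρ, φ ρ := by
  rw [sum_fin_succ]
  simp only [sum_fin_succ (n := n)]
  simp [tens]
  ring

lemma tens_cons {n : ℕ} {R : Type} [Zero R] (φ : (Fin n → Bool) → R) (ρ) :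
    tens φ (Fin.cons true (Fin.cons false ρ)) = φ ρ := by
  simp [tens]

lemma cv_tens {n : ℕ} (φ : (Fin n → Bool) → ℝ) : cv (tens φ) = tens (cv φ) := by
  ext τ; simp only [cv, tens]; split_ifs <;> simp

lemma Lam_end {m : ℕ} {ψ φ} (h : Eig (wd (2 * m) (π / 3)) (m + 1) ψ)
    (hμ : 0 < ∑ σ, (Ar (wd (2 * m) (π / 3))).mulVec ψ σ) (hφ : Eig (0 : Fin (2 * m) → ℝ) m φ) (u : ℂ) :
    Lam (wd (2 * m) (π / 3)) ψ u = Complex.sin u * Complex.sin (u + π / 3) * Lam 0 φ u := by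
  set μ := ∑ σ, (Ar (wd (2 * m) (π / 3))).mulVec ψ σ with hμd
  set x : (Fin (2 * m) → Bool) → ℝ := fun ρ => ψ (Fin.cons true (Fin.cons false ρ)) with hx
  have hψ : ψ = tens x := by
    have he := h.real_eig.1
    rw [← hμd] at he
    funext σ
    have e1 : ∀ σ, ψ σ = μ⁻¹ * (Ar (wd (2 * m) (π / 3))).mulVec ψ σ := by
      intro σ
      rw [he]; simp; field_simp
    rw [e1 σ]
    simp only [tens, hx, e1 (Fin.cons _ _)]
    simp only [Matrix.mulVec, dotProduct]
    simp_rw [Ar_end σ]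
    simp only [tens]
    split_ifs <;> simp
  have hx1 : 2 * ∑ ρ, x ρ = 1 := by rw [← tens_sum, ← hψ]; exact h.sum
  have key : ∀ u, (Complex.sin u * Complex.sin (u + π / 3)) • (T (cv (0 : Fin (2 * m) → ℝ)) u).mulVec (cv x) =
      Lam (wd (2 * m) (π / 3)) ψ u • cv x := by
    intro u
    have e2 := h.eig u
    have e3 : cv ψ = tens (cv x) := by rw [← cv_tens, ← hψ]
    rw [e3, T_fuse] at e2
    funext ρ
    have := congrFun e2 (Fin.cons true (Fin.cons false ρ))
    simpa only [Pi.smul_apply, tens_cons] using this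
  have hx2 : (fun ρ => 2 * x ρ) = φ := by
    have hP := Ar_PFH (n := 2 * m) (w := 0) (k := m) (fun j => by simp [Real.pi_pos]) (by omega)
    refine hP.unique (μ := 4 / 3 * μ) (fun ρ => ?_) (fun ρ hρ => ?_) ?_ ?_ hφ.nonneg hφ.supp hφ.sum hφ.real_eig.1
    · have := h.nonneg (Fin.cons true (Fin.cons false ρ))
      simp only [hx]; linarith
    · simp only [hx]
      rw [h.supp, mul_zero]
      rw [cnt_succ, cnt_succ]
      simp only [Fin.cons_zero, Fin.cons_succ, Bool.toNat_true, Bool.toNat_false]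
      intro hc
      have hc' : 1 + (0 + cnt ρ) = m + 1 := hc
      exact hρ (by omega)
    · rw [← Finset.mul_sum]; exact hx1
    · have k1 := key (π / 3)
      rw [h.real_eig.2, T_real, mulVec_cv, ← hμd] at k1
      have h1 : Complex.sin (π / 3) = ((√3 / 2 : ℝ) : ℂ) := by
        rw [← Real.sin_pi_div_three]; push_cast; rfl
      have h5 : ((√3 / 2 : ℝ) : ℂ) ^ 2 = 3 / 4 := by
        rw [← sin_lam]; exact sin_lam_sq
      rw [show (π / 3 + π / 3 : ℂ) = lam by rw [lam]; ring, sin_lam, h1, ← pow_two, h5] at k1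
      funext ρ
      have k2 := congrFun k1 ρ
      simp only [cv, Pi.smul_apply, smul_eq_mul] at k2
      have k3 : 3 / 4 * (Ar 0).mulVec x ρ = μ * x ρ := by
        have : (((3 / 4 * (Ar 0).mulVec x ρ : ℝ)) : ℂ) = ((μ * x ρ : ℝ) : ℂ) := by
          push_cast; exact k2
        exact_mod_cast this
      rw [show (fun ρ => 2 * x ρ) = (2 : ℝ) • x from rfl, Matrix.mulVec_smul]
      simp only [Pi.smul_apply, smul_eq_mul]
      linarith
  have hx3 : cv x = (1 / 2 : ℂ) • cv φ := by
    funext ρ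
    simp only [← hx2, cv, Pi.smul_apply, smul_eq_mul]
    push_cast; ring
  have k1 := key u
  have hne := hφ.cv_ne_zero
  rw [hx3, Matrix.mulVec_smul, hφ.eig u, smul_smul, smul_smul, smul_smul] at k1
  have := smul_left_injective ℂ hne k1
  linear_combination -2 * this

end

section
lemma P_contDiff {X : Type} [NormedAddCommGroup X] [NormedSpace ℝ X] {n : ℕ}
    (A : X → Fin n → Matrix Bool Bool ℂ) (h : ∀ j α β, ContDiff ℝ 1 fun x => A x j α β) (α β : Bool) :
    ContDiff ℝ 1 fun x => P n (A x) α β := by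
  induction n generalizing α β with
  | zero => simp only [P, Matrix.one_apply]; split_ifs <;> fun_prop
  | succ n ih =>
    simp only [P_succ, Matrix.mul_apply]
    refine ContDiff.sum fun γ _ => (h 0 α γ).mul (ih (fun x i => A x i.succ) (fun j => h j.succ) γ β)

/-- the eigenvalue as a function of all parameters -/
def FF (n : ℕ) (x : (ℝ × ((Fin (n + 2) → Bool) → ℝ)) × ℂ) : ℂ := Lam (wd n x.1.1) x.1.2 x.2

lemma FF_contDiff (n : ℕ) : ContDiff ℝ 1 (FF n) := by
  have hs : ContDiff ℝ 1 Complex.sin := Complex.contDiff_sin.restrict_scalars ℝ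
  have ho : ContDiff ℝ 1 (fun x : ℝ => (x : ℂ)) := Complex.ofRealCLM.contDiff
  have hw : ∀ j, ContDiff ℝ 1 fun x : (ℝ × ((Fin (n + 2) → Bool) → ℝ)) × ℂ => x.2 - cv (wd n x.1.1) j := by
    intro j
    refine contDiff_snd.sub ?_
    simp only [cv]
    refine ho.comp ?_
    refine Fin.cases ?_ (fun i => ?_) j
    · simp only [wd, Fin.cons_zero]; fun_prop
    · refine Fin.cases ?_ (fun i => ?_) i
      · simp only [wd, Fin.cons_zero, Fin.cons_succ]; fun_prop
      · simp only [wd, Fin.cons_succ, Pi.zero_apply]; fun_prop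
  unfold FF Lam
  simp only [Matrix.mulVec, dotProduct]
  refine ContDiff.sum fun σ _ => ContDiff.sum fun τ _ => ContDiff.mul ?_ ?_
  · simp only [T, TT, Matrix.of_apply, Matrix.trace, Matrix.diag_apply]
    refine ContDiff.sum fun α _ => P_contDiff _ (fun j α β => ?_) _ _
    simp only [LL, ell, Matrix.of_apply]
    split_ifs
    · exact hs.comp (contDiff_const.sub (hw j))
    · exact hs.comp (hw j)
    · exact contDiff_const
    · exact contDiff_const
    · exact contDiff_const
  · simp only [cv]
    exact ho.comp (by fun_prop)

lemma FF_continuous (n : ℕ) : Continuous (FF n) := (FF_contDiff n).continuous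

lemma Lam_diff {n : ℕ} (w : Fin n → ℝ) (ψ : (Fin n → Bool) → ℝ) : Differentiable ℂ (Lam w ψ) := by
  have hP : ∀ (n : ℕ) (A : ℂ → Fin n → Matrix Bool Bool ℂ) (h : ∀ j α β, Differentiable ℂ fun x => A x j α β)
     (α β : Bool), Differentiable ℂ fun x => P n (A x) α β := by
    intro n
    induction n with
    | zero => intro A h α β; simp only [P, Matrix.one_apply]; split_ifs <;> fun_prop
    | succ n ih =>
      intro A h α β
      simp only [P_succ, Matrix.mul_apply]
      exact Differentiable.fun_sum fun γ _ => (h 0 α γ).mul (ih (fun x i => A x i.succ) (fun j => h j.succ) γ β)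
  unfold Lam
  simp only [Matrix.mulVec, dotProduct]
  refine Differentiable.fun_sum fun σ _ => Differentiable.fun_sum fun τ _ => Differentiable.mul_const ?_ _
  simp only [T, TT, Matrix.of_apply, Matrix.trace, Matrix.diag_apply]
  refine Differentiable.fun_sum fun α _ => hP _ _ (fun j α β => ?_) _ _
  simp only [LL, ell, Matrix.of_apply]
  split_ifs <;> fun_prop

/-- rescaled eigenvalue -/
def Lh {n : ℕ} (w : Fin n → ℝ) (ψ : (Fin n → Bool) → ℝ) (η : ℂ) : ℂ :=
  ∑ σ, (TT fun j => ell ((Complex.exp (Complex.I * (lam + cv w j)) - η ^ 2 * Complex.exp (-(Complex.I * (lam + cv w j))))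
    / (2 * Complex.I)) ((η ^ 2 * Complex.exp (-(Complex.I * cv w j)) - Complex.exp (Complex.I * cv w j)) / (2 * Complex.I))
    (η * Complex.sin lam)).mulVec (cv ψ) σ

lemma sin_exp (z : ℂ) : Complex.sin z = (Complex.exp (Complex.I * z) - Complex.exp (-(Complex.I * z))) / (2 * Complex.I) := by
  have hI := Complex.I_sq
  have := Complex.I_ne_zero
  rw [Complex.sin]
  field_simp
  rw [hI]; ring_nf

lemma Lh_eq {n : ℕ} (w : Fin n → ℝ) (ψ : (Fin n → Bool) → ℝ) (u : ℂ) :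
    Lh w ψ (Complex.exp (Complex.I * u)) = Complex.exp (Complex.I * u) ^ n * Lam w ψ u := by
  have h := TT_smul (fun _ : Fin n => Complex.exp (Complex.I * u)) (fun j => LL (u - cv w j))
  have e : TT (fun j s t => Complex.exp (Complex.I * u) • LL (u - cv w j) s t) =
    TT fun j => ell ((Complex.exp (Complex.I * (lam + cv w j)) - Complex.exp (Complex.I * u) ^ 2 * Complex.exp (-(Complex.I * (lam + cv w j))))
    / (2 * Complex.I)) ((Complex.exp (Complex.I * u) ^ 2 * Complex.exp (-(Complex.I * cv w j)) - Complex.exp (Complex.I * cv w j)) / (2 * Complex.I))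
    (Complex.exp (Complex.I * u) * Complex.sin lam) := by
    congr 1
    funext j s t
    have e1 : Complex.exp (Complex.I * u) * Complex.sin (lam - (u - cv w j)) = (Complex.exp (Complex.I * (lam + cv w j)) - Complex.exp (Complex.I * u) ^ 2 * Complex.exp (-(Complex.I * (lam + cv w j))))
    / (2 * Complex.I) := by
      rw [sin_exp, mul_div_assoc', mul_sub]
      congr 2
      · simp only [sq, ← Complex.exp_add]; congr 1; ring
      · simp only [sq, ← Complex.exp_add]; congr 1; ring
    have e2 : Complex.exp (Complex.I * u) * Complex.sin (u - cv w j) = (Complex.exp (Complex.I * u) ^ 2 * Complex.exp (-(Complex.I * cv w j)) - Complex.exp (Complex.I * cv w j)) / (2 * Complex.I) := by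
      rw [sin_exp, mul_div_assoc', mul_sub]
      congr 2
      · simp only [sq, ← Complex.exp_add]; congr 1; ring
      · simp only [sq, ← Complex.exp_add]; congr 1; ring
    rw [← e1, ← e2]
    ext α β
    simp only [LL, ell, Matrix.of_apply, Matrix.smul_apply, smul_eq_mul]
    split_ifs <;> simp
  rw [Lh, ← e, h]
  simp only [Finset.prod_const, Finset.card_univ, Fintype.card_fin, Matrix.smul_mulVec, Pi.smul_apply, smul_eq_mul,
    ← Finset.mul_sum]
  rfl

lemma TT_diag0 {n m : ℕ} (hn : n = 2 * m) (x y : ℂ) (q : Fin n → ℂ) (σ τ : Fin n → Bool) (hσ : cnt τ = m) :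
    TT (fun j => ell (x * q j) (y * q j) 0) σ τ = if σ = τ then 2 * (x ^ m * y ^ m) * ∏ j, q j else 0 := by
  have h1 : ∀ j, ell (x * q j) (y * q j) 0 (σ j) (τ j) = Matrix.diagonal
      (fun a => if σ j = τ j then (if a = σ j then x * q j else y * q j) else 0) := by
    intro j
    ext a b
    simp only [ell, Matrix.of_apply, Matrix.diagonal_apply]
    by_cases h : a = b <;> by_cases h' : σ j = τ j <;> simp [h, h']
  simp only [TT, Matrix.of_apply, h1, P_diag, Matrix.trace_diagonal, Fintype.sum_bool]
  have gen : ∀ (σ : Fin n → Bool), cnt σ = m → ∏ j, (if σ j = true then x * q j else y * q j) = x ^ m * y ^ m * ∏ j, q j := by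
    intro σ hσ
    have : ∀ j, (if σ j = true then x * q j else y * q j) = (if σ j = true then x else y) * q j := by
      intro j; split_ifs <;> ring
    simp only [this, Finset.prod_mul_distrib]
    congr 1
    rw [Finset.prod_ite]
    have h2 := cnt_not σ
    have h3 : (Finset.univ.filter fun j => ¬ σ j = true).card = m := by
      have : cnt (fun j => !σ j) = (Finset.univ.filter fun j => ¬ σ j = true).card := by
        simp [cnt]
      omega
    simp only [Finset.prod_const, h3]
    rw [show (Finset.univ.filter fun j => σ j = true).card = m from hσ]
  split_ifs with h
  · subst h
    simp only [if_true]
    have e1 := gen σ hσ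
    have e2 := gen (fun j => !σ j) (by have := cnt_not σ; omega)
    have f1 : ∀ j, (if true = σ j then x * q j else y * q j) = (if σ j = true then x * q j else y * q j) := by
      intro j; simp only [eq_comm]
    have f2 : ∀ j, (if false = σ j then x * q j else y * q j) = (if (!σ j) = true then x * q j else y * q j) := by
      intro j; cases σ j <;> simp
    simp only [f1, f2, e1, e2]; ring
  · obtain ⟨j, hj⟩ := Function.ne_iff.1 h
    have z : ∀ a, (∏ j, if σ j = τ j then (if a = σ j then x * q j else y * q j) else 0) = 0 := fun a =>
      Finset.prod_eq_zero (Finset.mem_univ j) (by simp [hj])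
    rw [z, z, add_zero]

lemma Lh_zero {n m : ℕ} (hn : n = 2 * m) {w : Fin n → ℝ} {ψ : (Fin n → Bool) → ℝ} (h : Eig w m ψ) : Lh w ψ 0 ≠ 0 := by
  have e : (fun j : Fin n => ell ((Complex.exp (Complex.I * (lam + cv w j)) - 0 ^ 2 * Complex.exp (-(Complex.I * (lam + cv w j))))
    / (2 * Complex.I)) ((0 ^ 2 * Complex.exp (-(Complex.I * cv w j)) - Complex.exp (Complex.I * cv w j)) / (2 * Complex.I))
    (0 * Complex.sin lam)) = fun j => ell (Complex.exp (Complex.I * lam) * (Complex.exp (Complex.I * cv w j) / (2 * Complex.I)))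
      (-1 * (Complex.exp (Complex.I * cv w j) / (2 * Complex.I))) 0 := by
    funext j
    congr 1
    · rw [mul_add, Complex.exp_add]; ring
    · ring
    · ring
  have e2 : Lh w ψ 0 = ∑ σ, 2 * (Complex.exp (Complex.I * lam) ^ m * (-1) ^ m) *
      (∏ j, Complex.exp (Complex.I * cv w j) / (2 * Complex.I)) * cv ψ σ := by
    rw [Lh, e]
    refine Finset.sum_congr rfl fun σ _ => ?_
    rw [Matrix.mulVec, dotProduct]
    have : ∀ τ, TT (fun j => ell (Complex.exp (Complex.I * lam) * (Complex.exp (Complex.I * cv w j) / (2 * Complex.I)))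
      (-1 * (Complex.exp (Complex.I * cv w j) / (2 * Complex.I))) 0) σ τ * cv ψ τ = if σ = τ then 2 * (Complex.exp (Complex.I * lam) ^ m * (-1) ^ m) *
      (∏ j, Complex.exp (Complex.I * cv w j) / (2 * Complex.I)) * cv ψ τ else 0 := by
      intro τ
      by_cases hτ : cnt τ = m
      · rw [TT_diag0 hn _ _ _ _ _ hτ]; split_ifs <;> simp
      · simp [cv, h.supp τ hτ]
    simp only [this, Finset.sum_ite_eq, Finset.mem_univ, if_true]
  rw [e2, ← Finset.mul_sum]
  have : ∑ σ, cv ψ σ = 1 := by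
    have := h.sum
    simp only [cv, ← Complex.ofReal_sum, this, Complex.ofReal_one]
  rw [this, mul_one]
  refine mul_ne_zero (mul_ne_zero two_ne_zero (mul_ne_zero (pow_ne_zero _ (Complex.exp_ne_zero _)) (pow_ne_zero _ (by norm_num)))) ?_
  exact Finset.prod_ne_zero_iff.2 fun j _ => div_ne_zero (Complex.exp_ne_zero _) (mul_ne_zero two_ne_zero Complex.I_ne_zero)

lemma Lh_continuous {X : Type} [TopologicalSpace X] {n : ℕ} {w : X → Fin n → ℝ} {ψ : X → (Fin n → Bool) → ℝ} {η : X → ℂ}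
    (hw : Continuous w) (hψ : Continuous ψ) (hη : Continuous η) : Continuous fun x => Lh (w x) (ψ x) (η x) := by
  unfold Lh
  simp only [Matrix.mulVec, dotProduct]
  refine continuous_finsetSum _ fun σ _ => continuous_finsetSum _ fun τ _ => Continuous.mul ?_ ?_
  · simp only [TT, Matrix.of_apply]
    refine Continuous.matrix_trace (P_continuous _ fun j => ?_)
    have h1 : Continuous fun x => cv (w x) j := Complex.continuous_ofReal.comp ((continuous_apply j).comp hw)
    exact ell_continuous (by fun_prop) (by fun_prop) (by fun_prop) _ _
  · exact Complex.continuous_ofReal.comp ((continuous_apply τ).comp hψ)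

end

section
/-- compact parameter set -/
def KK (m : ℕ) : Set (ℝ × ((Fin (2 * m + 2) → Bool) → ℝ)) :=
  {x | x.1 ∈ Set.Icc 0 (π / 3) ∧ Eig (wd (2 * m) x.1) (m + 1) x.2 ∧
    (√3 / 2) ^ (2 * m + 2) ≤ (FF (2 * m) (x, π / 3)).re}

lemma wd_continuous (n : ℕ) : Continuous (wd n) := by
  refine continuous_pi fun j => ?_
  refine Fin.cases ?_ (fun i => ?_) j
  · simp only [wd, Fin.cons_zero]; fun_prop
  · refine Fin.cases ?_ (fun i => ?_) i
    · simp only [wd, Fin.cons_zero, Fin.cons_succ]; fun_prop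
    · simp only [wd, Fin.cons_succ, Pi.zero_apply]; fun_prop

lemma cv_continuous {ι : Type} : Continuous (cv : (ι → ℝ) → (ι → ℂ)) :=
  continuous_pi fun j => Complex.continuous_ofReal.comp (continuous_apply j)

lemma KK_closed (m : ℕ) : IsClosed (KK m) := by
  have e : KK m = ({x | x.1 ∈ Set.Icc 0 (π / 3)} ∩ ((⋂ σ, {x | 0 ≤ x.2 σ}) ∩ ((⋂ σ, {x | cnt σ ≠ m + 1 → x.2 σ = 0}) ∩
      ({x | ∑ σ, x.2 σ = 1} ∩ (⋂ u : ℂ, {x | (T (cv (wd (2 * m) x.1)) u).mulVec (cv x.2) =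
        FF (2 * m) (x, u) • cv x.2}))))) ∩ {x | (√3 / 2) ^ (2 * m + 2) ≤ (FF (2 * m) (x, π / 3)).re} := by
    ext x
    simp only [KK, Set.mem_inter_iff, Set.mem_iInter, Set.mem_ofPred_eq]
    constructor
    · rintro ⟨h1, ⟨h2, h3, h4, h5⟩, h6⟩
      exact ⟨⟨h1, h2, h3, h4, h5⟩, h6⟩
    · rintro ⟨⟨h1, h2, h3, h4, h5⟩, h6⟩
      exact ⟨h1, ⟨h2, h3, h4, h5⟩, h6⟩
  rw [e]
  have hF := FF_continuous (2 * m)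
  refine IsClosed.inter (IsClosed.inter (isClosed_Icc.preimage continuous_fst) (IsClosed.inter ?_ (IsClosed.inter ?_ (IsClosed.inter ?_ ?_)))) ?_
  · exact isClosed_iInter fun σ => isClosed_le continuous_const (by fun_prop)
  · refine isClosed_iInter fun σ => ?_
    by_cases h : cnt σ ≠ m + 1
    · have : {x : ℝ × ((Fin (2 * m + 2) → Bool) → ℝ) | cnt σ ≠ m + 1 → x.2 σ = 0} = {x | x.2 σ = 0} := by
        ext x; simp [h]
      rw [this]
      exact isClosed_eq (by fun_prop) continuous_const
    · have : {x : ℝ × ((Fin (2 * m + 2) → Bool) → ℝ) | cnt σ ≠ m + 1 → x.2 σ = 0} = Set.univ := by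
        ext x; simp [h]
      rw [this]; exact isClosed_univ
  · exact isClosed_eq (by fun_prop) continuous_const
  · refine isClosed_iInter fun u => isClosed_eq ?_ ?_
    · exact (T_continuous (cv_continuous.comp ((wd_continuous _).comp continuous_fst)) continuous_const).matrix_mulVec
        (cv_continuous.comp continuous_snd)
    · exact (hF.comp (by fun_prop)).smul (cv_continuous.comp continuous_snd)
  · exact isClosed_le continuous_const (Complex.continuous_re.comp (hF.comp (by fun_prop)))

lemma KK_compact (m : ℕ) : IsCompact (KK m) := by
  refine IsCompact.of_isClosed_subset ((isCompact_Icc (a := (0 : ℝ)) (b := π / 3)).prod (isCompact_Icc (a := (0 : (Fin (2 * m + 2) → Bool) → ℝ)) (b := 1)))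
    (KK_closed m) ?_
  rintro ⟨d, ψ⟩ ⟨h1, h2, h3⟩
  refine ⟨h1, fun σ => h2.nonneg σ, fun σ => ?_⟩
  have := Finset.single_le_sum (f := ψ) (fun τ _ => h2.nonneg τ) (Finset.mem_univ σ)
  rw [h2.sum] at this
  exact this

lemma KK_mem {m : ℕ} {d : ℝ} (h0 : 0 ≤ d) (h1 : d < π / 3) {ψ} (h : Eig (wd (2 * m) d) (m + 1) ψ) : (d, ψ) ∈ KK m := by
  refine ⟨⟨h0, h1.le⟩, h, ?_⟩
  simp only [FF]
  rw [h.real_eig.2, Complex.ofReal_re]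
  exact Lam_center_ge h0 h1 h

lemma norm_expI (u : ℂ) : ‖Complex.exp (Complex.I * u)‖ = Real.exp (-u.im) := by
  rw [Complex.norm_exp]; simp

lemma Lam_growth {n : ℕ} (w : Fin n → ℝ) (ψ : (Fin n → Bool) → ℝ) :
    ∃ C, ∀ u, ‖Lam w ψ u‖ ≤ C * Real.exp (n * |u.im|) := by
  have hc : Continuous fun η => Lh w ψ η := Lh_continuous continuous_const continuous_const continuous_id
  obtain ⟨C, hC⟩ := (isCompact_closedBall (0 : ℂ) 1).exists_bound_of_continuousOn hc.continuousOn
  have key : ∀ u : ℂ, 0 ≤ u.im → ‖Lam w ψ u‖ ≤ C * Real.exp (n * |u.im|) := by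
    intro u hu
    have h1 := hC (Complex.exp (Complex.I * u)) (by
      rw [mem_closedBall_zero_iff, norm_expI]; exact Real.exp_le_one_iff.2 (by linarith))
    rw [Lh_eq, norm_mul, norm_pow, norm_expI, ← Real.exp_nat_mul] at h1
    rw [abs_of_nonneg hu]
    have h2 : Real.exp (n * -u.im) * Real.exp (n * u.im) = 1 := by
      rw [← Real.exp_add]; simp
    calc ‖Lam w ψ u‖ = (Real.exp (n * -u.im) * ‖Lam w ψ u‖) * Real.exp (n * u.im) := by
          rw [mul_right_comm, h2, one_mul]
      _ ≤ _ := by gcongr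
  refine ⟨C, fun u => ?_⟩
  rcases le_total 0 u.im with h | h
  · exact key u h
  · have := key (starRingEnd ℂ u) (by simp [h])
    rw [Lam_conj] at this
    simpa using this

lemma Lam_tail (m : ℕ) : ∃ V c : ℝ, 0 < c ∧ ∀ x ∈ KK m, ∀ u : ℂ, V ≤ |u.im| → c ≤ ‖FF (2 * m) (x, u)‖ := by
  let G : (ℝ × ((Fin (2 * m + 2) → Bool) → ℝ)) × ℂ → ℂ := fun y => Lh (wd (2 * m) y.1.1) y.1.2 y.2
  have hc : Continuous G := Lh_continuous ((wd_continuous _).comp (by fun_prop)) (by fun_prop) (by fun_prop)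
  have hopen : IsOpen {y | G y ≠ 0} := isOpen_ne_fun hc continuous_const
  obtain ⟨U, W', hU, hW, hKU, h0W, hUW⟩ := generalized_tube_lemma (KK_compact m) (isCompact_singleton (x := (0 : ℂ))) hopen (by
    rintro ⟨x, η⟩ ⟨hx, hη⟩
    obtain rfl : η = 0 := hη
    exact Lh_zero (by ring) hx.2.1)
  obtain ⟨δ, hδ, hball⟩ := Metric.isOpen_iff.1 hW 0 (h0W rfl)
  set r := min (δ / 2) 1 with hr
  have hr0 : 0 < r := by positivity
  have hcomp : IsCompact (KK m ×ˢ Metric.closedBall (0 : ℂ) r) := (KK_compact m).prod (isCompact_closedBall _ _)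
  have hpos : ∀ y ∈ KK m ×ˢ Metric.closedBall (0 : ℂ) r, 0 < ‖G y‖ := by
    rintro ⟨x, η⟩ ⟨hx, hη⟩
    refine norm_pos_iff.2 (hUW ⟨hKU hx, hball ?_⟩)
    simp only at hη
    rw [mem_closedBall_zero_iff] at hη
    rw [mem_ball_zero_iff]
    have := min_le_left (δ / 2) 1
    linarith
  obtain ⟨c, hc0, hcl⟩ : ∃ c, 0 < c ∧ ∀ y ∈ KK m ×ˢ Metric.closedBall (0 : ℂ) r, c ≤ ‖G y‖ := by
    rcases (KK m ×ˢ Metric.closedBall (0 : ℂ) r).eq_empty_or_nonempty with h | h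
    · exact ⟨1, one_pos, by simp [h]⟩
    · obtain ⟨y, hy, hmin⟩ := hcomp.exists_isMinOn h hc.norm.continuousOn
      exact ⟨‖G y‖, hpos y hy, fun z hz => hmin hz⟩
  have key : ∀ x ∈ KK m, ∀ u : ℂ, -Real.log r ≤ u.im → c ≤ ‖FF (2 * m) (x, u)‖ := by
    intro x hx u hu
    have hn : Real.exp (-u.im) ≤ r := by
      rw [← Real.le_log_iff_exp_le hr0]; linarith
    have h1 := hcl (x, Complex.exp (Complex.I * u)) ⟨hx, by
      simp only; rw [mem_closedBall_zero_iff, norm_expI]; exact hn⟩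
    simp only [G] at h1
    rw [Lh_eq, norm_mul, norm_pow, norm_expI] at h1
    refine h1.trans (mul_le_of_le_one_left (norm_nonneg _) (pow_le_one₀ (Real.exp_pos _).le (hn.trans (min_le_right _ _))))
  refine ⟨-Real.log r, c, hc0, fun x hx u hu => ?_⟩
  rcases le_total 0 u.im with h | h
  · rw [abs_of_nonneg h] at hu
    exact key x hx u hu
  · rw [abs_of_nonpos h] at hu
    have := key x hx (starRingEnd ℂ u) (by simpa using hu)
    simp only [FF] at this ⊢
    rw [Lam_conj] at this
    simpa using this

end

section
/-- the closed strip -/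
def Strip : Set ℂ := {u | 0 ≤ u.re ∧ u.re ≤ 2 * π / 3}

lemma lam_re : lam.re = 2 * π / 3 := by rw [lam_eq, Complex.ofReal_re]
lemma lam_im : lam.im = 0 := by rw [lam_eq, Complex.ofReal_im]

lemma PL {g h : ℂ → ℂ} (hg : Differentiable ℂ g) (hh : Differentiable ℂ h) (hne : ∀ u ∈ Strip, h u ≠ 0)
    (hc : ∃ V c : ℝ, 0 < c ∧ ∀ u ∈ Strip, V ≤ |u.im| → c ≤ ‖h u‖)
    (hgr : ∃ C B : ℝ, ∀ u ∈ Strip, ‖g u‖ ≤ C * Real.exp (B * |u.im|))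
    (hb : ∀ v : ℝ, ‖g (v * Complex.I)‖ ≤ ‖h (v * Complex.I)‖)
    (hb' : ∀ v : ℝ, ‖g (lam - v * Complex.I)‖ ≤ ‖h (lam - v * Complex.I)‖) {u : ℂ} (hu : u ∈ Strip) :
    ‖g u‖ ≤ ‖h u‖ := by
  obtain ⟨V, c, hc0, hc⟩ := hc
  obtain ⟨C, B, hgr⟩ := hgr
  have hp := Real.pi_pos
  have hS : ∀ u : ℂ, u ∈ Complex.re ⁻¹' Set.Ioo 0 (2 * π / 3) → u ∈ Strip := fun u hu => ⟨hu.1.le, hu.2.le⟩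
  have hcl : closure (Complex.re ⁻¹' Set.Ioo 0 (2 * π / 3)) = Strip := by
    rw [Complex.closure_preimage_re, closure_Ioo (by positivity)]
    rfl
  have key : ‖g u / h u‖ ≤ 1 := by
    refine PhragmenLindelof.vertical_strip (f := fun u => g u / h u) (a := 0) (b := 2 * π / 3) ?_ ?_ ?_ ?_ hu.1 hu.2
    · refine ⟨fun x hx => ?_, fun x hx => ?_⟩
      · exact ((hg x).div (hh x) (hne x (hS x hx))).differentiableWithinAt
      · rw [hcl] at hx
        exact ((hg x).continuousAt.div (hh x).continuousAt (hne x hx)).continuousWithinAt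
    · refine ⟨1, ?_, |B|, ?_⟩
      · rw [lt_div_iff₀] <;> linarith
      · refine Asymptotics.IsBigO.of_bound (|C| / c) ?_
        rw [Filter.eventually_inf_principal, Filter.eventually_comap]
        filter_upwards [Filter.eventually_ge_atTop V] with y hy u huy hus
        have hVu : V ≤ |u.im| := by rw [show |u.im| = y from huy]; exact hy
        rw [norm_div, Real.norm_of_nonneg (Real.exp_pos _).le, div_mul_eq_mul_div]
        refine div_le_div₀ (by positivity) ?_ hc0 (hc u (hS u hus) hVu)
        refine (hgr u (hS u hus)).trans ?_
        gcongr
        · exact le_abs_self C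
        · exact le_abs_self B
        · rw [one_mul]
          have := Real.add_one_le_exp |u.im|
          linarith
    · intro z hz
      have e : z = z.im * Complex.I := by apply Complex.ext <;> simp [hz]
      have := hb z.im
      rw [← e] at this
      rw [norm_div]
      exact div_le_one_of_le₀ this (norm_nonneg _)
    · intro z hz
      have e : z = lam - ((-z.im : ℝ) : ℂ) * Complex.I := by
        apply Complex.ext <;> simp [hz, lam_re, lam_im]
      have := hb' (-z.im)
      rw [← e] at this
      rw [norm_div]
      exact div_le_one_of_le₀ this (norm_nonneg _)
  have hpos := norm_pos_iff.2 (hne u hu)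
  rw [norm_div, div_le_one hpos] at key
  exact key

lemma norm_sin_sq (z : ℂ) : ‖Complex.sin z‖ ^ 2 = Real.sin z.re ^ 2 + Real.sinh z.im ^ 2 := by
  have hz : Complex.sin z = ((Real.sin z.re * Real.cosh z.im : ℝ) : ℂ) + ((Real.cos z.re * Real.sinh z.im : ℝ) : ℂ) * Complex.I := by
    rw [Complex.sin_eq]; push_cast; ring
  rw [← Complex.normSq_eq_norm_sq, hz, Complex.normSq_add_mul_I]
  have h1 := Real.sin_sq_add_cos_sq z.re
  have h2 := Real.cosh_sq z.im
  grind

lemma bd_real {A s : ℂ} {B σ ε : ℝ} (hε : ε ^ 2 = 1)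
    (h : A * starRingEnd ℂ A * B = s * starRingEnd ℂ s * B + (ε * σ) * starRingEnd ℂ s * A + (ε * σ) * s * starRingEnd ℂ A
      + 2 * ε * (ε * σ * s * starRingEnd ℂ s)) :
    (‖A‖ ^ 2 - ‖s‖ ^ 2) * B = 2 * σ * (ε * (A * starRingEnd ℂ s).re + ‖s‖ ^ 2) := by
  have := congrArg Complex.re h
  rw [← Complex.normSq_eq_norm_sq, ← Complex.normSq_eq_norm_sq, Complex.normSq_apply, Complex.normSq_apply]
  simp at this ⊢
  grind

lemma re_le_aux (A s : ℂ) {ε : ℝ} (hε : ε ^ 2 = 1) : |ε * (A * starRingEnd ℂ s).re| ≤ ‖A‖ * ‖s‖ := by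
  have h1 : |ε| = 1 := by rw [← sq_eq_sq₀ (abs_nonneg _) (by norm_num), sq_abs, hε]; norm_num
  rw [abs_mul, h1, one_mul]
  refine (Complex.abs_re_le_norm _).trans ?_
  simp

lemma bd_ge {A s : ℂ} {B σ ε : ℝ} (hε : ε ^ 2 = 1) (hσ : 0 ≤ σ) (hB : 0 < B)
    (h : (‖A‖ ^ 2 - ‖s‖ ^ 2) * B = 2 * σ * (ε * (A * starRingEnd ℂ s).re + ‖s‖ ^ 2)) : ‖s‖ ≤ ‖A‖ := by
  by_contra hc
  push Not at hc
  have h1 := re_le_aux A s hε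
  have h2 := norm_nonneg A
  have h3 : ‖A‖ * ‖s‖ ≤ ‖s‖ ^ 2 := by nlinarith
  have h4 := neg_abs_le (ε * (A * starRingEnd ℂ s).re)
  have h5 : 0 ≤ 2 * σ * (ε * (A * starRingEnd ℂ s).re + ‖s‖ ^ 2) := mul_nonneg (by linarith) (by linarith)
  have h6 : ‖A‖ ^ 2 - ‖s‖ ^ 2 < 0 := by nlinarith
  have := mul_neg_of_neg_of_pos h6 hB
  linarith

lemma bd_le {A s : ℂ} {B σ ε : ℝ} (hε : ε ^ 2 = 1) (hσ : 0 ≤ σ) (hB : 0 < B) (hBσ : σ ≤ B)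
    (h : (‖A‖ ^ 2 - ‖s‖ ^ 2) * B = 2 * σ * (ε * (A * starRingEnd ℂ s).re + ‖s‖ ^ 2)) : ‖A‖ ≤ 3 * ‖s‖ := by
  by_contra hc
  push Not at hc
  have h1 := re_le_aux A s hε
  have h2 := norm_nonneg s
  have h4 := le_abs_self (ε * (A * starRingEnd ℂ s).re)
  have h5 : (‖A‖ - ‖s‖) * B * (‖A‖ + ‖s‖) ≤ 2 * σ * ‖s‖ * (‖A‖ + ‖s‖) := by
    have : 2 * σ * (ε * (A * starRingEnd ℂ s).re + ‖s‖ ^ 2) ≤ 2 * σ * (‖A‖ * ‖s‖ + ‖s‖ ^ 2) := by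
      exact mul_le_mul_of_nonneg_left (by linarith) (by linarith)
    nlinarith
  have h6 := le_of_mul_le_mul_right h5 (by linarith)
  have h7 : 2 * σ * ‖s‖ ≤ 2 * B * ‖s‖ := by gcongr
  nlinarith

end

section
lemma sp_wd (n : ℕ) (d : ℝ) (u : ℂ) : sp (cv (wd n d)) u = Complex.sin (u - d) * Complex.sin (u + d) * Complex.sin u ^ n := by
  rw [sp, Fin.prod_univ_succ, Fin.prod_univ_succ]
  simp [cv, wd]
  ring

lemma sp_conj (n : ℕ) (d : ℝ) (u : ℂ) : sp (cv (wd n d)) (starRingEnd ℂ u) = starRingEnd ℂ (sp (cv (wd n d)) u) := by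
  rw [sp_wd, sp_wd]
  simp only [map_mul, map_pow, ← Complex.sin_conj, map_sub, map_add, Complex.conj_ofReal]

lemma sp_neg (m : ℕ) (d : ℝ) (u : ℂ) : sp (cv (wd (2 * m) d)) (-u) = sp (cv (wd (2 * m) d)) u := by
  rw [sp_wd, sp_wd, show -u - d = -(u + d) by ring, show -u + d = -(u - d) by ring, Complex.sin_neg, Complex.sin_neg, Complex.sin_neg,
    pow_mul, pow_mul]
  ring

/-- σ -/
def sg (m : ℕ) (d v : ℝ) : ℝ := (Real.sinh v ^ 2 + Real.sin d ^ 2) * (Real.sinh v ^ 2) ^ m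

lemma sg_nonneg (m : ℕ) (d v : ℝ) : 0 ≤ sg m d v := by unfold sg; positivity

lemma sp_axis (m : ℕ) (d v : ℝ) : sp (cv (wd (2 * m) d)) (v * Complex.I) = (((-1) ^ (m + 1) * sg m d v : ℝ) : ℂ) := by
  rw [sp_wd, Complex.sin_sub, Complex.sin_add, Complex.sin_mul_I, Complex.cos_mul_I]
  rw [← Complex.ofReal_sin, ← Complex.ofReal_cos, ← Complex.ofReal_sinh, ← Complex.ofReal_cosh, pow_mul]
  have h1 : Real.sin d ^ 2 + Real.cos d ^ 2 = 1 := Real.sin_sq_add_cos_sq d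
  have h2 := Real.cosh_sq v
  have hI := Complex.I_sq
  rw [mul_pow, hI, sg, mul_pow]
  have e : ((Real.sinh v : ℂ) * Complex.I * (Real.cos d : ℂ) - (Real.cosh v : ℂ) * (Real.sin d : ℂ)) * ((Real.sinh v : ℂ) * Complex.I * (Real.cos d : ℂ) + (Real.cosh v : ℂ) * (Real.sin d : ℂ)) = ((-(Real.sinh v ^ 2 + Real.sin d ^ 2) : ℝ) : ℂ) := by
    have : ((Real.sinh v : ℂ) * Complex.I * (Real.cos d : ℂ) - (Real.cosh v : ℂ) * (Real.sin d : ℂ)) * ((Real.sinh v : ℂ) * Complex.I * (Real.cos d : ℂ) + (Real.cosh v : ℂ) * (Real.sin d : ℂ)) = ((Real.sinh v ^ 2 * (-1) * Real.cos d ^ 2 - Real.cosh v ^ 2 * Real.sin d ^ 2 : ℝ) : ℂ) := by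
      push_cast
      rw [← hI]; ring
    rw [this, h2]
    congr 1
    grind
  rw [e]
  simp only [Complex.ofReal_mul, Complex.ofReal_pow, Complex.ofReal_neg, Complex.ofReal_one, Complex.ofReal_add]
  ring

section bd
variable {m : ℕ} {d : ℝ} {ψ : (Fin (2 * m + 2) → Bool) → ℝ}

lemma conj_axis (v : ℝ) : starRingEnd ℂ ((v : ℂ) * Complex.I) = -(v * Complex.I) := by simp

lemma bd_far (h0 : 0 ≤ d) (h1 : d < π / 3) (h : Eig (wd (2 * m) d) (m + 1) ψ) (v : ℝ) :
    Lam (wd (2 * m) d) ψ (v * Complex.I + lam) = starRingEnd ℂ (Lam (wd (2 * m) d) ψ (v * Complex.I)) := by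
  rw [← Lam_conj, conj_axis, ← Lam_mirror h0 h1 h]
  congr 1; ring

lemma bd_mid (v : ℝ) :
    Lam (wd (2 * m) d) ψ (v * Complex.I - lam) = Lam (wd (2 * m) d) ψ (π / 3 + v * Complex.I) := by
  rw [← Lam_period (n := 2 * m + 2) ⟨m + 1, by ring⟩]
  congr 1; rw [lam]; ring

lemma Lam_mid_real (h0 : 0 ≤ d) (h1 : d < π / 3) (h : Eig (wd (2 * m) d) (m + 1) ψ) (v : ℝ) :
    Lam (wd (2 * m) d) ψ (π / 3 + v * Complex.I) = ((Lam (wd (2 * m) d) ψ (π / 3 + v * Complex.I)).re : ℂ) := by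
  symm
  rw [← Complex.conj_eq_iff_re, ← Lam_conj, ← Lam_mirror h0 h1 h]
  congr 1
  have e3 : starRingEnd ℂ ((π : ℂ) / 3) = π / 3 := by
    rw [show (π : ℂ) / 3 = ((π / 3 : ℝ) : ℂ) by push_cast; rfl, Complex.conj_ofReal]
  rw [map_add, conj_axis, e3, lam]; ring

lemma Lam_zero_real (w : Fin (2 * m + 2) → ℝ) : Lam w ψ 0 = ((Lam w ψ 0).re : ℂ) := by
  symm
  rw [← Complex.conj_eq_iff_re, ← Lam_conj, map_zero]

lemma bd_main (h0 : 0 ≤ d) (h1 : d < π / 3) (h : Eig (wd (2 * m) d) (m + 1) ψ) (v : ℝ) :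
    (‖Lam (wd (2 * m) d) ψ (v * Complex.I)‖ ^ 2 - ‖sp (cv (wd (2 * m) d)) (v * Complex.I + lam)‖ ^ 2) *
      (Lam (wd (2 * m) d) ψ (π / 3 + v * Complex.I)).re =
    2 * sg m d v * ((-1) ^ (m + 1) * (Lam (wd (2 * m) d) ψ (v * Complex.I) *
      starRingEnd ℂ (sp (cv (wd (2 * m) d)) (v * Complex.I + lam))).re + ‖sp (cv (wd (2 * m) d)) (v * Complex.I + lam)‖ ^ 2) := by
  apply bd_real
  · rw [← pow_mul, mul_comm, pow_mul]; norm_num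
  · have hc := h.cubic (by ring) (v * Complex.I)
    rw [bd_far h0 h1 h, bd_mid, Lam_mid_real h0 h1 h, sp_axis] at hc
    have e : sp (cv (wd (2 * m) d)) (v * Complex.I - lam) = starRingEnd ℂ (sp (cv (wd (2 * m) d)) (v * Complex.I + lam)) := by
      rw [← sp_conj, ← sp_neg]
      congr 1
      rw [map_add, conj_axis, lam_eq, Complex.conj_ofReal]; ring
    rw [e] at hc
    rw [hc]
    push_cast
    ring

lemma nsin_ge {z : ℂ} {x : ℝ} (hx : 0 ≤ x) (h : x ^ 2 ≤ Real.sin z.re ^ 2) : x ≤ ‖Complex.sin z‖ := by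
  refine (sq_le_sq₀ hx (norm_nonneg _)).1 ?_
  rw [norm_sin_sq]; nlinarith [sq_nonneg (Real.sinh z.im)]

/-- lower bound -/
def md (m : ℕ) (d : ℝ) : ℝ := Real.sin (π / 3 + d) * Real.sin (π / 3 - d) * (√3 / 2) ^ (2 * m)

lemma md_pos (h0 : 0 ≤ d) (h1 : d < π / 3) : 0 < md m d := by
  have := sin_pos_aux (w := d) (by rw [abs_of_nonneg h0]; exact h1)
  unfold md
  have h1 := this.1
  have h2 := this.2
  positivity

lemma md_le (h0 : 0 ≤ d) (h1 : d < π / 3) (v : ℝ) : md m d ≤ ‖sp (cv (wd (2 * m) d)) (v * Complex.I + lam)‖ := by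
  have := sin_pos_aux (w := d) (by rw [abs_of_nonneg h0]; exact h1)
  rw [sp_wd, norm_mul, norm_mul, norm_pow, md]
  have a1 : Real.sin (π / 3 + d) ≤ ‖Complex.sin (v * Complex.I + lam - d)‖ := by
    apply nsin_ge this.1.le
    simp [lam_re]
    rw [show 2 * π / 3 - d = π - (π / 3 + d) by ring, Real.sin_pi_sub]
  have a2 : Real.sin (π / 3 - d) ≤ ‖Complex.sin (v * Complex.I + lam + d)‖ := by
    apply nsin_ge this.2.le
    simp [lam_re]
    rw [show 2 * π / 3 + d = π - (π / 3 - d) by ring, Real.sin_pi_sub]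
  have a3 : √3 / 2 ≤ ‖Complex.sin (v * Complex.I + lam)‖ := by
    apply nsin_ge (by positivity)
    simp only [Complex.add_re, Complex.mul_re, Complex.ofReal_re, Complex.I_re, lam_re, Complex.ofReal_im, Complex.I_im]
    rw [show v * 0 - 0 * 1 + 2 * π / 3 = π - π / 3 by ring, Real.sin_pi_sub, Real.sin_pi_div_three]
  have b1 := this.1
  have b2 := this.2
  gcongr

lemma eps_sq (m : ℕ) : ((-1 : ℝ) ^ (m + 1)) ^ 2 = 1 := by rw [← pow_mul, mul_comm, pow_mul]; norm_num

lemma bd_lower (h0 : 0 ≤ d) (h1 : d < π / 3) (h : Eig (wd (2 * m) d) (m + 1) ψ) (v : ℝ)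
    (hB : 0 < (Lam (wd (2 * m) d) ψ (π / 3 + v * Complex.I)).re) :
    ‖sp (cv (wd (2 * m) d)) (v * Complex.I + lam)‖ ≤ ‖Lam (wd (2 * m) d) ψ (v * Complex.I)‖ :=
  bd_ge (eps_sq m) (sg_nonneg m d v) hB (bd_main h0 h1 h v)

lemma mid_pos (h0 : 0 ≤ d) (h1 : d < π / 3) (h : Eig (wd (2 * m) d) (m + 1) ψ) : 0 < (Lam (wd (2 * m) d) ψ (π / 3)).re := by
  have := Lam_center_ge h0 h1 h
  rw [h.real_eig.2, Complex.ofReal_re]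
  exact lt_of_lt_of_le (by positivity) this

lemma Lam_zero_ne (h0 : 0 ≤ d) (h1 : d < π / 3) (h : Eig (wd (2 * m) d) (m + 1) ψ) : (Lam (wd (2 * m) d) ψ 0).re ≠ 0 := by
  have h2 := bd_lower h0 h1 h 0 (by simpa using mid_pos h0 h1 h)
  have h3 := md_le (m := m) h0 h1 0
  have h4 := md_pos (m := m) h0 h1
  intro hc
  have := Lam_zero_real (ψ := ψ) (wd (2 * m) d)
  rw [hc] at this
  simp [this] at h2 h3
  rw [h2] at h3
  simp at h3
  linarith

end bd

end

section
lemma Eig_unique {m : ℕ} {d : ℝ} (h0 : 0 ≤ d) (h1 : d < π / 3) {ψ ψ'} (h : Eig (wd (2 * m) d) (m + 1) ψ)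
    (h' : Eig (wd (2 * m) d) (m + 1) ψ') : ψ = ψ' :=
  (Ar_PFH (abs_wd (n := 2 * m) h0 h1) (k := m + 1) (by omega)).unique h.nonneg h.supp h.sum h.real_eig.1
    h'.nonneg h'.supp h'.sum h'.real_eig.1

lemma proj_closed {m : ℕ} {C : Set (ℝ × ((Fin (2 * m + 2) → Bool) → ℝ))} (hC : IsClosed C) :
    IsClosed (Prod.fst '' (KK m ∩ C)) :=
  (((KK_compact m).inter_right hC).image continuous_fst).isClosed

lemma wd_zero (n : ℕ) : wd n 0 = 0 := by
  funext j
  refine Fin.cases ?_ (fun i => ?_) j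
  · simp [wd]
  · refine Fin.cases ?_ (fun i => ?_) i
    · simp [wd]
    · simp [wd]

lemma Lam_hom_zero_nonneg {n k : ℕ} {ψ} (h : Eig (0 : Fin n → ℝ) k ψ) : 0 ≤ (Lam 0 ψ 0).re := by
  have e : T (cv (0 : Fin n → ℝ)) 0 = (TT fun _ => ell (√3 / 2 : ℝ) 0 (√3 / 2)).map Complex.ofRealHom := by
    rw [← TT_map, T]
    congr 1
    funext j
    rw [LL]
    simp [cv, sin_lam]
  rw [Lam, e, mulVec_cv]
  simp only [cv, ← Complex.ofReal_sum, Complex.ofReal_re]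
  refine Finset.sum_nonneg fun σ _ => Finset.sum_nonneg fun τ _ => mul_nonneg ?_ (h.nonneg τ)
  exact TT_nonneg (fun _ => by positivity) (fun _ => le_refl _) (by positivity) σ τ

lemma Lam_zero_pos {m : ℕ} {d : ℝ} (h0 : 0 ≤ d) (h1 : d < π / 3) {ψ} (h : Eig (wd (2 * m) d) (m + 1) ψ) :
    0 < (Lam (wd (2 * m) d) ψ 0).re := by
  refine lt_of_le_of_ne ?_ (Lam_zero_ne h0 h1 h).symm
  by_contra hc
  push Not at hc
  have hpi := Real.pi_pos
  have hcont : Continuous fun x : ℝ × ((Fin (2 * m + 2) → Bool) → ℝ) => (FF (2 * m) (x, 0)).re :=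
    Complex.continuous_re.comp ((FF_continuous _).comp (by fun_prop))
  have c1 : IsClosed (Prod.fst '' (KK m ∩ {x | 0 ≤ (FF (2 * m) (x, 0)).re})) := proj_closed (isClosed_le continuous_const hcont)
  have c2 : IsClosed (Prod.fst '' (KK m ∩ {x | (FF (2 * m) (x, 0)).re ≤ 0})) := proj_closed (isClosed_le hcont continuous_const)
  have key := isPreconnected_closed_iff.1 (isPreconnected_Icc (a := (0:ℝ)) (b := d)) _ _ c1 c2 ?_ ?_ ?_
  · obtain ⟨y, hy, ⟨⟨y1, ψ1⟩, ⟨hk1, hp1⟩, e1⟩, ⟨⟨y2, ψ2⟩, ⟨hk2, hp2⟩, e2⟩⟩ := key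
    simp only at e1 e2
    subst e1; subst e2
    have hlt := lt_of_le_of_lt hy.2 h1
    have := Eig_unique hy.1 hlt hk1.2.1 hk2.2.1
    simp only at this
    subst this
    exact Lam_zero_ne hy.1 hlt hk1.2.1 (le_antisymm hp2 hp1)
  · intro y hy
    have hlt := lt_of_le_of_lt hy.2 h1
    obtain ⟨φ, hφ⟩ := exists_Eig (abs_wd (n := 2 * m) hy.1 hlt) (k := m + 1) (by omega)
    have := KK_mem hy.1 hlt hφ
    rcases le_total 0 ((FF (2 * m) ((y, φ), 0)).re) with hh | hh
    · exact Or.inl ⟨(y, φ), ⟨this, hh⟩, rfl⟩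
    · exact Or.inr ⟨(y, φ), ⟨this, hh⟩, rfl⟩
  · have hlt : (0:ℝ) < π / 3 := by positivity
    obtain ⟨φ, hφ⟩ := exists_Eig (abs_wd (n := 2 * m) le_rfl hlt) (k := m + 1) (by omega)
    refine ⟨0, ⟨le_rfl, h0⟩, (0, φ), ⟨KK_mem le_rfl hlt hφ, ?_⟩, rfl⟩
    simp only [Set.mem_ofPred_eq, FF]
    rw [wd_zero] at hφ ⊢
    exact Lam_hom_zero_nonneg hφ
  · exact ⟨d, ⟨h0, le_rfl⟩, (d, ψ), ⟨KK_mem h0 h1 h, hc.le⟩, rfl⟩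

lemma Strip_axis (v : ℝ) : (v : ℂ) * Complex.I ∈ Strip := by
  have := Real.pi_pos
  constructor <;> simp <;> positivity

lemma mid_all_pos {m : ℕ} {d : ℝ} (h0 : 0 ≤ d) (h1 : d < π / 3) {ψ} (h : Eig (wd (2 * m) d) (m + 1) ψ)
    (hz : ∀ u ∈ Strip, Lam (wd (2 * m) d) ψ u ≠ 0) (v : ℝ) : 0 < (Lam (wd (2 * m) d) ψ (π / 3 + v * Complex.I)).re := by
  by_contra hc
  push Not at hc
  have hpi := Real.pi_pos
  have hcont : Continuous fun v : ℝ => (Lam (wd (2 * m) d) ψ (π / 3 + v * Complex.I)).re :=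
    Complex.continuous_re.comp ((Lam_diff _ _).continuous.comp (by fun_prop))
  obtain ⟨y, hy⟩ := mem_range_of_exists_le_of_exists_ge hcont (c := 0) ⟨v, hc⟩ ⟨0, by simpa using (mid_pos h0 h1 h).le⟩
  refine hz (π / 3 + y * Complex.I) ?_ ?_
  · have e : ((π : ℂ) / 3 + y * Complex.I).re = π / 3 := by
      rw [show (π : ℂ) / 3 = ((π / 3 : ℝ) : ℂ) by push_cast; rfl]; simp
    constructor <;> rw [e] <;> linarith
  · rw [Lam_mid_real h0 h1 h]
    simp only at hy
    rw [hy]; simp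

lemma tail_one {m : ℕ} {d : ℝ} (h0 : 0 ≤ d) (h1 : d < π / 3) {ψ} (h : Eig (wd (2 * m) d) (m + 1) ψ) :
    ∃ V c : ℝ, 0 < c ∧ ∀ u ∈ Strip, V ≤ |u.im| → c ≤ ‖Lam (wd (2 * m) d) ψ u‖ := by
  obtain ⟨V, c, hc, hV⟩ := Lam_tail m
  exact ⟨V, c, hc, fun u _ hu => hV _ (KK_mem h0 h1 h) u hu⟩

lemma md_le_Lam {m : ℕ} {d : ℝ} (h0 : 0 ≤ d) (h1 : d < π / 3) {ψ} (h : Eig (wd (2 * m) d) (m + 1) ψ)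
    (hz : ∀ u ∈ Strip, Lam (wd (2 * m) d) ψ u ≠ 0) {u : ℂ} (hu : u ∈ Strip) : md m d ≤ ‖Lam (wd (2 * m) d) ψ u‖ := by
  have hb : ∀ v : ℝ, md m d ≤ ‖Lam (wd (2 * m) d) ψ (v * Complex.I)‖ := fun v =>
    (md_le h0 h1 v).trans (bd_lower h0 h1 h v (mid_all_pos h0 h1 h hz v))
  have hn : ‖((md m d : ℝ) : ℂ)‖ = md m d := by
    rw [Complex.norm_real, Real.norm_of_nonneg (md_pos h0 h1).le]
  have := PL (g := fun _ => ((md m d : ℝ) : ℂ)) (h := Lam (wd (2 * m) d) ψ) (by fun_prop) (Lam_diff _ _) hz (tail_one h0 h1 h)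
    ⟨md m d, 0, fun u _ => by simp [abs_of_pos (md_pos (m := m) h0 h1)]⟩ (fun v => by rw [hn]; exact hb v)
    (fun v => by rw [hn, Lam_mirror h0 h1 h]; exact hb v) hu
  rwa [hn] at this

lemma sin_eq_zero_aux {u : ℂ} (h0 : 0 ≤ u.re) (h1 : u.re ≤ π / 3) (h : Complex.sin u = 0) : u = 0 := by
  have hp := Real.pi_pos
  have := norm_sin_sq u
  rw [h] at this
  simp at this
  have a1 : Real.sin u.re = 0 := by nlinarith [sq_nonneg (Real.sin u.re), sq_nonneg (Real.sinh u.im)]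
  have a2 : Real.sinh u.im = 0 := by nlinarith [sq_nonneg (Real.sin u.re), sq_nonneg (Real.sinh u.im)]
  apply Complex.ext
  · rcases h0.eq_or_lt with h2 | h2
    · rw [← h2]; rfl
    · exact absurd a1 (Real.sin_pos_of_pos_of_lt_pi h2 (by linarith)).ne'
  · simpa using a2

/-- induction hypothesis -/
def Good (m : ℕ) : Prop := ∀ φ, Eig (0 : Fin (2 * m) → ℝ) m φ → (∀ u ∈ Strip, Lam 0 φ u ≠ 0) ∧ 0 < (Lam 0 φ 0).re

lemma Good_zero : Good 0 := by
  intro φ h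
  have e : ∀ u, Lam (0 : Fin (2 * 0) → ℝ) φ u = 2 := by
    intro u
    have hs := h.sum
    rw [Lam]
    have : ∀ σ τ : Fin (2 * 0) → Bool, T (cv (0 : Fin (2 * 0) → ℝ)) u σ τ = 2 := by
      intro σ τ
      simp only [T, TT, Matrix.of_apply]
      show (1 : Matrix Bool Bool ℂ).trace = 2
      simp
    simp only [Matrix.mulVec, dotProduct, this, ← Finset.mul_sum, cv, ← Complex.ofReal_sum, hs]
    simp
  refine ⟨fun u _ => ?_, ?_⟩
  · rw [e]; norm_num
  · rw [e]; norm_num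

/-- zero set -/
def Bad (m : ℕ) : Set ((ℝ × ((Fin (2 * m + 2) → Bool) → ℝ)) × ℂ) :=
  {z | z.1 ∈ KK m ∧ z.1.1 < π / 3 ∧ 0 ≤ z.2.re ∧ z.2.re ≤ π / 3 ∧ FF (2 * m) z = 0}

lemma re_aux {κ x : ℝ} (hκ : 0 < κ) (hx : 0 < x) {u : ℂ} (hu : 0 ≤ u.re) (h : ‖(x : ℂ) + κ * u‖ ≤ κ / 2 * ‖u‖) : False := by
  have h1 : ‖(x : ℂ) + κ * u‖ ^ 2 ≤ (κ / 2 * ‖u‖) ^ 2 := by gcongr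
  rw [mul_pow, ← Complex.normSq_eq_norm_sq, ← Complex.normSq_eq_norm_sq, Complex.normSq_apply, Complex.normSq_apply] at h1
  simp at h1
  have : 0 ≤ κ * u.re := by positivity
  have : (κ * u.re) ^ 2 < (x + κ * u.re) ^ 2 := by
    apply pow_lt_pow_left₀ <;> first | linarith | norm_num
  nlinarith [sq_nonneg (κ * u.re), sq_nonneg (κ * u.im)]

lemma Bad_end {m : ℕ} (hG : Good m) {z} (hz : z ∈ closure (Bad m)) : z.1 ∈ KK m ∧ z.1.1 < π / 3 ∧ 0 ≤ z.2.re ∧ z.2.re ≤ π / 3 ∧ FF (2 * m) z = 0 := by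
  have hp := Real.pi_pos
  have hcl : z ∈ {z : (ℝ × ((Fin (2 * m + 2) → Bool) → ℝ)) × ℂ | z.1 ∈ KK m ∧ 0 ≤ z.2.re ∧ z.2.re ≤ π / 3 ∧ FF (2 * m) z = 0} := by
    refine closure_minimal ?_ ?_ hz
    · rintro z ⟨h1, h2, h3, h4, h5⟩
      exact ⟨h1, h3, h4, h5⟩
    · refine ((KK_closed m).preimage continuous_fst).inter (IsClosed.inter ?_ (IsClosed.inter ?_ ?_))
      · exact isClosed_le continuous_const (Complex.continuous_re.comp continuous_snd)
      · exact isClosed_le (Complex.continuous_re.comp continuous_snd) continuous_const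
      · exact isClosed_eq (FF_continuous _) continuous_const
  obtain ⟨hK, hr0, hr1, hF⟩ := hcl
  refine ⟨hK, ?_, hr0, hr1, hF⟩
  by_contra hd
  have hd : z.1.1 = π / 3 := le_antisymm hK.1.2 (not_lt.1 hd)
  obtain ⟨⟨d, ψ⟩, u⟩ := z
  simp only at hd hr0 hr1
  subst hd
  have hE : Eig (wd (2 * m) (π / 3)) (m + 1) ψ := hK.2.1
  have hμ : 0 < ∑ σ, (Ar (wd (2 * m) (π / 3))).mulVec ψ σ := by
    have := hK.2.2
    simp only [FF] at this
    rw [hE.real_eig.2, Complex.ofReal_re] at this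
    exact lt_of_lt_of_le (by positivity) this
  obtain ⟨φ, hφ⟩ := exists_Eig (n := 2 * m) (w := 0) (by simp [hp]) (k := m) (by omega)
  have hL := Lam_end hE hμ hφ
  obtain ⟨g1, g2⟩ := hG φ hφ
  have hu : u = 0 := by
    simp only [FF] at hF
    rw [hL] at hF
    have n1 := g1 u ⟨hr0, by linarith⟩
    have n2 : Complex.sin (u + π / 3) ≠ 0 := by
      intro hc
      have := norm_sin_sq (u + π / 3)
      rw [hc] at this
      have e : (u + (π : ℂ) / 3).re = u.re + π / 3 := by
        rw [show (π : ℂ) / 3 = ((π / 3 : ℝ) : ℂ) by push_cast; rfl]; simp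
      rw [e] at this
      have hs : 0 < Real.sin (u.re + π / 3) := Real.sin_pos_of_pos_of_lt_pi (by linarith) (by linarith)
      have := sq_nonneg (Real.sinh (u + (π : ℂ) / 3).im)
      simp at *
      nlinarith
    have : Complex.sin u = 0 := by simpa [n1, n2] using hF
    exact sin_eq_zero_aux hr0 hr1 this
  subst hu
  set κ : ℝ := √3 / 2 * (Lam 0 φ 0).re with hκ
  have hκ0 : 0 < κ := by positivity
  have hst : HasStrictFDerivAt (FF (2 * m)) (fderiv ℝ (FF (2 * m)) ((π / 3, ψ), 0)) ((π / 3, ψ), 0) :=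
    (FF_contDiff (2 * m)).contDiffAt.hasStrictFDerivAt (by norm_num)
  set f' := fderiv ℝ (FF (2 * m)) ((π / 3, ψ), 0) with hf'
  have hder : ∀ u : ℂ, f' (0, u) = κ * u := by
    have d1 : HasFDerivAt (fun u : ℂ => FF (2 * m) ((π / 3, ψ), u)) (f'.comp (ContinuousLinearMap.inr ℝ (ℝ × ((Fin (2 * m + 2) → Bool) → ℝ)) ℂ)) 0 :=
      hst.hasFDerivAt.comp (0:ℂ) (hasFDerivAt_prodMk_right _ _)
    have d2 : HasDerivAt (fun u : ℂ => FF (2 * m) ((π / 3, ψ), u)) (κ : ℂ) 0 := by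
      have : (fun u : ℂ => FF (2 * m) ((π / 3, ψ), u)) = fun u => Complex.sin u * (Complex.sin (u + π / 3) * Lam 0 φ u) := by
        funext u; simp only [FF]; rw [hL]; ring
      rw [this]
      have d3 : DifferentiableAt ℂ (fun u : ℂ => Complex.sin (u + π / 3) * Lam 0 φ u) 0 := by
        refine DifferentiableAt.mul (by fun_prop) (Lam_diff _ _ 0)
      have := (Complex.hasDerivAt_sin 0).mul d3.hasDerivAt
      refine HasDerivAt.congr_deriv (f := fun u => Complex.sin u * (Complex.sin (u + π / 3) * Lam 0 φ u)) this ?_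
      simp
      have hz : Lam 0 φ 0 = ((Lam 0 φ 0).re : ℂ) := by
        symm
        rw [← Complex.conj_eq_iff_re, ← Lam_conj, map_zero]
      rw [hz, hκ]
      have h1 : Complex.sin (π / 3) = ((√3 / 2 : ℝ) : ℂ) := by
        rw [← Real.sin_pi_div_three]; push_cast; rfl
      rw [h1]; push_cast; simp
    have := d1.unique (d2.hasFDerivAt.restrictScalars ℝ)
    intro u
    have := congrArg (fun L => L u) this
    simp at this
    rw [this]; ring
  have ht : Filter.Tendsto (fun z : (ℝ × ((Fin (2 * m + 2) → Bool) → ℝ)) × ℂ => (z, (z.1, (0:ℂ)))) (nhds ((π / 3, ψ), 0))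
      (nhds (((π / 3, ψ), 0), ((π / 3, ψ), 0))) := by
    refine Continuous.tendsto' (by fun_prop) _ _ rfl
  have hb := ((hst.isLittleO.comp_tendsto ht).def (half_pos hκ0))
  have hfr : ∃ᶠ z in nhds ((π / 3, ψ), (0:ℂ)), z ∈ Bad m := mem_closure_iff_frequently.1 hz
  obtain ⟨⟨⟨d, χ⟩, u⟩, hzB, hzb⟩ := (hfr.and_eventually hb).exists
  obtain ⟨k1, k2, k3, k4, k5⟩ := hzB
  simp only [Function.comp] at hzb k2 k3
  have hpos := Lam_zero_pos k1.1.1 k2 k1.2.1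
  have hreal := Lam_zero_real (ψ := χ) (wd (2 * m) d)
  have e1 : (((d, χ), u) - ((d, χ), (0:ℂ)) : (ℝ × ((Fin (2 * m + 2) → Bool) → ℝ)) × ℂ) = (0, u) := by simp
  have e2 : FF (2 * m) ((d, χ), 0) = Lam (wd (2 * m) d) χ 0 := rfl
  rw [k5, e1, hder, e2, hreal] at hzb
  refine re_aux hκ0 hpos k3 ?_
  refine le_trans (le_of_eq ?_) (hzb.trans ?_)
  · rw [← norm_neg]; congr 1; ring
  · rw [Prod.norm_mk]; simp

lemma Bad_compact {m : ℕ} (hG : Good m) : IsCompact (Bad m) := by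
  obtain ⟨V, c, hc, hV⟩ := Lam_tail m
  have hcl : IsClosed (Bad m) := isClosed_of_closure_subset fun z hz => Bad_end hG hz
  have hb : IsCompact (Set.Icc 0 (π / 3) ×ℂ Set.Icc (-V) V) := isCompact_Icc.reProdIm isCompact_Icc
  refine IsCompact.of_isClosed_subset ((KK_compact m).prod hb) hcl ?_
  rintro ⟨x, u⟩ ⟨h1, h2, h3, h4, h5⟩
  refine ⟨h1, ⟨h3, h4⟩, ?_⟩
  have : |u.im| ≤ V := by
    by_contra hh
    push Not at hh
    have := hV x h1 u hh.le
    rw [h5] at this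
    simp at this
    linarith
  exact abs_le.1 this

lemma zf_of {m : ℕ} {d : ℝ} (h0 : 0 ≤ d) (h1 : d < π / 3) {ψ} (h : Eig (wd (2 * m) d) (m + 1) ψ)
    (hb : ∀ u, ((d, ψ), u) ∉ Bad m) : ∀ u ∈ Strip, Lam (wd (2 * m) d) ψ u ≠ 0 := by
  intro u hu hz
  rcases le_total u.re (π / 3) with h2 | h2
  · exact hb u ⟨KK_mem h0 h1 h, h1, hu.1, h2, hz⟩
  · refine hb (lam - u) ⟨KK_mem h0 h1 h, h1, ?_, ?_, ?_⟩
    · simp [lam_re]; linarith [hu.2]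
    · simp [lam_re]; linarith
    · simp only [FF]; rw [Lam_mirror h0 h1 h, hz]

lemma Bad_empty {m : ℕ} (hG : Good m) : Bad m = ∅ := by
  by_contra hne
  obtain ⟨z, hz, hmax⟩ := (Bad_compact hG).exists_isMaxOn (Set.nonempty_iff_ne_empty.2 hne) (f := fun z => z.1.1) (by fun_prop)
  obtain ⟨⟨d, ψ⟩, u⟩ := z
  obtain ⟨k1, k2, k3, k4, k5⟩ := hz
  simp only at k2 k3 k4
  have hp := Real.pi_pos
  have hu : u ∈ Strip := ⟨k3, by linarith⟩
  have hcl : IsClosed (Prod.fst '' (KK m ∩ {x | md m x.1 ≤ ‖FF (2 * m) (x, u)‖})) := by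
    refine proj_closed (isClosed_le ?_ ?_)
    · unfold md; fun_prop
    · exact ((FF_continuous _).comp (by fun_prop)).norm
  have hsub : Set.Ioo d (π / 3) ⊆ Prod.fst '' (KK m ∩ {x | md m x.1 ≤ ‖FF (2 * m) (x, u)‖}) := by
    intro y hy
    have hy0 : 0 ≤ y := k1.1.1.trans hy.1.le
    obtain ⟨φ, hφ⟩ := exists_Eig (abs_wd (n := 2 * m) hy0 hy.2) (k := m + 1) (by omega)
    refine ⟨(y, φ), ⟨KK_mem hy0 hy.2 hφ, ?_⟩, rfl⟩
    refine md_le_Lam hy0 hy.2 hφ (zf_of hy0 hy.2 hφ fun u' hu' => ?_) hu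
    have := hmax hu'
    simp only [Set.mem_ofPred_eq] at this
    exact absurd hy.1 (not_lt.2 this)
  have hd : d ∈ closure (Set.Ioo d (π / 3)) := by
    rw [closure_Ioo k2.ne]; exact ⟨le_rfl, k2.le⟩
  obtain ⟨⟨y, φ⟩, ⟨hy1, hy2⟩, rfl⟩ := closure_minimal hsub hcl hd
  simp only at *
  have := Eig_unique k1.1.1 k2 k1.2.1 hy1.2.1
  simp only at this
  subst this
  simp only [Set.mem_ofPred_eq] at hy2
  rw [k5] at hy2
  simp at hy2
  exact absurd (md_pos (m := m) k1.1.1 k2) (not_lt.2 hy2)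

lemma Good_all (m : ℕ) : Good m := by
  induction m with
  | zero => exact Good_zero
  | succ m ih =>
    intro φ hφ
    have hp := Real.pi_pos
    have hlt : (0:ℝ) < π / 3 := by positivity
    have hφ' : Eig (wd (2 * m) 0) (m + 1) φ := by rw [wd_zero]; exact hφ
    have h1 := zf_of le_rfl hlt hφ' (by simp [Bad_empty ih])
    have h2 := Lam_zero_pos le_rfl hlt hφ'
    rw [wd_zero] at h1 h2
    exact ⟨h1, h2⟩

end

section
lemma nsin_eq {z z' : ℂ} (h1 : Real.sin z.re ^ 2 = Real.sin z'.re ^ 2) (h2 : z.im ^ 2 = z'.im ^ 2) : ‖Complex.sin z‖ = ‖Complex.sin z'‖ := by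
  rw [← sq_eq_sq₀ (norm_nonneg _) (norm_nonneg _), norm_sin_sq, norm_sin_sq, h1]
  rcases sq_eq_sq_iff_eq_or_eq_neg.1 h2 with h | h <;> rw [h]
  rw [Real.sinh_neg]; ring

lemma nsin_le (z : ℂ) : ‖Complex.sin z‖ ≤ Real.exp |z.im| := by
  have h1 : ‖Complex.sin z‖ ≤ Real.cosh z.im := by
    rw [← sq_le_sq₀ (norm_nonneg _) (Real.cosh_pos _).le, norm_sin_sq, Real.cosh_sq]
    nlinarith [Real.sin_sq_le_one z.re]
  refine h1.trans ?_
  rw [← Real.cosh_abs, Real.cosh_eq]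
  have : Real.exp (-|z.im|) ≤ Real.exp |z.im| := Real.exp_le_exp.2 (by linarith [abs_nonneg z.im])
  linarith

/-- factor -/
def f1 (u : ℂ) : ℂ := (2 * Complex.sin (u / 2) + (√3 : ℝ)) * (2 * Complex.sin (u / 2) + 1)
/-- factor -/
def f2 (u : ℂ) : ℂ := (2 * Complex.sin (u / 2 + lam) + (√3 : ℝ)) * (2 * Complex.sin (u / 2 + lam) + 1)
/-- factor -/
def f3 (u : ℂ) : ℂ := (2 * Complex.sin (u / 2 - lam) - (√3 : ℝ)) * (2 * Complex.sin (u / 2 - lam) - 1)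
/-- numerator -/
def num (u : ℂ) : ℂ := f1 u * f2 u
/-- denominator -/
def den (u : ℂ) : ℂ := 2 * f3 u

lemma f1_mir (u : ℂ) : f1 (lam - u) = f2 u := by
  rw [f1, f2, show (lam - u) / 2 = π - (u / 2 + lam) by rw [lam]; ring, Complex.sin_pi_sub]

lemma f2_mir (u : ℂ) : f2 (lam - u) = f1 u := by
  have := f1_mir (lam - u)
  rw [sub_sub_cancel] at this
  exact this.symm

lemma f3_mir (u : ℂ) : f3 (lam - u) = f3 u := by
  rw [f3, f3, show (lam - u) / 2 - lam = -π - (u / 2 - lam) by rw [lam]; ring]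
  have : Complex.sin (-π - (u / 2 - lam)) = Complex.sin (u / 2 - lam) := by
    rw [show -(π:ℂ) - (u / 2 - lam) = -((u / 2 - lam) + π) by ring, Complex.sin_neg, Complex.sin_add_pi, neg_neg]
  rw [this]

lemma num_mir (u : ℂ) : num (lam - u) = num u := by rw [num, f1_mir, f2_mir, mul_comm]; rfl
lemma den_mir (u : ℂ) : den (lam - u) = den u := by rw [den, f3_mir]; rfl

lemma num_diff : Differentiable ℂ num := by unfold num f1 f2; fun_prop
lemma den_diff : Differentiable ℂ den := by unfold den f3; fun_prop

lemma fac_ge {z : ℂ} (x : ℝ) (hx : 1 ≤ x) (hz : 0 ≤ Real.sin z.re) : 1 ≤ ‖2 * Complex.sin z + x‖ := by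
  refine le_trans ?_ ((le_abs_self _).trans (Complex.abs_re_le_norm _))
  have hre : (Complex.sin z).re = Real.sin z.re * Real.cosh z.im := by
    have hz : Complex.sin z = ((Real.sin z.re * Real.cosh z.im : ℝ) : ℂ) + ((Real.cos z.re * Real.sinh z.im : ℝ) : ℂ) * Complex.I := by
      rw [Complex.sin_eq]; push_cast; ring
    rw [hz, Complex.add_re, Complex.ofReal_re, Complex.re_ofReal_mul, Complex.I_re]; ring
  have := mul_nonneg hz (Real.cosh_pos z.im).le
  simp [hre] at *
  linarith

lemma sqrt3_ge : (1:ℝ) ≤ √3 := by rw [Real.one_le_sqrt]; norm_num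

lemma num_ge {u : ℂ} (hu : u ∈ Strip) : 1 ≤ ‖num u‖ := by
  have hp := Real.pi_pos
  have h3 := sqrt3_ge
  have hr : (u / 2).re = u.re / 2 := by simp
  have a1 : 0 ≤ Real.sin (u / 2).re := by
    rw [hr]; apply Real.sin_nonneg_of_nonneg_of_le_pi <;> linarith [hu.1, hu.2]
  have a2 : 0 ≤ Real.sin (u / 2 + lam).re := by
    rw [Complex.add_re, hr, lam_re]; apply Real.sin_nonneg_of_nonneg_of_le_pi <;> linarith [hu.1, hu.2]
  rw [num, f1, f2, norm_mul, norm_mul, norm_mul]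
  have b1 := fac_ge _ h3 a1
  have b2 := fac_ge 1 le_rfl a1
  have b3 := fac_ge _ h3 a2
  have b4 := fac_ge 1 le_rfl a2
  rw [Complex.ofReal_one] at b2 b4
  exact one_le_mul_of_one_le_of_one_le (one_le_mul_of_one_le_of_one_le b1 b2) (one_le_mul_of_one_le_of_one_le b3 b4)

lemma den_ge {u : ℂ} (hu : u ∈ Strip) : 1 ≤ ‖den u‖ := by
  have hp := Real.pi_pos
  have h3 := sqrt3_ge
  have hr : (u / 2).re = u.re / 2 := by simp
  have a1 : 0 ≤ Real.sin (-(u / 2 - lam)).re := by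
    rw [Complex.neg_re, Complex.sub_re, hr, lam_re]; apply Real.sin_nonneg_of_nonneg_of_le_pi <;> linarith [hu.1, hu.2]
  have b1 := fac_ge _ h3 a1
  have b2 := fac_ge 1 le_rfl a1
  rw [Complex.ofReal_one] at b2
  rw [Complex.sin_neg] at b1 b2
  rw [den, f3, norm_mul, norm_mul]
  rw [← norm_neg] at b1 b2
  have e1 : -(2 * -Complex.sin (u / 2 - lam) + (√3 : ℝ)) = 2 * Complex.sin (u / 2 - lam) - (√3 : ℝ) := by ring
  have e2 : -(2 * -Complex.sin (u / 2 - lam) + 1) = 2 * Complex.sin (u / 2 - lam) - 1 := by ring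
  rw [e1] at b1
  rw [e2] at b2
  refine one_le_mul_of_one_le_of_one_le (by simp) (one_le_mul_of_one_le_of_one_le b1 b2)

lemma fac_le (z : ℂ) (x : ℝ) (hx : |x| ≤ 2) : ‖2 * Complex.sin z + x‖ ≤ 4 * Real.exp |z.im| := by
  refine (norm_add_le _ _).trans ?_
  rw [norm_mul, Complex.norm_real, Real.norm_eq_abs]
  have h1 := nsin_le z
  have h2 : 1 ≤ Real.exp |z.im| := Real.one_le_exp (abs_nonneg _)
  simp
  linarith

lemma fac_le' (u y : ℂ) (hy : y.im = 0) (x : ℝ) (hx : |x| ≤ 2) : ‖2 * Complex.sin (u / 2 + y) + x‖ ≤ 4 * Real.exp (1 * |u.im|) := by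
  refine (fac_le _ x hx).trans ?_
  have : (u / 2 + y).im = u.im / 2 := by simp [hy]
  rw [this, abs_div]
  have := abs_nonneg u.im
  gcongr
  norm_num

lemma sqrt3_le : |√3| ≤ 2 := by rw [abs_of_nonneg (by positivity), Real.sqrt_le_left] <;> norm_num

lemma num_le (u : ℂ) : ‖num u‖ ≤ 256 * Real.exp (4 * |u.im|) := by
  have b1 := fac_le' u 0 rfl _ sqrt3_le
  have b2 := fac_le' u 0 rfl 1 (by norm_num)
  have b3 := fac_le' u lam lam_im _ sqrt3_le
  have b4 := fac_le' u lam lam_im 1 (by norm_num)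
  rw [add_zero] at b1 b2
  rw [Complex.ofReal_one] at b2 b4
  rw [num, f1, f2, norm_mul, norm_mul, norm_mul]
  have e : 256 * Real.exp (4 * |u.im|) = (4 * Real.exp (1 * |u.im|)) * (4 * Real.exp (1 * |u.im|)) * ((4 * Real.exp (1 * |u.im|)) * (4 * Real.exp (1 * |u.im|))) := by
    rw [show 4 * |u.im| = (1 * |u.im| + 1 * |u.im|) + (1 * |u.im| + 1 * |u.im|) by ring, Real.exp_add, Real.exp_add]; ring
  rw [e]
  gcongr

lemma den_le (u : ℂ) : ‖den u‖ ≤ 32 * Real.exp (2 * |u.im|) := by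
  have b1 := fac_le' u (-lam) (by simp [lam_im]) (-√3) (by rw [abs_neg]; exact sqrt3_le)
  have b2 := fac_le' u (-lam) (by simp [lam_im]) (-1) (by norm_num)
  rw [Complex.ofReal_neg, ← sub_eq_add_neg, ← sub_eq_add_neg] at b1 b2
  rw [Complex.ofReal_one] at b2
  rw [den, f3, norm_mul, norm_mul]
  have e : 32 * Real.exp (2 * |u.im|) = 2 * ((4 * Real.exp (1 * |u.im|)) * (4 * Real.exp (1 * |u.im|))) := by
    rw [show 2 * |u.im| = (1 * |u.im| + 1 * |u.im|) by ring, Real.exp_add]; ring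
  rw [e]
  simp only [Complex.norm_ofNat]
  gcongr

lemma num_axis (v : ℝ) : ‖num (v * Complex.I)‖ = ‖Complex.sin (v * Complex.I + lam)‖ * ‖den (v * Complex.I)‖ := by
  have e3 : ‖f3 (v * Complex.I)‖ = ‖f2 (v * Complex.I)‖ := by
    have hs : Complex.sin (v * Complex.I / 2 - lam) = -starRingEnd ℂ (Complex.sin (v * Complex.I / 2 + lam)) := by
      rw [← Complex.sin_conj, ← Complex.sin_neg]
      congr 1
      rw [map_add, lam_eq, Complex.conj_ofReal]
      have : starRingEnd ℂ ((v:ℂ) * Complex.I / 2) = -((v:ℂ) * Complex.I / 2) := by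
        rw [show (v:ℂ) * Complex.I / 2 = ((v / 2 : ℝ) : ℂ) * Complex.I by push_cast; ring, conj_axis]
      rw [this]; ring
    rw [f3, f2, hs, ← Complex.norm_conj (_ * (2 * Complex.sin (v * Complex.I / 2 + lam) + 1))]
    congr 1
    simp only [map_mul, map_add, Complex.conj_ofReal, map_one, map_ofNat]
    ring
  have e1 : ‖f1 (v * Complex.I)‖ = 2 * ‖Complex.sin (v * Complex.I + lam)‖ := by
    rw [← sq_eq_sq₀ (by positivity) (by positivity), mul_pow, norm_sin_sq, f1, norm_mul, mul_pow,
      ← Complex.normSq_eq_norm_sq, ← Complex.normSq_eq_norm_sq]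
    have hs : Complex.sin (v * Complex.I / 2) = (Real.sinh (v / 2) : ℝ) * Complex.I := by
      rw [show (v:ℂ) * Complex.I / 2 = ((v / 2 : ℝ) : ℂ) * Complex.I by push_cast; ring, Complex.sin_mul_I, Complex.ofReal_sinh]
    have n1 : Complex.normSq (2 * Complex.sin (v * Complex.I / 2) + (√3 : ℝ)) = 3 + 4 * Real.sinh (v / 2) ^ 2 := by
      rw [hs, show 2 * (((Real.sinh (v / 2) : ℝ) : ℂ) * Complex.I) + (√3 : ℝ) = ((√3 : ℝ) : ℂ) + ((2 * Real.sinh (v / 2) : ℝ) : ℂ) * Complex.I by push_cast; ring,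
        Complex.normSq_add_mul_I, Real.sq_sqrt (by norm_num)]; ring
    have n2 : Complex.normSq (2 * Complex.sin (v * Complex.I / 2) + 1) = 1 + 4 * Real.sinh (v / 2) ^ 2 := by
      rw [hs, show 2 * (((Real.sinh (v / 2) : ℝ) : ℂ) * Complex.I) + 1 = ((1 : ℝ) : ℂ) + ((2 * Real.sinh (v / 2) : ℝ) : ℂ) * Complex.I by push_cast; ring,
        Complex.normSq_add_mul_I]; ring
    rw [n1, n2]
    have r1 : ((v:ℂ) * Complex.I + lam).re = 2 * π / 3 := by simp [lam_re]
    have r2 : ((v:ℂ) * Complex.I + lam).im = 2 * (v / 2) := by simp [lam_im]; ring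
    have h3 : (√3) ^ 2 = 3 := Real.sq_sqrt (by norm_num)
    have hc := Real.cosh_sq (v / 2)
    rw [r1, r2, sin_lam_r, Real.sinh_two_mul]
    grind
  rw [num, norm_mul, e1, den, norm_mul, e3]
  simp; ring

section bounds
variable {m : ℕ} {ψ : (Fin (2 * m + 2) → Bool) → ℝ}

lemma sp_hom (u : ℂ) : sp (cv (wd (2 * m) 0)) u = Complex.sin u ^ (2 * m + 2) := by
  rw [sp_wd]; simp; ring

lemma hom_bds (h : Eig (wd (2 * m) 0) (m + 1) ψ) (v : ℝ) :
    ‖Complex.sin (v * Complex.I + lam)‖ ^ (2 * m + 2) ≤ ‖Lam (wd (2 * m) 0) ψ (v * Complex.I)‖ ∧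
    ‖Lam (wd (2 * m) 0) ψ (v * Complex.I)‖ ≤ 3 * ‖Complex.sin (v * Complex.I + lam)‖ ^ (2 * m + 2) := by
  have hp := Real.pi_pos
  have hlt : (0:ℝ) < π / 3 := by positivity
  have hz : ∀ u ∈ Strip, Lam (wd (2 * m) 0) ψ u ≠ 0 := by
    have := (Good_all (m + 1) ψ (by rw [wd_zero] at h; exact h)).1
    rw [wd_zero]; exact this
  have hB := mid_all_pos le_rfl hlt h hz
  have hlow : ∀ v : ℝ, ‖Complex.sin (v * Complex.I + lam)‖ ^ (2 * m + 2) ≤ ‖Lam (wd (2 * m) 0) ψ (v * Complex.I)‖ := by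
    intro v
    have := bd_lower le_rfl hlt h v (hB v)
    rwa [sp_hom, norm_pow] at this
  refine ⟨hlow v, ?_⟩
  have hpr : ((π : ℂ) / 3) = ((π / 3 : ℝ) : ℂ) := by push_cast; rfl
  have hpl : ∀ u ∈ Strip, ‖Complex.sin (u - π / 3) ^ (2 * m + 2)‖ ≤ ‖Lam (wd (2 * m) 0) ψ u‖ := by
    intro u hu
    refine PL (g := fun u => Complex.sin (u - π / 3) ^ (2 * m + 2)) (by fun_prop) (Lam_diff _ _) hz (tail_one le_rfl hlt h) ?_ ?_ ?_ hu
    · refine ⟨1, ((2 * m + 2 : ℕ) : ℝ), fun u _ => ?_⟩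
      rw [norm_pow, one_mul, Real.exp_nat_mul]
      gcongr
      refine (nsin_le _).trans (le_of_eq ?_)
      rw [hpr]; simp
    · intro v
      refine le_trans (le_of_eq ?_) (hlow v)
      simp only [norm_pow]
      congr 1
      apply nsin_eq
      · rw [hpr]; simp only [Complex.sub_re, Complex.add_re, Complex.mul_re, Complex.ofReal_re, Complex.I_re, lam_re, Complex.ofReal_im, Complex.I_im]
        rw [show v * 0 - 0 * 1 + 2 * π / 3 = π - π / 3 by ring, Real.sin_pi_sub, show v * 0 - 0 * 1 - π / 3 = - (π / 3) by ring, Real.sin_neg]; ring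
      · rw [hpr]; simp [lam_im]
    · intro v
      rw [Lam_mirror le_rfl hlt h]
      refine le_trans (le_of_eq ?_) (hlow v)
      simp only [norm_pow]
      congr 1
      apply nsin_eq
      · rw [hpr]; simp only [Complex.sub_re, Complex.add_re, Complex.mul_re, Complex.ofReal_re, Complex.I_re, lam_re, Complex.ofReal_im, Complex.I_im]
        rw [show v * 0 - 0 * 1 + 2 * π / 3 = π - π / 3 by ring, Real.sin_pi_sub, show 2 * π / 3 - (v * 0 - 0 * 1) - π / 3 = (π / 3) by ring]
      · rw [hpr]; simp [lam_im]
  have hσ : sg m 0 v ≤ (Lam (wd (2 * m) 0) ψ (π / 3 + v * Complex.I)).re := by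
    have hst : (π : ℂ) / 3 + v * Complex.I ∈ Strip := by
      have e : ((π : ℂ) / 3 + v * Complex.I).re = π / 3 := by rw [hpr]; simp
      constructor <;> rw [e] <;> linarith
    have := hpl _ hst
    rw [Lam_mid_real le_rfl hlt h, Complex.norm_real, Real.norm_of_nonneg (hB v).le] at this
    refine le_trans (le_of_eq ?_) this
    rw [add_sub_cancel_left, norm_pow, show 2 * m + 2 = 2 * (m + 1) by ring, pow_mul, norm_sin_sq, sg]
    simp; ring
  have := bd_le (eps_sq m) (sg_nonneg m 0 v) (hB v) hσ (bd_main le_rfl hlt h v)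
  rwa [sp_hom, norm_pow] at this

lemma sector_val (h : Eig (wd (2 * m) 0) (m + 1) ψ) :
    (4 / 3) ^ (2 * m + 2) ≤ ‖Lam (wd (2 * m) 0) ψ (π / 3)‖ ∧ ‖Lam (wd (2 * m) 0) ψ (π / 3)‖ ≤ 3 * (4 / 3) ^ (2 * m + 2) := by
  have hp := Real.pi_pos
  have hlt : (0:ℝ) < π / 3 := by positivity
  have hz : ∀ u ∈ Strip, Lam (wd (2 * m) 0) ψ u ≠ 0 := by
    have := (Good_all (m + 1) ψ (by rw [wd_zero] at h; exact h)).1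
    rw [wd_zero]; exact this
  have hpr : ((π : ℂ) / 3) = ((π / 3 : ℝ) : ℂ) := by push_cast; rfl
  have hst : (π : ℂ) / 3 ∈ Strip := by
    rw [hpr]; constructor <;> rw [Complex.ofReal_re] <;> linarith
  have hnd : ‖num (π / 3)‖ = 4 / 3 * ‖den (π / 3)‖ := by
    have s6 : Complex.sin (π / 3 / 2) = 1 / 2 := by
      rw [show (π : ℂ) / 3 / 2 = ((π / 6 : ℝ) : ℂ) by push_cast; ring, ← Complex.ofReal_sin, Real.sin_pi_div_six]; norm_num
    have s56 : Complex.sin (π / 3 / 2 + lam) = 1 / 2 := by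
      rw [← s6, lam, show (π : ℂ) / 3 / 2 + 2 * π / 3 = π - π / 3 / 2 by ring, Complex.sin_pi_sub]
    have s2 : Complex.sin (π / 3 / 2 - lam) = -1 := by
      rw [lam, show (π : ℂ) / 3 / 2 - 2 * π / 3 = -(π / 2) by ring, Complex.sin_neg, Complex.sin_pi_div_two]
    have h3 : ((√3 : ℝ) : ℂ) ^ 2 = 3 := by rw [← Complex.ofReal_pow, Real.sq_sqrt (by norm_num)]; norm_num
    have e : num (π / 3) = ((4 / 3 : ℝ) : ℂ) * den (π / 3) := by
      rw [num, den, f1, f2, f3, s6, s56, s2]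
      push_cast
      grind
    rw [e, norm_mul, Complex.norm_real]; norm_num
  have hdp : 0 < ‖den (π / 3)‖ := lt_of_lt_of_le one_pos (den_ge hst)
  have hden0 : ∀ u ∈ Strip, den u ≠ 0 := fun u hu => norm_pos_iff.1 (lt_of_lt_of_le one_pos (den_ge hu))
  have hnum0 : ∀ u ∈ Strip, num u ≠ 0 := fun u hu => norm_pos_iff.1 (lt_of_lt_of_le one_pos (num_ge hu))
  have c1 : ∀ v : ℝ, ‖num (v * Complex.I) ^ (2 * m + 2)‖ ≤ ‖Lam (wd (2 * m) 0) ψ (v * Complex.I) * den (v * Complex.I) ^ (2 * m + 2)‖ := by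
    intro v
    rw [norm_pow, num_axis, norm_mul, mul_pow, norm_pow]
    gcongr
    exact (hom_bds h v).1
  have c2 : ∀ v : ℝ, ‖Lam (wd (2 * m) 0) ψ (v * Complex.I) * den (v * Complex.I) ^ (2 * m + 2)‖ ≤ ‖3 * num (v * Complex.I) ^ (2 * m + 2)‖ := by
    intro v
    rw [norm_mul 3, norm_pow, num_axis, norm_mul, mul_pow, norm_pow, ← mul_assoc]
    simp only [Complex.norm_ofNat]
    gcongr
    exact (hom_bds h v).2
  have p1 := PL (g := fun u => num u ^ (2 * m + 2)) (h := fun u => Lam (wd (2 * m) 0) ψ u * den u ^ (2 * m + 2))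
    (num_diff.pow _) ((Lam_diff _ _).mul (den_diff.pow _)) (fun u hu => mul_ne_zero (hz u hu) (pow_ne_zero _ (hden0 u hu))) (by
      obtain ⟨V, c, hc, hV⟩ := tail_one le_rfl hlt h
      refine ⟨V, c, hc, fun u hu hv => ?_⟩
      rw [norm_mul, norm_pow]
      have := one_le_pow₀ (n := 2 * m + 2) (den_ge hu)
      nlinarith [hV u hu hv, norm_nonneg (Lam (wd (2 * m) 0) ψ u)])
    ⟨256 ^ (2 * m + 2), (2 * m + 2 : ℕ) * 4, fun u _ => by
      rw [norm_pow, mul_assoc, Real.exp_nat_mul, ← mul_pow]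
      gcongr
      exact num_le u⟩ c1 (fun v => by simp only [num_mir, den_mir, Lam_mirror le_rfl hlt h]; exact c1 v) hst
  have p2 := PL (g := fun u => Lam (wd (2 * m) 0) ψ u * den u ^ (2 * m + 2)) (h := fun u => 3 * num u ^ (2 * m + 2))
    ((Lam_diff _ _).mul (den_diff.pow _)) ((num_diff.pow _).const_mul _) (fun u hu => mul_ne_zero (by norm_num) (pow_ne_zero _ (hnum0 u hu)))
    ⟨0, 1, one_pos, fun u hu _ => by
      rw [norm_mul, norm_pow]
      have := one_le_pow₀ (n := 2 * m + 2) (num_ge hu)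
      simp only [Complex.norm_ofNat]
      linarith⟩ (by
      obtain ⟨C, hC⟩ := Lam_growth (wd (2 * m) 0) ψ
      refine ⟨C * 32 ^ (2 * m + 2), (2 * m + 2 : ℕ) + (2 * m + 2 : ℕ) * 2, fun u _ => ?_⟩
      rw [norm_mul, norm_pow, add_mul, Real.exp_add, mul_assoc _ (2:ℝ), Real.exp_nat_mul (2 * |u.im|)]
      have a1 := hC u
      have a2 : ‖den u‖ ^ (2 * m + 2) ≤ (32 * Real.exp (2 * |u.im|)) ^ (2 * m + 2) := by
        gcongr; exact den_le u
      rw [mul_pow] at a2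
      have := mul_le_mul a1 a2 (by positivity) (le_trans (norm_nonneg _) a1)
      refine this.trans (le_of_eq ?_)
      ring)
    c2 (fun v => by simp only [num_mir, den_mir, Lam_mirror le_rfl hlt h]; exact c2 v) hst
  simp only [norm_mul, norm_pow, hnd, mul_pow, Complex.norm_ofNat] at p1 p2
  rw [← mul_assoc] at p2
  exact ⟨le_of_mul_le_mul_right p1 (by positivity), le_of_mul_le_mul_right p2 (by positivity)⟩

end bounds

end

section
/-- ice transfer matrix -/
def Ice (N : ℕ) : Matrix (Fin N → Bool) (Fin N → Bool) ℝ := TT (fun _ : Fin N => ell (1:ℝ) 1 1)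

lemma vert_aux (s t α β : Bool) :
    (if (if α = true then 1 else 0) + (if β = false then 1 else 0) + (if s = true then 1 else 0) +
        (if t = false then 1 else 0) = 2 then
      (if α ≠ β then (1:ℝ) else if (α = true ∧ β = true ∧ s = true ∧ t = true) ∨
        (α = false ∧ β = false ∧ s = false ∧ t = false) then 1
      else if (α = true ∧ β = true ∧ s = false ∧ t = false) ∨
        (α = false ∧ β = false ∧ s = true ∧ t = true) then 1 else 0) else 0) =
      ell (1:ℝ) 1 1 s t α β := by
  cases s <;> cases t <;> cases α <;> cases β <;> simp [ell]

lemma vert_eq {N M : ℕ} (ω : Cfg N M) (v : Fin N × Fin M) :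
    (if inArrows ω v = 2 then vWeight 1 1 1 ω v else 0) =
      ell (1:ℝ) 1 1 (ω.2 (v.1, predF v.2)) (ω.2 v) (ω.1 (predF v.1, v.2)) (ω.1 v) :=
  vert_aux _ _ _ _

lemma P_pow {ι : Type} [Fintype ι] [DecidableEq ι] (A : Matrix ι ι ℝ) (M : ℕ) : P M (fun _ => A) = A ^ M := by
  induction M with
  | zero => simp [P]
  | succ M ih => rw [P_succ, ih, pow_succ']

lemma Z_eq {N M : ℕ} (hN : 0 < N) (hM : 0 < M) : Z N M 1 1 1 = ((Ice N) ^ M).trace := by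
  have h1 : ∀ ω : Cfg N M, (if IsSixVertex ω then W 1 1 1 ω else 0) =
      ∏ v : Fin N × Fin M, ell (1:ℝ) 1 1 (ω.2 (v.1, predF v.2)) (ω.2 v) (ω.1 (predF v.1, v.2)) (ω.1 v) := by
    intro ω
    simp only [← vert_eq]
    rw [Finset.prod_ite_zero]
    simp [W, IsSixVertex]
  rw [Z, Finset.sum_congr rfl fun ω _ => h1 ω, ← P_pow, trace_P M hM]
  have h2 : ∀ h : Fin M → Fin N → Bool, ∏ j, Ice N (h (predF j)) (h j) =
      ∑ G : Fin M → Fin N → Bool, ∏ j, ∏ i, ell (1:ℝ) 1 1 (h (predF j) i) (h j i) (G j (predF i)) (G j i) := by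
    intro h
    simp only [Ice, TT, Matrix.of_apply]
    simp only [trace_P N hN]
    rw [Finset.prod_univ_sum, Fintype.piFinset_univ]
  rw [Finset.sum_congr rfl fun h _ => h2 h, Finset.sum_comm, ← Fintype.sum_prod_type']
  let e : (Fin N × Fin M → Bool) ≃ (Fin M → Fin N → Bool) :=
    (Equiv.arrowCongr (Equiv.prodComm _ _) (Equiv.refl _)).trans (Equiv.curry _ _ _)
  refine Fintype.sum_equiv (e.prodCongr e) _ _ fun ω => ?_
  rw [Fintype.prod_prod_type_right]
  rfl

section PFtr
variable {ι : Type} [Fintype ι] [DecidableEq ι] {A : Matrix ι ι ℝ} {p : ι → Prop}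

lemma PFH.diag_le (h : PFH A p) {ψ : ι → ℝ} {μ : ℝ} (hψ : ∀ i, p i → 0 < ψ i) (hψs : ∀ i, ¬ p i → ψ i = 0)
    (he : A.mulVec ψ = μ • ψ) (M : ℕ) (i : ι) (hi : p i) : (A ^ M) i i ≤ μ ^ M := by
  have h1 := congrFun (pow_eig he M) i
  simp only [Matrix.mulVec, dotProduct, Pi.smul_apply, smul_eq_mul] at h1
  have h0 : ∀ j, 0 ≤ ψ j := fun j => by
    by_cases hj : p j
    · exact (hψ j hj).le
    · rw [hψs j hj]
  have h2 : (A ^ M) i i * ψ i ≤ ∑ j, (A ^ M) i j * ψ j := Finset.single_le_sum (f := fun j => (A ^ M) i j * ψ j) (fun j _ => mul_nonneg (h.pow_nonneg M i j) (h0 j)) (Finset.mem_univ i)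
  rw [h1] at h2
  exact le_of_mul_le_mul_right h2 (hψ i hi)

lemma PFH.trace_ge (h : PFH A p) {ψ : ι → ℝ} {μ : ℝ} (hμ : 0 < μ) (hψ : ∀ i, p i → 0 < ψ i) (hψs : ∀ i, ¬ p i → ψ i = 0)
    (hs : ∑ i, ψ i = 1) (he : A.mulVec ψ = μ • ψ) : ∃ c : ℝ, 0 < c ∧ ∃ K : ℕ, ∀ M, K ≤ M → c * μ ^ M ≤ (A ^ M).trace := by
  classical
  obtain ⟨K, hK⟩ := h.prim
  obtain ⟨i, hi⟩ := h.ne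
  have h0 : ∀ j, 0 ≤ ψ j := fun j => by
    by_cases hj : p j
    · exact (hψ j hj).le
    · rw [hψs j hj]
  have hle : ∀ j, ψ j ≤ 1 := fun j => by
    rw [← hs]; exact Finset.single_le_sum (fun j _ => h0 j) (Finset.mem_univ j)
  obtain ⟨κ, hκ0, hκ⟩ : ∃ κ : ℝ, 0 < κ ∧ ∀ j, p j → κ ≤ (A ^ K) j i := by
    obtain ⟨j, hj, hm⟩ := Finset.exists_min_image (Finset.univ.filter p) (fun j => (A ^ K) j i) ⟨i, by simp [hi]⟩
    refine ⟨_, hK j i (by simpa using hj) hi, fun k hk => hm k (by simpa using hk)⟩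
  refine ⟨κ * ψ i / μ ^ K, by have := hψ i hi; positivity, K, fun M hM => ?_⟩
  obtain ⟨M, rfl⟩ := Nat.exists_eq_add_of_le' hM
  have h1 := congrFun (pow_eig he M) i
  simp only [Matrix.mulVec, dotProduct, Pi.smul_apply, smul_eq_mul] at h1
  have h2 : (A ^ (M + K)) i i ≤ (A ^ (M + K)).trace := by
    rw [Matrix.trace]
    exact Finset.single_le_sum (f := fun j => (A ^ (M + K)).diag j) (fun j _ => h.pow_nonneg _ j j) (Finset.mem_univ i)
  refine le_trans ?_ h2
  rw [pow_add A, Matrix.mul_apply]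
  have h3 : κ * (μ ^ M * ψ i) ≤ ∑ j, (A ^ M) i j * (A ^ K) j i := by
    rw [← h1, Finset.mul_sum]
    refine Finset.sum_le_sum fun j _ => ?_
    have := h.pow_nonneg M i j
    by_cases hj : p j
    · have h5 := hκ j hj
      have h6 := hle j
      have h7 := h0 j
      calc κ * ((A ^ M) i j * ψ j) = (A ^ M) i j * (κ * ψ j) := by ring
        _ ≤ (A ^ M) i j * (κ * 1) := by gcongr
        _ ≤ _ := by rw [mul_one]; gcongr
    · rw [hψs j hj, mul_zero, mul_zero]
      exact mul_nonneg this (h.pow_nonneg K j i)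
  refine le_trans (le_of_eq ?_) h3
  field_simp
  ring

/-- Schur test -/
lemma PFH.schur (h : PFH A p) (hsym : ∀ i j, A i j = A j i) {ψ x : ι → ℝ} {μ : ℝ} (hψ : ∀ i, p i → 0 < ψ i) (hψs : ∀ i, ¬ p i → ψ i = 0)
    (he : A.mulVec ψ = μ • ψ) (hx : ∀ i, ¬ p i → x i = 0) : ∑ i, ∑ j, x i * A i j * x j ≤ μ * ∑ i, x i ^ 2 := by
  have h1 : ∀ i, ∑ j, A i j * ψ j = μ * ψ i := fun i => congrFun he i
  have key : ∀ i j, x i * A i j * x j ≤ (x i ^ 2 / ψ i * (A i j * ψ j) + x j ^ 2 / ψ j * (A j i * ψ i)) / 2 := by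
    intro i j
    by_cases hi : p i
    · by_cases hj : p j
      · have a1 := hψ i hi
        have a2 := hψ j hj
        have a3 := h.nonneg i j
        rw [← hsym i j]
        have : (x i ^ 2 / ψ i * (A i j * ψ j) + x j ^ 2 / ψ j * (A i j * ψ i)) / 2 - x i * A i j * x j =
            A i j * (x i * ψ j - x j * ψ i) ^ 2 / (2 * ψ i * ψ j) := by field_simp; ring
        have : 0 ≤ A i j * (x i * ψ j - x j * ψ i) ^ 2 / (2 * ψ i * ψ j) := by positivity
        linarith
      · simp [hx j hj, hψs j hj]
    · simp [hx i hi, hψs i hi]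
  calc _ ≤ ∑ i, ∑ j, (x i ^ 2 / ψ i * (A i j * ψ j) + x j ^ 2 / ψ j * (A j i * ψ i)) / 2 :=
        Finset.sum_le_sum fun i _ => Finset.sum_le_sum fun j _ => key i j
    _ = (∑ i, ∑ j, x i ^ 2 / ψ i * (A i j * ψ j) + ∑ i, ∑ j, x j ^ 2 / ψ j * (A j i * ψ i)) / 2 := by
        simp only [← Finset.sum_div, Finset.sum_add_distrib]
    _ = ∑ i, ∑ j, x i ^ 2 / ψ i * (A i j * ψ j) := by
        rw [Finset.sum_comm (f := fun i j => x j ^ 2 / ψ j * (A j i * ψ i))]; ring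
    _ = ∑ i, x i ^ 2 / ψ i * (μ * ψ i) := by
        refine Finset.sum_congr rfl fun i _ => ?_
        rw [← Finset.mul_sum, h1]
    _ = μ * ∑ i, x i ^ 2 := by
        rw [Finset.mul_sum]
        refine Finset.sum_congr rfl fun i _ => ?_
        by_cases hi : p i
        · have := hψ i hi
          field_simp
        · simp [hx i hi]

end PFtr

/-- flip matrix -/
def Xr : Matrix Bool Bool ℝ := Matrix.of fun a b => if a = b then 0 else 1

lemma Xr_sq : Xr * Xr = 1 := by
  ext a b; cases a <;> cases b <;> simp [Xr, Matrix.mul_apply]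

/-- row operator entries -/
def Q {N : ℕ} (σ τ : Fin N → Bool) : Matrix Bool Bool ℝ := P N (fun j => ell (1:ℝ) 1 1 (σ j) (τ j))

lemma X_conj (B : Matrix Bool Bool ℝ) (α β : Bool) : (Xr * B) α β = B (!α) β ∧ (B * Xr) α β = B α (!β) := by
  cases α <;> cases β <;> simp [Xr, Matrix.mul_apply]

lemma Q_swap {N : ℕ} (σ τ : Fin N → Bool) (α β : Bool) : Q τ σ α β = Q σ τ (!α) (!β) := by
  have := P_inter (G := Xr) (A := fun j => ell (1:ℝ) 1 1 (σ j) (τ j)) (B := fun j => ell (1:ℝ) 1 1 (τ j) (σ j)) (fun j => by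
    ext a b
    rw [(X_conj _ _ _).1, (X_conj _ _ _).2]
    cases a <;> cases b <;> cases σ j <;> cases τ j <;> simp [ell])
  have h2 := congrFun (congrFun this α) (!β)
  rw [(X_conj _ _ _).1, (X_conj _ _ _).2, Bool.not_not] at h2
  exact h2.symm.trans (by rw [Q])

lemma Q_flip {N : ℕ} (σ τ : Fin N → Bool) (α β : Bool) : Q (fun j => !σ j) (fun j => !τ j) α β = Q σ τ (!α) (!β) := by
  have := P_inter (G := Xr) (A := fun j => ell (1:ℝ) 1 1 (σ j) (τ j)) (B := fun j => ell (1:ℝ) 1 1 (!σ j) (!τ j)) (fun j => by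
    ext a b
    rw [(X_conj _ _ _).1, (X_conj _ _ _).2]
    cases a <;> cases b <;> cases σ j <;> cases τ j <;> simp [ell])
  have h2 := congrFun (congrFun this α) (!β)
  rw [(X_conj _ _ _).1, (X_conj _ _ _).2, Bool.not_not] at h2
  exact h2.symm.trans (by rw [Q])

lemma Q_nonneg {N : ℕ} (σ τ : Fin N → Bool) (α β : Bool) : 0 ≤ Q σ τ α β :=
  P_nonneg _ (fun j α β => ell_nonneg (by norm_num) (by norm_num) (by norm_num) _ _ _ _) α β

lemma Ice_Q {N : ℕ} (σ τ : Fin N → Bool) : Ice N σ τ = Q σ τ true true + Q σ τ false false := by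
  simp only [Ice, TT, Matrix.of_apply, Matrix.trace, Matrix.diag_apply, Q, Fintype.sum_bool]

lemma Ice_symm {N : ℕ} (σ τ : Fin N → Bool) : Ice N σ τ = Ice N τ σ := by
  rw [Ice_Q, Ice_Q, Q_swap σ τ, Q_swap σ τ]; simp [add_comm]

lemma P_snoc {ι : Type} [Fintype ι] [DecidableEq ι] (n : ℕ) (A : Fin (n+1) → Matrix ι ι ℝ) :
      P (n+1) A = P n (fun i => A i.castSucc) * A (Fin.last n) := by
  induction n with
  | zero => simp [P]
  | succ n ih =>
    rw [P_succ, ih, P_succ n, mul_assoc]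
    rfl

lemma P_append {ι : Type} [Fintype ι] [DecidableEq ι] (n k : ℕ) (A : Fin (n + k) → Matrix ι ι ℝ) :
    P (n + k) A = P n (fun j => A (Fin.castAdd k j)) * P k (fun j => A (Fin.natAdd n j)) := by
  induction k with
  | zero => simp [P]
  | succ k ih =>
    rw [P_snoc k, ← mul_assoc]
    refine (P_snoc (n+k) A).trans ?_
    rw [ih]
    rfl

end

section
/-- Perron-Frobenius pair of the ice transfer matrix in a sector -/
structure PFp (N k : ℕ) (ψ : (Fin N → Bool) → ℝ) (μ : ℝ) : Prop where
  pos : ∀ σ, cnt σ = k → 0 < ψ σ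
  supp : ∀ σ, ¬ cnt σ = k → ψ σ = 0
  sum : ∑ σ, ψ σ = 1
  eig : (Ice N).mulVec ψ = μ • ψ

lemma Ice_PFH {N k : ℕ} (hk : k ≤ N) : PFH (Ice N) (fun σ => cnt σ = k) :=
  TT_PFH (fun _ => one_pos) (fun _ => one_pos) one_pos k hk

lemma exists_PFp {N k : ℕ} (hk : k ≤ N) : ∃ ψ μ, PFp N k ψ μ := by
  obtain ⟨ψ, μ, h1, h2, h3, h4⟩ := (Ice_PFH hk).exists
  exact ⟨ψ, μ, h1, h2, h3, h4⟩

lemma PFp.one_le {N k : ℕ} {ψ : (Fin N → Bool) → ℝ} {μ : ℝ} (h : PFp N k ψ μ) (hk : k ≤ N) : 1 ≤ μ := by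
  obtain ⟨σ, hσ⟩ := (Ice_PFH hk).ne
  have h1 := (Ice_PFH hk).diag_le h.pos h.supp h.eig 1 σ hσ
  have h2 := TT_diag_ge (a := fun _ : Fin N => (1:ℝ)) (b := fun _ => 1) (c := 1) (fun _ => zero_le_one) (fun _ => zero_le_one) zero_le_one σ true
  simp only [ite_self, Finset.prod_const_one] at h2
  rw [pow_one, pow_one] at h1
  exact h2.trans h1

lemma Ar_zero (n : ℕ) : Ar (0 : Fin n → ℝ) = (√3 / 2) ^ n • Ice n := by
  have := TT_smul (fun _ : Fin n => √3 / 2) (fun _ : Fin n => ell (1:ℝ) 1 1)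
  rw [Finset.prod_const, Finset.card_univ, Fintype.card_fin] at this
  rw [Ice, ← this, Ar]
  congr 1
  funext j s t
  simp only [Pi.zero_apply, add_zero, sub_zero, Real.sin_pi_div_three]
  ext α β
  simp [ell]

/-- the critical growth constant -/
def Wc : ℝ := (4 / 3) / (√3 / 2)

lemma Wc_pos : 0 < Wc := by unfold Wc; positivity

lemma log_Wc : Real.log Wc = 3 / 2 * Real.log (4 / 3) := by
  have h3 : √3 / 2 = (4 / 3 : ℝ) ^ (-(1/2) : ℝ) := by
    rw [Real.rpow_neg (by norm_num), ← Real.sqrt_eq_rpow, Real.sqrt_div (by norm_num), show (4:ℝ) = 2 ^ 2 by norm_num, Real.sqrt_sq (by norm_num)]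
    field_simp
  rw [Wc, Real.log_div (by norm_num) (by positivity), h3, Real.log_rpow (by norm_num)]
  ring

lemma PFp.balanced {m : ℕ} {ψ : (Fin (2 * m + 2) → Bool) → ℝ} {μ : ℝ} (h : PFp (2 * m + 2) (m + 1) ψ μ) :
    Wc ^ (2 * m + 2) ≤ μ ∧ μ ≤ 3 * Wc ^ (2 * m + 2) := by
  have hp := Real.pi_pos
  have hw := abs_wd (n := 2 * m) le_rfl (by positivity : (0:ℝ) < π / 3)
  have hk : m + 1 ≤ 2 * m + 2 := by omega
  obtain ⟨φ, hφ⟩ := exists_Eig hw hk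
  have hs := sector_val hφ
  obtain ⟨r1, r2⟩ := hφ.real_eig
  rw [r2, Complex.norm_real, wd_zero, Ar_zero] at hs
  rw [wd_zero, Ar_zero] at r1
  set ν := ∑ σ, ((√3 / 2) ^ (2 * m + 2) • Ice (2 * m + 2)).mulVec φ σ with hν
  have h0 : (0:ℝ) < (√3 / 2) ^ (2 * m + 2) := by positivity
  have r3 : (Ice (2 * m + 2)).mulVec φ = (ν / (√3 / 2) ^ (2 * m + 2)) • φ := by
    rw [Matrix.smul_mulVec] at r1
    rw [div_eq_inv_mul, mul_smul, ← r1, smul_smul, inv_mul_cancel₀ h0.ne', one_smul]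
  have hφ0 : φ ≠ 0 := by
    intro e; have := hφ.sum; rw [e] at this; simp at this
  have hφp := (Ice_PFH hk).pos_of_nonneg hφ.nonneg hφ.supp hφ0 r3
  have e1 := (Ice_PFH hk).le_eig h.pos h.supp h.eig hφp hφ.supp r3
  have e2 := (Ice_PFH hk).le_eig hφp hφ.supp r3 h.pos h.supp h.eig
  have e3 : ν / (√3 / 2) ^ (2 * m + 2) = μ := le_antisymm e2 e1
  have hμ := h.one_le hk
  have hν0 : 0 ≤ ν := by
    have : ν = μ * (√3 / 2) ^ (2 * m + 2) := by rw [← e3]; field_simp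
    rw [this]; positivity
  rw [Real.norm_of_nonneg hν0] at hs
  rw [← e3, Wc, div_pow]
  constructor
  · gcongr; exact hs.1
  · rw [← mul_div_assoc]; gcongr; exact hs.2

lemma sum_append {N : ℕ} (f : (Fin (N + N) → Bool) → ℝ) :
    ∑ ρ, f ρ = ∑ σ : Fin N → Bool, ∑ τ : Fin N → Bool, f (Fin.append σ τ) := by
  rw [← (Fin.appendEquiv N N).sum_comp, Fintype.sum_prod_type]
  rfl

lemma sum_not {N : ℕ} (f : (Fin N → Bool) → ℝ) : ∑ ρ : Fin N → Bool, f (fun j => !ρ j) = ∑ ρ, f ρ := by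
  refine Fintype.sum_equiv (Equiv.arrowCongr (Equiv.refl _) Equiv.boolNot) _ _ fun ρ => ?_
  rfl

lemma cnt_append {N : ℕ} (σ τ : Fin N → Bool) : cnt (Fin.append σ τ) = cnt σ + cnt τ := by
  simp only [cnt, Finset.card_filter]
  rw [Fin.sum_univ_add]
  simp only [Fin.append_left, Fin.append_right]

lemma Ice_append {N : ℕ} (σ ρ τ π' : Fin N → Bool) :
    Q σ τ true true * Q ρ π' true true + Q σ τ false false * Q ρ π' false false ≤ Ice (N + N) (Fin.append σ ρ) (Fin.append τ π') := by
  have : Ice (N + N) (Fin.append σ ρ) (Fin.append τ π') = (Q σ τ * Q ρ π').trace := by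
    simp only [Ice, TT, Matrix.of_apply, P_append, Fin.append_left, Fin.append_right, Q]
  rw [this]
  simp only [Matrix.trace, Matrix.diag_apply, Matrix.mul_apply, Fintype.sum_bool]
  nlinarith [mul_nonneg (Q_nonneg σ τ true false) (Q_nonneg ρ π' false true), mul_nonneg (Q_nonneg σ τ false true) (Q_nonneg ρ π' true false)]

lemma glue {N k : ℕ} (hk : k ≤ N) {ψ : (Fin N → Bool) → ℝ} {Λ : ℝ} (h : PFp N k ψ Λ) {φ : (Fin (N + N) → Bool) → ℝ} {μ : ℝ} (hφ : PFp (N + N) N φ μ) :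
    Λ ^ 2 ≤ 2 * μ := by
  have hnn : ∀ σ, 0 ≤ ψ σ := fun σ => by
    by_cases e : cnt σ = k
    · exact (h.pos σ e).le
    · rw [h.supp σ e]
  set q : Bool → ℝ := fun α => ∑ σ, ∑ τ, ψ σ * Q σ τ α α * ψ τ with hq
  set S : ℝ := ∑ σ, ψ σ ^ 2 with hS
  have hS0 : 0 < S := by
    obtain ⟨σ, hσ⟩ := (Ice_PFH hk).ne
    exact Finset.sum_pos' (fun σ _ => sq_nonneg _) ⟨σ, Finset.mem_univ _, pow_pos (h.pos σ hσ) 2⟩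
  have hq1 : q true = q false := by
    simp only [hq]
    rw [Finset.sum_comm]
    refine Finset.sum_congr rfl fun σ _ => Finset.sum_congr rfl fun τ _ => ?_
    rw [Q_swap σ τ, Bool.not_true]; ring
  have hq2 : q true + q false = Λ * S := by
    simp only [hq, hS, Finset.mul_sum, ← Finset.sum_add_distrib]
    refine Finset.sum_congr rfl fun σ _ => ?_
    have := congrFun h.eig σ
    simp only [Matrix.mulVec, dotProduct, Pi.smul_apply, smul_eq_mul] at this
    rw [pow_two, ← mul_assoc, ← this, Finset.sum_mul]
    refine Finset.sum_congr rfl fun τ _ => ?_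
    rw [Ice_Q]; ring
  set x : (Fin (N + N) → Bool) → ℝ := fun ρ => ψ (fun j => ρ (Fin.castAdd N j)) * ψ (fun j => ! ρ (Fin.natAdd N j)) with hx
  have hxa : ∀ σ τ, x (Fin.append σ τ) = ψ σ * ψ (fun j => !τ j) := by
    intro σ τ; simp only [hx, Fin.append_left, Fin.append_right]
  have hxs : ∀ ρ, ¬ cnt ρ = N → x ρ = 0 := by
    intro ρ
    obtain ⟨⟨σ, τ⟩, rfl⟩ := (Fin.appendEquiv N N).surjective ρ
    intro hc
    change x (Fin.append σ τ) = 0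
    change ¬ cnt (Fin.append σ τ) = N at hc
    rw [hxa]
    rw [cnt_append] at hc
    have h1 := cnt_not τ
    by_cases e : cnt σ = k
    · rw [h.supp (fun j => !τ j) (by omega), mul_zero]
    · rw [h.supp σ e, zero_mul]
  have hsch := (Ice_PFH (N := N + N) (k := N) (by omega)).schur Ice_symm hφ.pos hφ.supp hφ.eig hxs
  have hx2 : ∑ ρ, x ρ ^ 2 = S * S := by
    rw [sum_append]
    simp only [hxa, mul_pow]
    rw [hS, Finset.sum_mul]
    refine Finset.sum_congr rfl fun σ _ => ?_
    rw [← Finset.mul_sum, sum_not (fun τ => ψ τ ^ 2)]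
  have hlow : 2 * (q true * q false) ≤ ∑ i, ∑ j, x i * Ice (N + N) i j * x j := by
    rw [sum_append]
    simp only [sum_append (N := N) (fun j => x _ * Ice (N + N) _ j * x j)]
    calc 2 * (q true * q false) = ∑ σ, ∑ ρ, ∑ τ, ∑ π', ψ σ * ψ (fun j => !ρ j) * (Q σ τ true true * Q ρ π' true true + Q σ τ false false * Q ρ π' false false) * (ψ τ * ψ (fun j => !π' j)) := by
          have e1 : ∀ α, q α = ∑ ρ, ∑ π', ψ (fun j => !ρ j) * Q ρ π' (!α) (!α) * ψ (fun j => !π' j) := by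
            intro α
            simp only [hq]
            rw [← sum_not]
            refine Finset.sum_congr rfl fun ρ _ => ?_
            rw [← sum_not]
            refine Finset.sum_congr rfl fun π' _ => ?_
            rw [Q_flip]
          have e2 : 2 * (q true * q false) = (∑ σ, ∑ τ, ψ σ * Q σ τ true true * ψ τ) * (∑ ρ, ∑ π', ψ (fun j => !ρ j) * Q ρ π' true true * ψ (fun j => !π' j))
              + (∑ σ, ∑ τ, ψ σ * Q σ τ false false * ψ τ) * (∑ ρ, ∑ π', ψ (fun j => !ρ j) * Q ρ π' false false * ψ (fun j => !π' j)) := by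
            have a1 := e1 true
            have a2 := e1 false
            simp only [Bool.not_true, Bool.not_false] at a1 a2
            rw [← a1, ← a2]; ring
          rw [e2, Finset.sum_mul_sum, Finset.sum_mul_sum, ← Finset.sum_add_distrib]
          refine Finset.sum_congr rfl fun σ _ => ?_
          rw [← Finset.sum_add_distrib]
          refine Finset.sum_congr rfl fun ρ _ => ?_
          rw [Finset.sum_mul_sum, Finset.sum_mul_sum, ← Finset.sum_add_distrib]
          refine Finset.sum_congr rfl fun τ _ => ?_
          rw [← Finset.sum_add_distrib]
          refine Finset.sum_congr rfl fun π' _ => ?_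
          ring
      _ ≤ _ := by
          refine Finset.sum_le_sum fun σ _ => Finset.sum_le_sum fun ρ _ => Finset.sum_le_sum fun τ _ => Finset.sum_le_sum fun π' _ => ?_
          rw [hxa, hxa]
          have := Ice_append σ ρ τ π'
          have a1 := hnn σ
          have a2 := hnn τ
          have a3 := hnn (fun j => !ρ j)
          have a4 := hnn (fun j => !π' j)
          gcongr
  rw [hx2] at hsch
  have : q true = Λ * S / 2 := by linarith
  rw [← hq1, this] at hlow
  have h5 : (Λ ^ 2 / 2) * (S * S) ≤ μ * (S * S) := by nlinarith
  have := le_of_mul_le_mul_right h5 (by positivity)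
  linarith

lemma PFp.upper {N k : ℕ} (hN : 0 < N) (hk : k ≤ N) {ψ : (Fin N → Bool) → ℝ} {Λ : ℝ} (h : PFp N k ψ Λ) :
    Λ ^ 2 ≤ 6 * Wc ^ (2 * N) := by
  obtain ⟨φ, μ, hφ⟩ := exists_PFp (N := N + N) (k := N) (by omega)
  have h1 := glue hk h hφ
  have h2 : ∀ n, n = N + N → ∀ {φ : (Fin n → Bool) → ℝ}, PFp n N φ μ → μ ≤ 3 * Wc ^ n := by
    intro n hn φ hφ
    obtain ⟨m, rfl⟩ : ∃ m, N = m + 1 := ⟨N - 1, by omega⟩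
    obtain rfl : n = 2 * m + 2 := by omega
    exact hφ.balanced.2
  have h3 := h2 _ rfl hφ
  rw [two_mul]
  linarith

lemma PFp.lower {N : ℕ} (hN : Even N) (hN2 : 2 ≤ N) {ψ : (Fin N → Bool) → ℝ} {Λ : ℝ} (h : PFp N (N / 2) ψ Λ) :
    Wc ^ N ≤ Λ := by
  obtain ⟨k, rfl⟩ := hN
  obtain ⟨m, rfl⟩ : ∃ m, k = m + 1 := ⟨k - 1, by omega⟩
  have e : m + 1 + (m + 1) = 2 * m + 2 := by ring
  rw [show (m + 1 + (m + 1)) / 2 = m + 1 by omega] at h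
  revert h
  revert ψ
  rw [e]
  intro ψ h
  exact h.balanced.1

end

lemma inner_limit (N : ℕ) (hN : Even N) (hN2 : 2 ≤ N) : ∃ Λ : ℝ, Wc ^ N ≤ Λ ∧ Λ ^ 2 ≤ 6 * Wc ^ (2 * N) ∧
    Tendsto (fun M : ℕ => Real.log (Z N M 1 1 1) / (M * N)) atTop (nhds (Real.log Λ / N)) := by
  have hex : ∀ k : Fin (N + 1), ∃ ψ μ, PFp N k ψ μ := fun k => exists_PFp (by omega)
  choose ψ μ hp using hex
  obtain ⟨k0, -, hmax⟩ := Finset.exists_max_image (Finset.univ : Finset (Fin (N+1))) μ ⟨0, Finset.mem_univ _⟩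
  have hk : ∀ k : Fin (N + 1), (k : ℕ) ≤ N := fun k => by omega
  have h1 : 1 ≤ μ k0 := (hp k0).one_le (hk k0)
  have hΛ : 0 < μ k0 := by linarith
  have hN0 : (0:ℝ) < N := by exact_mod_cast (by omega : 0 < N)
  refine ⟨μ k0, ?_, (hp k0).upper (by omega) (hk k0), ?_⟩
  · exact ((hp ⟨N / 2, by omega⟩).lower hN hN2).trans (hmax _ (Finset.mem_univ _))
  obtain ⟨c, hc, K, hK⟩ := (Ice_PFH (hk k0)).trace_ge hΛ (hp k0).pos (hp k0).supp (hp k0).sum (hp k0).eig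
  have hup : ∀ M, ((Ice N) ^ M).trace ≤ 2 ^ N * μ k0 ^ M := by
    intro M
    rw [Matrix.trace]
    have : ∀ σ : Fin N → Bool, ((Ice N) ^ M).diag σ ≤ μ k0 ^ M := by
      intro σ
      have hcn : cnt σ < N + 1 := by have := cnt_not σ; omega
      refine ((Ice_PFH (hk ⟨cnt σ, hcn⟩)).diag_le (hp ⟨cnt σ, hcn⟩).pos (hp ⟨cnt σ, hcn⟩).supp (hp ⟨cnt σ, hcn⟩).eig M σ rfl).trans ?_
      have := (hp ⟨cnt σ, hcn⟩).one_le (hk _)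
      exact pow_le_pow_left₀ (by linarith) (hmax _ (Finset.mem_univ _)) M
    refine (Finset.sum_le_sum fun σ _ => this σ).trans ?_
    simp
  have hlim : ∀ C : ℝ, Tendsto (fun M : ℕ => C / (M * N) + Real.log (μ k0) / N) atTop (nhds (Real.log (μ k0) / N)) := by
    intro C
    have : Tendsto (fun M : ℕ => C / (M * N)) atTop (nhds 0) :=
      Tendsto.div_atTop tendsto_const_nhds ((tendsto_natCast_atTop_atTop).atTop_mul_const hN0)
    simpa using this.add_const (Real.log (μ k0) / N)
  refine tendsto_of_tendsto_of_tendsto_of_le_of_le' (hlim (Real.log c)) (hlim (Real.log (2 ^ N))) ?_ ?_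
  · filter_upwards [eventually_ge_atTop (K + 1)] with M hM
    have hM0 : (0:ℝ) < M := by exact_mod_cast (by omega : 0 < M)
    rw [Z_eq (by omega) (by omega)]
    have := Real.log_le_log (by positivity) (hK M (by omega))
    rw [Real.log_mul hc.ne' (by positivity), Real.log_pow] at this
    calc _ = (Real.log c + M * Real.log (μ k0)) / (M * N) := by field_simp
      _ ≤ _ := by gcongr
  · filter_upwards [eventually_ge_atTop (K + 1)] with M hM
    have hM0 : (0:ℝ) < M := by exact_mod_cast (by omega : 0 < M)
    rw [Z_eq (by omega) (by omega)]
    have h0 : 0 < ((Ice N) ^ M).trace := lt_of_lt_of_le (by positivity) (hK M (by omega))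
    have := Real.log_le_log h0 (hup M)
    rw [Real.log_mul (by positivity) (by positivity), Real.log_pow (n := M)] at this
    calc _ ≤ (Real.log (2 ^ N) + M * Real.log (μ k0)) / (M * N) := by gcongr
      _ = _ := by field_simp

/-- **Free energy of the six-vertex model at a = b = c = 1** (square ice):
the free energy exists and equals `(3/2) log(4/3)`. -/
theorem free_energy_square_ice :
    FreeEnergyIs 1 1 1 ((3/2) * Real.log (4/3)) := by
  have hex : ∀ N : ℕ, ∃ Λ : ℝ, Even N → 2 ≤ N → Wc ^ N ≤ Λ ∧ Λ ^ 2 ≤ 6 * Wc ^ (2 * N) ∧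
    Tendsto (fun M : ℕ => Real.log (Z N M 1 1 1) / (M * N)) atTop (nhds (Real.log Λ / N)) := by
    intro N
    by_cases h : Even N ∧ 2 ≤ N
    · obtain ⟨Λ, hΛ⟩ := inner_limit N h.1 h.2
      exact ⟨Λ, fun _ _ => hΛ⟩
    · exact ⟨0, fun a b => absurd ⟨a, b⟩ h⟩
  choose L hL using hex
  refine ⟨fun N => Real.log (L N) / N, fun N h1 h2 => (hL N h1 h2).2.2, ?_⟩
  rw [← log_Wc]
  have hW := Wc_pos
  have hlim : Tendsto (fun N : ℕ => (Real.log 6 / 2) / (N:ℝ) + Real.log Wc) (atTop ⊓ Filter.principal {N | Even N}) (nhds (Real.log Wc)) := by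
    have := (tendsto_const_div_atTop_nhds_zero_nat (Real.log 6 / 2)).add_const (Real.log Wc)
    rw [zero_add] at this
    exact this.mono_left inf_le_left
  have hev : ∀ᶠ N : ℕ in atTop ⊓ Filter.principal {N | Even N}, Even N ∧ 2 ≤ N := by
    refine Filter.Eventually.and ?_ ?_
    · exact Filter.mem_inf_of_right (Filter.mem_principal_self _)
    · exact (eventually_ge_atTop 2).filter_mono inf_le_left
  refine tendsto_of_tendsto_of_tendsto_of_le_of_le' tendsto_const_nhds hlim ?_ ?_
  · filter_upwards [hev] with N hN
    have hN0 : (0:ℝ) < N := by exact_mod_cast (by omega : 0 < N)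
    have := Real.log_le_log (by positivity) (hL N hN.1 hN.2).1
    rw [Real.log_pow] at this
    rw [le_div_iff₀ hN0]; linarith
  · filter_upwards [hev] with N hN
    have hN0 : (0:ℝ) < N := by exact_mod_cast (by omega : 0 < N)
    have hp : 0 < L N := lt_of_lt_of_le (by positivity) (hL N hN.1 hN.2).1
    have := Real.log_le_log (by positivity) (hL N hN.1 hN.2).2.1
    rw [Real.log_mul (by norm_num) (by positivity), Real.log_pow, Real.log_pow] at this
    push_cast at this
    rw [div_le_iff₀ hN0, add_mul, div_mul_cancel₀ _ hN0.ne']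
    linarith

end SixVertexFE
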